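/- arXiv:2509.00302 — 2 statements merged into one kernel-verified Lean document; each statement's English description precedes it below -/
import Mathlib

section
/- Let s be a positive integer, q = 2^{2s}, and let h ≥ 3 be a positive divisor of q + 2^{s+1} + 1. Then for all integers t, m with 1 ≤ t < m ≤ (q + 2^{s+1} + 1 − h)/(2h) − 1, there exists an optimal (2h−2, 3)-LRC over F_q with parameters [2hm, (2h−2)t + 1, 2h(m−t)]_q, and there exists an optimal (2, 2h−1)-LRC over F_q with parameters [2hm, 2t + 1, 2h(m−t)]_q. -/
/-- The Hamming weight of a vector: the number of nonzero coordinates. -/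
def hammingWt {F : Type*} [Zero F] [DecidableEq F] {n : ℕ} (v : Fin n → F) : ℕ :=
  (Finset.univ.filter (fun i => v i ≠ 0)).card

/-- The minimum distance of the linear code `C` is at least `d`. -/
def MinDistGe {F : Type*} [Field F] [DecidableEq F] {n : ℕ}
    (C : Submodule F (Fin n → F)) (d : ℕ) : Prop :=
  ∀ c ∈ C, c ≠ 0 → d ≤ hammingWt c

/-- The minimum distance of the linear code `C` is exactly `d`. -/
def MinDistEq {F : Type*} [Field F] [DecidableEq F] {n : ℕ}
    (C : Submodule F (Fin n → F)) (d : ℕ) : Prop :=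
  MinDistGe C d ∧ ∃ c ∈ C, c ≠ 0 ∧ hammingWt c = d

/-- `C` is an `(r, δ)`-locally repairable code: every coordinate `i` has a repair
group `R` containing `i`, of size at most `r + δ - 1`, such that the punctured code
`C|_R` has minimum distance at least `δ` (i.e. every codeword whose restriction to
`R` is nonzero has at least `δ` nonzero coordinates inside `R`). -/
def IsLRC {F : Type*} [Field F] [DecidableEq F] {n : ℕ}
    (C : Submodule F (Fin n → F)) (r δ : ℕ) : Prop :=
  ∀ i : Fin n, ∃ R : Finset (Fin n), i ∈ R ∧ R.card ≤ r + δ - 1 ∧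
    ∀ c ∈ C, (∃ j ∈ R, c j ≠ 0) → δ ≤ (R.filter (fun j => c j ≠ 0)).card

/-- The parameters `[n, k, d]` attain the Singleton-type bound for `(r, δ)`-LRCs:
`d = n - k + 1 - (⌈k/r⌉ - 1)(δ - 1)`  (here `⌈k/r⌉ = (k + r - 1)/r`). -/
def SingletonOptimal (n k d r δ : ℕ) : Prop :=
  (d : ℤ) = (n : ℤ) - (k : ℤ) + 1 - ((((k + r - 1) / r : ℕ) : ℤ) - 1) * ((δ : ℤ) - 1)

/-- There exists an optimal `(r, δ)`-LRC over `F` with parameters `[n, k, d]`. -/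
def ExistsOptimalLRC (F : Type*) [Field F] [DecidableEq F] (n k d r δ : ℕ) : Prop :=
  ∃ C : Submodule F (Fin n → F),
    Module.finrank F C = k ∧ MinDistEq C d ∧ IsLRC C r δ ∧ SingletonOptimal n k d r δ


namespace LRCEll
open WeierstrassCurve WeierstrassCurve.Affine Polynomial

section Abel
universe u
variable {F : Type u} [Field F] {W : Affine F}

/-- evaluation at an affine point -/
noncomputable def evxy {x y : F} (h : W.Equation x y) : W.CoordinateRing →ₐ[F] F :=
  (CoordinateRing.quotientXYIdealEquiv (W' := W) (x := x) (y := C y) h).toAlgHom.comp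
    (Ideal.Quotient.mkₐ F _)

lemma evxy_eq_zero {x y : F} (h : W.Equation x y) (f : W.CoordinateRing) :
    evxy h f = 0 ↔ f ∈ CoordinateRing.XYIdeal W x (C y) := by
  simp [evxy, Ideal.Quotient.eq_zero_iff_mem]

lemma evxy_X {x y : F} (h : W.Equation x y) :
    evxy h (CoordinateRing.mk W (C X)) = x := by
  have h1 : evxy h (CoordinateRing.XClass W x) = 0 := by
    rw [evxy_eq_zero]
    exact Ideal.subset_span (by simp)
  have h2 : CoordinateRing.mk W (C (C x)) = algebraMap F W.CoordinateRing x := rfl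
  rw [CoordinateRing.XClass, C_sub, map_sub, map_sub, h2, AlgHom.commutes] at h1
  exact sub_eq_zero.mp h1

lemma evxy_Y {x y : F} (h : W.Equation x y) :
    evxy h (CoordinateRing.mk W X) = y := by
  have h1 : evxy h (CoordinateRing.YClass W (C y)) = 0 := by
    rw [evxy_eq_zero]
    exact Ideal.subset_span (by simp)
  have h2 : CoordinateRing.mk W (C (C y)) = algebraMap F W.CoordinateRing y := rfl
  rw [CoordinateRing.YClass, map_sub, map_sub, h2, AlgHom.commutes] at h1
  exact sub_eq_zero.mp h1

lemma evxy_smul {x y : F} (h : W.Equation x y) (p : F[X]) (f : W.CoordinateRing) :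
    evxy h (p • f) = p.eval x * evxy h f := by
  rw [CoordinateRing.smul, map_mul]
  congr 1
  have : CoordinateRing.mk W (C p) = aeval (CoordinateRing.mk W (C X)) p := by
    have h3 : (aeval (CoordinateRing.mk W (C X)) : F[X] →ₐ[F] W.CoordinateRing) =
      (Algebra.ofId F[X] W.CoordinateRing).restrictScalars F := by
      ext; simp
    rw [h3]; rfl
  rw [this, ← aeval_algHom_apply, evxy_X, coe_aeval_eq_eval]

/-- affine points -/
abbrev Aff (W : Affine F) := {P : W.Point // P ≠ 0}

/-- the x coordinate -/
def xc : W.Point → F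
  | .zero => 0
  | .some x _ _ => x

/-- the y coordinate -/
def yc : W.Point → F
  | .zero => 0
  | .some _ y _ => y

lemma Aff.eqn (P : Aff W) : W.Nonsingular (xc P.1) (yc P.1) := by
  obtain ⟨_ | ⟨x, y, h⟩, hP⟩ := P
  · exact absurd rfl hP
  · exact h

lemma Aff.eq_some (P : Aff W) : P.1 = .some _ _ P.eqn := by
  obtain ⟨_ | ⟨x, y, h⟩, hP⟩ := P
  · exact absurd rfl hP
  · rfl

lemma Aff.ext' {P Q : Aff W} (hx : xc P.1 = xc Q.1) (hy : yc P.1 = yc Q.1) : P = Q := by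
  apply Subtype.ext
  rw [P.eq_some, Q.eq_some]
  simp [hx, hy]

/-- evaluation at a point -/
noncomputable def ev (P : Aff W) : W.CoordinateRing →ₐ[F] F := evxy P.eqn.1

lemma ev_basis (P : Aff W) (p q : F[X]) :
    ev P (p • 1 + q • CoordinateRing.mk W X) = p.eval (xc P.1) + q.eval (xc P.1) * yc P.1 := by
  rw [ev, map_add, evxy_smul, evxy_smul, map_one, evxy_Y, mul_one]

lemma ev_injective {P Q : Aff W} (h : RingHom.ker (ev P) = RingHom.ker (ev Q)) : P = Q := by
  have hx : (X - C (xc P.1) : F[X]) • (1 : W.CoordinateRing) + (0 : F[X]) • CoordinateRing.mk W X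
      ∈ RingHom.ker (ev P) := by
    rw [RingHom.mem_ker, ev_basis]; simp
  have hy : (- C (yc P.1) : F[X]) • (1 : W.CoordinateRing) + (1 : F[X]) • CoordinateRing.mk W X
      ∈ RingHom.ker (ev P) := by
    rw [RingHom.mem_ker, ev_basis]; simp
  rw [h, RingHom.mem_ker, ev_basis] at hx hy
  apply Aff.ext'
  · simp [sub_eq_zero] at hx; exact hx.symm
  · simp at hy
    linear_combination -hy

instance ker_maximal (P : Aff W) : (RingHom.ker (ev P)).IsMaximal :=
  RingHom.ker_isMaximal_of_surjective _ fun c => ⟨algebraMap F _ c, by simp⟩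

lemma finite_quot {f : W.CoordinateRing} (hf : f ≠ 0) :
    Module.Finite F (W.CoordinateRing ⧸ Ideal.span ({f} : Set W.CoordinateRing)) := by
  have h := (Ideal.span_singleton_eq_bot (x := f)).not.2 hf
  classical
  exact Module.Finite.equiv (Ideal.quotientEquivDirectSum F (CoordinateRing.basis W) h).symm

lemma finite_quot' {f : W.CoordinateRing} (hf : f ≠ 0) :
    Module.Finite F (W.CoordinateRing ⧸
      (Ideal.span ({f} : Set W.CoordinateRing)).restrictScalars F) := by
  have := finite_quot hf
  exact Module.Finite.equiv (Submodule.Quotient.restrictScalarsEquiv F (Ideal.span {f})).symm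

lemma finrank_quot {f : W.CoordinateRing} (hf : f ≠ 0) :
    Module.finrank F (W.CoordinateRing ⧸
      (Ideal.span ({f} : Set W.CoordinateRing)).restrictScalars F) =
      (Algebra.norm F[X] f).natDegree := by
  rw [← finrank_quotient_span_eq_natDegree_norm (CoordinateRing.basis W) hf]
  exact (Submodule.Quotient.restrictScalarsEquiv F (Ideal.span {f})).finrank_eq

/-- evaluation at several points, on the quotient -/
noncomputable def evS (S : Finset (Aff W)) : W.CoordinateRing →ₗ[F] (S → F) :=
  LinearMap.pi fun P => (ev P.1).toLinearMap

lemma coprime_ker {P Q : Aff W} (h : P ≠ Q) :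
    IsCoprime (RingHom.ker (ev P)) (RingHom.ker (ev Q)) := by
  rw [Ideal.isCoprime_iff_sup_eq]
  exact Ideal.IsMaximal.coprime_of_ne inferInstance inferInstance fun h2 => h (ev_injective h2)

lemma evS_surj (S : Finset (Aff W)) : Function.Surjective (evS S) := by
  intro g
  have := Ideal.pi_quotient_surjective (I := fun P : S => RingHom.ker (ev P.1))
    (fun P Q hPQ => coprime_ker fun h => hPQ (Subtype.ext h))
    (fun P => Ideal.Quotient.mk _ (algebraMap F _ (g P)))
  obtain ⟨r, hr⟩ := this
  refine ⟨r, funext fun P => ?_⟩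
  have h1 := hr P
  rw [Ideal.Quotient.eq, RingHom.mem_ker, map_sub, AlgHom.commutes] at h1
  exact sub_eq_zero.mp h1

lemma ker_eq_XY (P : Aff W) :
    RingHom.ker (ev P) = CoordinateRing.XYIdeal W (xc P.1) (C (yc P.1)) := by
  ext f; rw [RingHom.mem_ker]; exact evxy_eq_zero P.eqn.1 f

theorem card_zeros_le {f : W.CoordinateRing} (hf : f ≠ 0) (S : Finset (Aff W))
    (hS : ∀ P ∈ S, ev P f = 0) : S.card ≤ (Algebra.norm F[X] f).natDegree := by
  rw [← finrank_quot hf]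
  have := finite_quot' hf
  have hle : (Ideal.span ({f} : Set W.CoordinateRing)).restrictScalars F ≤ LinearMap.ker (evS S) := by
    intro g hg
    obtain ⟨a, rfl⟩ := Ideal.mem_span_singleton'.1 ((Submodule.restrictScalars_mem _ _ _).1 hg)
    rw [LinearMap.mem_ker]
    funext P
    change ev P.1 (a * f) = 0
    rw [map_mul, hS _ P.2, mul_zero]
  have h2 := LinearMap.finrank_le_finrank_of_surjective (R := F)
    (f := ((Ideal.span ({f} : Set W.CoordinateRing)).restrictScalars F).liftQ (evS S) hle)
    (fun g => by
      obtain ⟨r, hr⟩ := evS_surj S g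
      exact ⟨Submodule.Quotient.mk r, hr⟩)
  simpa using h2

theorem abel [DecidableEq F] {f : W.CoordinateRing} (hf : f ≠ 0) (S : Finset (Aff W))
    (hS : ∀ P ∈ S, ev P f = 0) (hc : (Algebra.norm F[X] f).natDegree ≤ S.card) :
    ∑ P ∈ S, P.1 = 0 := by
  have hfin := finite_quot' hf
  have hle : (Ideal.span ({f} : Set W.CoordinateRing)).restrictScalars F ≤ LinearMap.ker (evS S) := by
    intro g hg
    obtain ⟨a, rfl⟩ := Ideal.mem_span_singleton'.1 ((Submodule.restrictScalars_mem _ _ _).1 hg)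
    rw [LinearMap.mem_ker]
    funext P
    change ev P.1 (a * f) = 0
    rw [map_mul, hS _ P.2, mul_zero]
  rw [← finrank_quot hf] at hc
  have hsurj : Function.Surjective
    (((Ideal.span ({f} : Set W.CoordinateRing)).restrictScalars F).liftQ (evS S) hle) := fun g => by
      obtain ⟨r, hr⟩ := evS_surj S g
      exact ⟨Submodule.Quotient.mk r, hr⟩
  have h2 := LinearMap.finrank_le_finrank_of_surjective (R := F) hsurj
  have h3 : Module.finrank F (W.CoordinateRing ⧸ (Ideal.span ({f} : Set W.CoordinateRing)).restrictScalars F)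
      = Module.finrank F (S → F) := by
    refine le_antisymm ?_ h2
    simpa using hc
  have hinj := (LinearMap.injective_iff_surjective_of_finrank_eq_finrank h3).2 hsurj
  have hker : ∏ P ∈ S, CoordinateRing.XYIdeal W (xc P.1) (C (yc P.1)) = Ideal.span {f} := by
    simp_rw [← ker_eq_XY]
    rw [Ideal.prod_eq_iInf_of_pairwise_isCoprime (fun P _ Q _ h => coprime_ker h)]
    apply le_antisymm
    · intro g hg
      simp only [Submodule.mem_iInf] at hg
      have : ((Ideal.span ({f} : Set W.CoordinateRing)).restrictScalars F).liftQ (evS S) hle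
        (Submodule.Quotient.mk g) = 0 := by
        funext P
        exact hg P.1 P.2
      have := hinj (this.trans (map_zero _).symm)
      exact (Submodule.Quotient.mk_eq_zero _).1 this
    · rw [Ideal.span_singleton_le_iff_mem]
      simp only [Submodule.mem_iInf]
      exact fun P hP => hS P hP
  rw [← Point.toClass_eq_zero, map_sum]
  have h4 : ∀ P : Aff W, Point.toClass P.1 =
      Additive.ofMul (ClassGroup.mk W.FunctionField (CoordinateRing.XYIdeal' (W := W) P.eqn)) := by
    intro P
    conv_lhs => rw [P.eq_some]
    rfl
  simp_rw [h4]
  rw [← ofMul_prod, ← map_prod]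
  have h5 := (ClassGroup.mk_eq_one_of_coe_ideal (R := W.CoordinateRing)
    (I := ∏ P ∈ S, CoordinateRing.XYIdeal' (W := W) P.eqn)
    (I' := ∏ P ∈ S, CoordinateRing.XYIdeal W (xc P.1) (C (yc P.1))) (by
      rw [Units.coe_prod]
      exact (map_prod (FractionalIdeal.coeIdealHom _ W.FunctionField) _ _).symm)).2 ⟨f, hf, hker⟩
  rw [h5]; rfl
end Abel
end LRCEll

namespace LRCEll
open WeierstrassCurve WeierstrassCurve.Affine Polynomial

section Spaces
universe u
variable {F : Type u} [Field F] {W : Affine F}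

/-- `(p,q) ↦ p + q y` -/
noncomputable def bas (W : Affine F) : (F[X] × F[X]) →ₗ[F] W.CoordinateRing :=
  (LinearMap.toSpanSingleton F[X] W.CoordinateRing 1).restrictScalars F ∘ₗ LinearMap.fst F _ _ +
  (LinearMap.toSpanSingleton F[X] W.CoordinateRing (CoordinateRing.mk W X)).restrictScalars F ∘ₗ
    LinearMap.snd F _ _

lemma bas_apply (p q : F[X]) : bas W (p, q) = p • 1 + q • CoordinateRing.mk W X := rfl

lemma bas_inj : Function.Injective (bas W) := by
  rw [injective_iff_map_eq_zero]
  rintro ⟨p, q⟩ h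
  rw [bas_apply] at h
  obtain ⟨rfl, rfl⟩ := CoordinateRing.smul_basis_eq_zero h
  rfl

/-- Riemann-Roch space of `2n` times infinity -/
noncomputable def LL (W : Affine F) (n : ℕ) : Submodule F W.CoordinateRing :=
  LinearMap.range (bas W ∘ₗ ((degreeLT F (n + 1)).subtype.prodMap (degreeLT F (n - 1)).subtype))

lemma mem_LL {n : ℕ} {f : W.CoordinateRing} : f ∈ LL W n ↔
    ∃ p q : F[X], p ∈ degreeLT F (n + 1) ∧ q ∈ degreeLT F (n - 1) ∧
      p • 1 + q • CoordinateRing.mk W X = f := by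
  constructor
  · rintro ⟨⟨⟨p, hp⟩, ⟨q, hq⟩⟩, rfl⟩
    exact ⟨p, q, hp, hq, rfl⟩
  · rintro ⟨p, q, hp, hq, rfl⟩
    exact ⟨(⟨p, hp⟩, ⟨q, hq⟩), rfl⟩

lemma finrank_degreeLT (n : ℕ) : Module.finrank F (degreeLT F n) = n := by
  rw [(degreeLTEquiv F n).finrank_eq]; simp

instance fin_degreeLT (n : ℕ) : Module.Finite F (degreeLT F n) :=
  Module.Finite.equiv (degreeLTEquiv F n).symm

/-- The equivalence describing `LL`. -/
noncomputable def LLequiv (W : Affine F) (n : ℕ) :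
    (degreeLT F (n + 1) × degreeLT F (n - 1)) ≃ₗ[F] LL W n :=
  LinearEquiv.ofInjective _ (bas_inj.comp
    (Function.Injective.prodMap (Submodule.subtype_injective _) (Submodule.subtype_injective _)))

instance fin_LL (n : ℕ) : Module.Finite F (LL W n) :=
  Module.Finite.equiv (LLequiv W n)

lemma finrank_LL {n : ℕ} (hn : 1 ≤ n) : Module.finrank F (LL W n) = 2 * n := by
  rw [← (LLequiv W n).finrank_eq, Module.finrank_prod, finrank_degreeLT, finrank_degreeLT]
  omega

lemma norm_LL {n : ℕ} {f : W.CoordinateRing} (hf : f ∈ LL W n) :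
    (Algebra.norm F[X] f).natDegree ≤ 2 * n := by
  obtain ⟨p, q, hp, hq, rfl⟩ := mem_LL.1 hf
  rw [natDegree_le_iff_degree_le, CoordinateRing.degree_norm_smul_basis]
  rw [mem_degreeLT] at hp hq
  apply max_le
  · by_cases h : p = 0
    · simp [h]
    · rw [degree_eq_natDegree h] at hp ⊢
      norm_cast at hp ⊢
      simp; omega
  · by_cases h : q = 0
    · simp [h]
    · rw [degree_eq_natDegree h] at hq ⊢
      norm_cast at hq ⊢
      have : q.natDegree + q.natDegree + 3 ≤ 2 * n := by omega
      rw [two_nsmul]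
      exact_mod_cast this

lemma poly_smul_LL {n k : ℕ} {f : W.CoordinateRing} (hf : f ∈ LL W n) {p : F[X]}
    (hp : p.natDegree ≤ k) : p • f ∈ LL W (n + k) := by
  obtain ⟨a, b, ha, hb, rfl⟩ := mem_LL.1 hf
  refine mem_LL.2 ⟨p * a, p * b, ?_, ?_, by rw [smul_add, mul_smul, mul_smul]⟩
  · rw [mem_degreeLT] at ha ⊢
    by_cases h : p = 0
    · simp [h]
    by_cases h' : a = 0
    · simp [h']
    rw [degree_mul, degree_eq_natDegree h, degree_eq_natDegree h'] at *
    norm_cast at *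
    omega
  · rw [mem_degreeLT] at hb ⊢
    by_cases h : p = 0
    · simp [h]
    by_cases h' : b = 0
    · simp [h']
    rw [degree_mul, degree_eq_natDegree h, degree_eq_natDegree h'] at *
    norm_cast at *
    omega

lemma poly_LL {n : ℕ} {p : F[X]} (hp : p.natDegree ≤ n) :
    p • (1 : W.CoordinateRing) ∈ LL W n := by
  refine mem_LL.2 ⟨p, 0, ?_, by simp, by simp⟩
  rw [mem_degreeLT]
  exact lt_of_le_of_lt degree_le_natDegree (by exact_mod_cast Nat.lt_succ_of_le hp)

lemma LL_zeros {n : ℕ} {f : W.CoordinateRing} (hf : f ∈ LL W n) (h0 : f ≠ 0)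
    (S : Finset (Aff W)) (hS : ∀ P ∈ S, ev P f = 0) : S.card ≤ 2 * n :=
  (card_zeros_le h0 S hS).trans (norm_LL hf)

lemma LL_abel [DecidableEq F] {n : ℕ} {f : W.CoordinateRing} (hf : f ∈ LL W n) (h0 : f ≠ 0)
    (S : Finset (Aff W)) (hS : ∀ P ∈ S, ev P f = 0) (hc : S.card = 2 * n) :
    ∑ P ∈ S, P.1 = 0 :=
  abel h0 S hS (hc ▸ norm_LL hf)

/-- The subspace of functions vanishing on `B` -/
noncomputable def LB (W : Affine F) (n : ℕ) (B : Finset (Aff W)) : Submodule F W.CoordinateRing :=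
  LL W n ⊓ LinearMap.ker (evS B)

lemma mem_LB {n : ℕ} {B : Finset (Aff W)} {f : W.CoordinateRing} :
    f ∈ LB W n B ↔ f ∈ LL W n ∧ ∀ P ∈ B, ev P f = 0 := by
  rw [LB, Submodule.mem_inf, LinearMap.mem_ker]
  refine and_congr_right fun _ => ⟨fun h P hP => congrFun h ⟨P, hP⟩, fun h => funext fun P => h _ P.2⟩

instance fin_LB (n : ℕ) (B : Finset (Aff W)) : Module.Finite F (LB W n B) :=
  Submodule.finiteDimensional_of_le (inf_le_left : _ ≤ LL W n)

lemma finrank_LB_ge {n : ℕ} (hn : 1 ≤ n) (B : Finset (Aff W)) :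
    2 * n ≤ Module.finrank F (LB W n B) + B.card := by
  have h1 := LinearMap.finrank_range_add_finrank_ker ((evS B).domRestrict (LL W n))
  rw [finrank_LL hn] at h1
  have h2 : Module.finrank F (LinearMap.range ((evS B).domRestrict (LL W n))) ≤ B.card := by
    refine (Submodule.finrank_le _).trans ?_
    simp
  have h3 : Module.finrank F (LinearMap.ker ((evS B).domRestrict (LL W n))) ≤
      Module.finrank F (LB W n B) := by
    have : (LinearMap.ker ((evS B).domRestrict (LL W n))).map (LL W n).subtype ≤ LB W n B := by
      rintro _ ⟨x, hx, rfl⟩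
      exact ⟨x.2, hx⟩
    rw [← Submodule.finrank_map_subtype_eq]
    exact Submodule.finrank_mono this
  omega

lemma finrank_LB_le {n : ℕ} (B S : Finset (Aff W))
    (hS : ∀ f ∈ LB W n B, (∀ P ∈ S, ev P f = 0) → f = 0) :
    Module.finrank F (LB W n B) ≤ S.card := by
  have := LinearMap.finrank_le_finrank_of_injective (f := (evS S).domRestrict (LB W n B)) (by
    rw [injective_iff_map_eq_zero]
    intro f hf
    exact Subtype.ext (hS _ f.2 fun P hP => congrFun hf ⟨P, hP⟩))
  simpa using this
end Spaces
end LRCEll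

namespace LRCEll
open Polynomial

section Code
variable {F : Type*} [Field F] {R : Type*} [CommRing R] [Algebra F R] {b m r t : ℕ}

/-- The global function attached to a message. -/
noncomputable def TT (Wd : Submodule F R) (w v : R) (t : ℕ) : ((Fin t → Wd) × F) →ₗ[F] R where
  toFun x := ∑ i : Fin t, w ^ (i : ℕ) * v ^ (t - 1 - i) * (x.1 i : R) + x.2 • v ^ t
  map_add' x y := by
    simp only [Prod.fst_add, Prod.snd_add, Pi.add_apply, Submodule.coe_add, mul_add, add_smul,
      Finset.sum_add_distrib]
    abel
  map_smul' c x := by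
    simp only [Prod.smul_fst, Prod.smul_snd, Pi.smul_apply, Submodule.coe_smul, smul_add,
      RingHom.id_apply, Finset.smul_sum, mul_smul_comm, smul_assoc]

/-- The local function attached to a message. -/
noncomputable def loc (Wd : Submodule F R) (w : R) (t : ℕ) (κ : F) (x : (Fin t → Wd) × F) : R :=
  x.2 • w + ∑ i : Fin t, κ ^ ((i : ℕ) + 1) • (x.1 i : R)

lemma loc_mem (Wd : Submodule F R) {w : R} (hw : w ∈ Wd) (t : ℕ) (κ : F) (x : (Fin t → Wd) × F) :
    loc Wd w t κ x ∈ Wd :=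
  Wd.add_mem (Wd.smul_mem _ hw) (Wd.sum_mem fun i _ => Wd.smul_mem _ (x.1 i).2)

lemma phi_TT (φ : R →ₐ[F] F) (Wd : Submodule F R) (w v : R) (ht : 1 ≤ t) (κ : F) (hκ : κ ≠ 0)
    (hwv : φ w = κ * φ v) (x : (Fin t → Wd) × F) :
    φ (TT Wd w v t x) = φ v ^ (t - 1) * κ⁻¹ * φ (loc Wd w t κ x) := by
  simp only [TT, loc, LinearMap.coe_mk, AddHom.coe_mk, map_add, map_sum, map_mul, map_pow, hwv,
    map_smul, smul_eq_mul, mul_add]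
  rw [add_comm, Finset.mul_sum]
  congr 1
  · obtain ⟨k, rfl⟩ := Nat.exists_eq_add_of_le' ht
    simp only [Nat.add_sub_cancel]
    field_simp
    ring
  · refine Finset.sum_congr rfl fun i _ => ?_
    have : t - 1 = i + (t - 1 - i) := by omega
    rw [mul_pow]
    conv_rhs => rw [this, pow_add]
    field_simp
    ring

/-- evaluation -/
noncomputable def EE (φ : Fin b × Fin m → R →ₐ[F] F) : R →ₗ[F] (Fin (b * m) → F) :=
  LinearMap.pi fun k => (φ (finProdFinEquiv.symm k)).toLinearMap

lemma EE_apply (φ : Fin b × Fin m → R →ₐ[F] F) (f : R) (x : Fin b × Fin m) :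
    EE φ f (finProdFinEquiv x) = φ x f := by
  simp only [EE, LinearMap.pi_apply, Equiv.symm_apply_apply, AlgHom.toLinearMap_apply]

variable [DecidableEq F]

lemma wt_EE (φ : Fin b × Fin m → R →ₐ[F] F) (f : R) :
    hammingWt (EE φ f) = (Finset.univ.filter fun x => φ x f ≠ 0).card := by
  rw [hammingWt, ← Finset.card_map finProdFinEquiv.toEmbedding]
  congr 1
  ext k
  obtain ⟨x, rfl⟩ := finProdFinEquiv.surjective k
  simp [EE_apply]

theorem code_layer (φ : Fin b × Fin m → R →ₐ[F] F)
    (Wd : Submodule F R) [Module.Finite F Wd] (hW : Module.finrank F Wd = r) (w v : R)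
    (hw : w ∈ Wd) (κ : Fin m → F) (hκ : Function.Injective κ) (hκ0 : ∀ j, κ j ≠ 0)
    (hwv : ∀ i j, φ (i, j) w = κ j * φ (i, j) v) (hv : ∀ i j, φ (i, j) v ≠ 0)
    (hr : 1 ≤ r) (hrb : r ≤ b) (ht : 1 ≤ t) (htm : t < m)
    (hloc : ∀ j, ∀ G ∈ Wd, G ≠ 0 → (Finset.univ.filter fun i => φ (i, j) G = 0).card < r)
    (hglob : ∀ x : (Fin t → Wd) × F, TT Wd w v t x ≠ 0 →
      (Finset.univ.filter fun y => φ y (TT Wd w v t x) = 0).card ≤ b * t) :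
    ∃ C : Submodule F (Fin (b * m) → F), Module.finrank F C = r * t + 1 ∧
      MinDistEq C (b * (m - t)) ∧ IsLRC C r (b - r + 1) := by
  have hb : 0 < b := by omega
  have key : ∀ i j x, φ (i, j) (TT Wd w v t x) = 0 ↔ φ (i, j) (loc Wd w t (κ j) x) = 0 := by
    intro i j x
    rw [phi_TT (φ (i, j)) Wd w v ht (κ j) (hκ0 j) (hwv i j) x]
    have := hv i j
    have := hκ0 j
    simp [hv i j, hκ0 j]
  have hw0 : w ≠ 0 := by
    intro h0
    have := hwv ⟨0, hb⟩ ⟨0, by omega⟩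
    rw [h0, map_zero] at this
    exact mul_ne_zero (hκ0 _) (hv _ _) this.symm
  have hinj : Function.Injective (EE φ ∘ₗ TT Wd w v t) := by
    rw [injective_iff_map_eq_zero]
    intro x hx
    have h1 : ∀ j, loc Wd w t (κ j) x = 0 := by
      intro j
      by_contra hne
      have h2 := hloc j _ (loc_mem Wd hw t (κ j) x) hne
      have h3 : (Finset.univ.filter fun i => φ (i, j) (loc Wd w t (κ j) x) = 0) = Finset.univ := by
        ext i
        simp only [Finset.mem_filter, Finset.mem_univ, true_and, iff_true]
        rw [← key, ← EE_apply]
        exact congrFun hx _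
      rw [h3] at h2
      simp at h2
      omega
    have h4 : ∀ ℓ : Module.Dual F Wd, (Fin.cons (ℓ (x.2 • ⟨w, hw⟩)) (fun i => ℓ (x.1 i)) :
        Fin (t + 1) → F) = 0 := by
      intro ℓ
      apply Matrix.eq_zero_of_forall_index_sum_pow_mul_eq_zero
        (f := fun j : Fin (t + 1) => κ (Fin.castLE (by omega) j))
      · exact hκ.comp (Fin.castLE_injective _)
      · intro j
        have h5 : x.2 • (⟨w, hw⟩ : Wd) + ∑ i : Fin t, κ (Fin.castLE (by omega) j) ^ ((i : ℕ) + 1) • x.1 i = 0 := by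
          apply Subtype.ext
          have := h1 (Fin.castLE (by omega) j)
          rw [loc] at this
          simpa using this
        have h6 := congrArg ℓ h5
        rw [map_add, map_sum, map_zero] at h6
        rw [Fin.sum_univ_succ]
        simpa using h6
    have hG : x.1 = 0 := by
      funext i
      rw [Pi.zero_apply, ← Module.forall_dual_apply_eq_zero_iff F]
      intro ℓ
      have := congrFun (h4 ℓ) i.succ
      simpa using this
    have hc : x.2 • (⟨w, hw⟩ : Wd) = 0 := by
      rw [← Module.forall_dual_apply_eq_zero_iff F]
      intro ℓ
      have := congrFun (h4 ℓ) 0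
      simpa using this
    rw [smul_eq_zero] at hc
    rcases hc with hc | hc
    · exact Prod.ext hG hc
    · exact absurd (congrArg Subtype.val hc) hw0
  refine ⟨LinearMap.range (EE φ ∘ₗ TT Wd w v t), ?_, ⟨?_, ?_⟩, ?_⟩
  · rw [LinearMap.finrank_range_of_inj hinj, Module.finrank_prod, Module.finrank_pi_fintype]
    simp [hW, mul_comm]
  · rintro _ ⟨x, rfl⟩ hx
    rw [LinearMap.comp_apply] at hx ⊢
    rw [wt_EE]
    have h1 : TT Wd w v t x ≠ 0 := by
      intro h; rw [h, map_zero] at hx; exact hx rfl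
    have h2 := hglob x h1
    have h3 := Finset.card_filter_add_card_filter_not (s := Finset.univ)
      (fun y : Fin b × Fin m => φ y (TT Wd w v t x) = 0)
    simp only [Finset.card_univ, Fintype.card_prod, Fintype.card_fin] at h3
    rw [Nat.mul_sub]
    simp only [ne_eq]
    omega
  · set J : Finset (Fin m) := Finset.univ.filter fun j => (j : ℕ) < t with hJ
    have hJc : J.card = t := by
      have : J = Finset.univ.map (Fin.castLEEmb htm.le) := by
        ext j
        simp only [hJ, Finset.mem_filter, Finset.mem_univ, true_and, Finset.mem_map]
        exact ⟨fun h => ⟨⟨j, h⟩, rfl⟩, by rintro ⟨i, rfl⟩; exact i.2⟩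
      rw [this]; simp
    set p : F[X] := ∏ j ∈ J, (X - C (κ j)) with hp
    have hdeg : p.natDegree = t := by rw [hp, natDegree_finsetProd_X_sub_C_eq_card, hJc]
    let x : (Fin t → Wd) × F := (fun i => p.coeff (i + 1) • ⟨w, hw⟩, p.coeff 0)
    have hx : ∀ k, loc Wd w t k x = p.eval k • w := by
      intro k
      rw [eval_eq_sum_range, hdeg, Finset.sum_range_succ', loc]
      simp only [x, Finset.sum_smul, add_smul]
      rw [add_comm, Finset.sum_range (fun i => (p.coeff (i + 1) * k ^ (i + 1)) • w)]
      simp [smul_smul, mul_comm]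
    have hz : ∀ i j, φ (i, j) (TT Wd w v t x) = 0 ↔ j ∈ J := by
      intro i j
      rw [key, hx, map_smul, smul_eq_mul, hwv]
      have h1 := hv i j
      have h2 := hκ0 j
      simp only [mul_eq_zero, h1, h2, or_false]
      rw [hp, eval_prod, Finset.prod_eq_zero_iff]
      constructor
      · rintro ⟨a, ha, h⟩
        rw [eval_sub, eval_X, eval_C, sub_eq_zero] at h
        exact hκ h ▸ ha
      · intro h; exact ⟨j, h, by simp⟩
    have hwt : hammingWt (EE φ (TT Wd w v t x)) = b * (m - t) := by
      rw [wt_EE]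
      have : (Finset.univ.filter fun y => φ y (TT Wd w v t x) ≠ 0) =
          (Finset.univ : Finset (Fin b)) ×ˢ Jᶜ := by
        ext ⟨i, j⟩
        simp [hz]
      rw [this, Finset.card_product, Finset.card_compl, hJc]
      simp
    refine ⟨_, ⟨x, rfl⟩, ?_, hwt⟩
    intro h0
    rw [LinearMap.comp_apply] at h0
    rw [h0] at hwt
    have : 0 < b * (m - t) := Nat.mul_pos hb (by omega)
    rw [← hwt] at this
    simp [hammingWt] at this
  · intro k
    obtain ⟨⟨i, j⟩, rfl⟩ := finProdFinEquiv.surjective k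
    have hinj2 : Function.Injective (fun i : Fin b => (finProdFinEquiv (i, j) : Fin (b * m))) := by
      intro a a' h
      simpa using h
    refine ⟨Finset.univ.map ⟨_, hinj2⟩, Finset.mem_map.2 ⟨i, Finset.mem_univ _, rfl⟩, ?_, ?_⟩
    · rw [Finset.card_map, Finset.card_univ, Fintype.card_fin]; omega
    · rintro _ ⟨x, rfl⟩ ⟨k, hk, hne⟩
      obtain ⟨i', -, rfl⟩ := Finset.mem_map.1 hk
      rw [LinearMap.comp_apply] at hne ⊢
      change EE φ (TT Wd w v t x) (finProdFinEquiv (i', j)) ≠ 0 at hne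
      rw [EE_apply, ne_eq, key] at hne
      have h1 := hloc j _ (loc_mem Wd hw t (κ j) x) (fun h => hne (by rw [h, map_zero]))
      rw [Finset.filter_map, Finset.card_map]
      simp only [Function.comp_def, Function.Embedding.coeFn_mk, EE_apply, ne_eq, key]
      have h3 := Finset.card_filter_add_card_filter_not (s := Finset.univ)
        (fun i => φ (i, j) (loc Wd w t (κ j) x) = 0)
      simp only [Finset.card_univ, Fintype.card_fin] at h3
      omega
end Code
end LRCEll

namespace LRCEll
open WeierstrassCurve WeierstrassCurve.Affine Polynomial

section Count
universe u
variable {F : Type u} [Field F]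

/-- The curve `y² + y = x³ + c`. -/
def EC (c : F) : Affine F := { a₁ := 0, a₂ := 0, a₃ := 1, a₄ := 0, a₆ := c }

lemma EC_eqn {c x y : F} : (EC c).Equation x y ↔ y ^ 2 + y = x ^ 3 + c := by
  rw [equation_iff]; simp [EC]

lemma EC_ns (h2 : (2 : F) = 0) {c x y : F} : (EC c).Nonsingular x y ↔ y ^ 2 + y = x ^ 3 + c := by
  rw [nonsingular_iff', EC_eqn]; simp [EC, h2]

/-- Artin-Schreier map -/
def wp (h2 : (2 : F) = 0) : F →+ F where
  toFun y := y ^ 2 + y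
  map_zero' := by simp
  map_add' x y := by linear_combination x * y * h2

lemma wp_apply (h2 : (2 : F) = 0) (y : F) : wp h2 y = y ^ 2 + y := rfl

lemma wp_fib (h2 : (2 : F) = 0) (y z : F) : wp h2 y = wp h2 z ↔ y = z ∨ y = z + 1 := by
  rw [wp_apply, wp_apply]
  have : y ^ 2 + y = z ^ 2 + z ↔ (y - z) * (y - (z + 1)) = 0 := by
    constructor <;> intro h
    · linear_combination h - (z * y - z ^ 2 + y -z) * h2
    · linear_combination h + (z * y - z ^ 2 + y - z) * h2
  rw [this, mul_eq_zero, sub_eq_zero, sub_eq_zero]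

variable [Fintype F] [DecidableEq F]

lemma wp_index (h2 : (2 : F) = 0) : (wp h2).range.index = 2 := by
  have h1 : Nat.card (wp h2).ker = 2 := by
    have : ((wp h2).ker : Set F) = {0, 1} := by
      ext y
      rw [SetLike.mem_coe, AddMonoidHom.mem_ker, ← map_zero (wp h2), wp_fib]
      simp
    rw [← SetLike.coe_sort_coe, this, Nat.card_coe_set_eq, Set.ncard_pair zero_ne_one]
  have h3 := AddSubgroup.card_mul_index (wp h2).ker
  have h4 := AddSubgroup.card_mul_index (wp h2).range
  rw [AddSubgroup.index_ker, h1] at h3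
  rw [← h3, mul_comm] at h4
  exact Nat.eq_of_mul_eq_mul_right Nat.card_pos h4

open Classical in
/-- The quadratic additive character -/
noncomputable def chi (h2 : (2 : F) = 0) (u : F) : ℤ := if u ∈ (wp h2).range then 1 else -1

lemma chi_add (h2 : (2 : F) = 0) (u v : F) : chi h2 (u + v) = chi h2 u * chi h2 v := by
  have := AddSubgroup.add_mem_iff_of_index_two (wp_index h2) (a := u) (b := v)
  unfold chi
  by_cases hu : u ∈ (wp h2).range <;> by_cases hv : v ∈ (wp h2).range <;> simp [this, hu, hv]

lemma chi_wp (h2 : (2 : F) = 0) (y : F) : chi h2 (y ^ 2 + y) = 1 :=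
  if_pos ⟨y, rfl⟩

lemma chi_mul_self (h2 : (2 : F) = 0) (y : F) : chi h2 y * chi h2 y = 1 := by
  unfold chi; split_ifs <;> rfl

lemma chi_sq (h2 : (2 : F) = 0) (y : F) : chi h2 (y ^ 2) = chi h2 y := by
  have h := chi_wp h2 y
  rw [chi_add] at h
  have := chi_mul_self h2 y
  calc _ = chi h2 (y ^ 2) * (chi h2 y * chi h2 y) := by rw [this, mul_one]
    _ = (chi h2 (y ^ 2) * chi h2 y) * chi h2 y := by ring
    _ = _ := by rw [h, one_mul]

lemma exists_chi (h2 : (2 : F) = 0) : ∃ c, chi h2 c = -1 := by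
  by_contra! hc
  have : (wp h2).range = ⊤ := by
    rw [eq_top_iff]
    intro c _
    by_contra h
    exact hc c (if_neg h)
  have h3 := wp_index h2
  rw [this] at h3
  simp at h3

lemma sum_chi (h2 : (2 : F) = 0) : ∑ u, chi h2 u = 0 := by
  obtain ⟨c, hc⟩ := exists_chi h2
  have h : ∑ u, chi h2 u = ∑ u, chi h2 (u + c) :=
    (Fintype.sum_equiv (Equiv.addRight c) _ _ (fun x => rfl)).symm
  simp_rw [chi_add, hc] at h
  rw [← Finset.sum_mul] at h
  linarith

lemma card_fib (h2 : (2 : F) = 0) (u : F) :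
    ((Finset.univ.filter fun y : F => y ^ 2 + y = u).card : ℤ) = 1 + chi h2 u := by
  unfold chi
  split_ifs with h
  · obtain ⟨z, rfl⟩ := h
    have : (Finset.univ.filter fun y : F => y ^ 2 + y = wp h2 z) = {z, z + 1} := by
      ext y
      simp only [Finset.mem_filter, Finset.mem_univ, true_and, Finset.mem_insert,
        Finset.mem_singleton]
      exact wp_fib h2 y z
    rw [this, Finset.card_pair (by simp)]
    rfl
  · rw [Finset.filter_eq_empty_iff.2]
    · rfl
    · intro y _ hy
      exact h ⟨y, hy⟩

lemma sq_bij (h2 : (2 : F) = 0) {a : F} (ha : a ≠ 0) : Function.Bijective fun x : F => x ^ 2 * a := by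
  rw [← Finite.injective_iff_bijective]
  intro x y h
  have h' := mul_right_cancel₀ ha h
  have : (x - y) ^ 2 = 0 := by linear_combination h' + (y ^ 2 - x * y) * h2
  exact sub_eq_zero.1 (pow_eq_zero_iff two_ne_zero |>.1 this)

lemma inner_sum (h2 : (2 : F) = 0) (y : F) :
    ∑ x, chi h2 (x ^ 2 * y + x * y ^ 2) = if y ^ 4 = y then (Fintype.card F : ℤ) else 0 := by
  have h1 : ∀ x, chi h2 (x ^ 2 * y + x * y ^ 2) = chi h2 (x ^ 2 * (y + y ^ 4)) := by
    intro x
    rw [chi_add, ← chi_sq h2 (x * y ^ 2), ← chi_add]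
    congr 1; ring
  simp_rw [h1]
  split_ifs with h
  · have h0 : y + y ^ 4 = 0 := by linear_combination h + y * h2
    have : chi h2 0 = 1 := by simpa using chi_wp h2 0
    simp [h0, this]
  · have h0 : y + y ^ 4 ≠ 0 := fun h0 => h (by linear_combination h0 - y * h2)
    rw [← sum_chi h2]
    exact (sq_bij h2 h0).sum_comp (chi h2)

lemma sq_sum (h2 : (2 : F) = 0) (h3 : 3 ∣ Fintype.card F - 1) :
    (∑ x, chi h2 (x ^ 3)) ^ 2 = 4 * Fintype.card F := by
  obtain ⟨w, hw⟩ : ∃ w : F, w ^ 2 + w + 1 = 0 := by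
    have := Fact.mk Nat.prime_three
    obtain ⟨u, hu⟩ := exists_prime_orderOf_dvd_card (G := Fˣ) 3 (by rwa [Fintype.card_units])
    refine ⟨u, ?_⟩
    have h4 : ((u : F) ^ 3) = 1 := by
      rw [← Units.val_pow_eq_pow_val, ← hu, pow_orderOf_eq_one]; rfl
    have h5 : (u : F) - 1 ≠ 0 := by
      intro h
      rw [sub_eq_zero, Units.val_eq_one] at h
      rw [h, orderOf_one] at hu
      omega
    apply mul_left_cancel₀ h5
    linear_combination h4
  have hw0 : w ≠ 0 := by rintro rfl; simp at hw
  have hw1 : w ≠ 1 := by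
    rintro rfl
    exact one_ne_zero (α := F) (by linear_combination hw - h2)
  have hchi1 : chi h2 1 = 1 := by
    have := chi_wp h2 w
    rwa [show w ^ 2 + w = 1 by linear_combination hw - h2] at this
  have hchi0 : chi h2 0 = 1 := by simpa using chi_wp h2 0
  have hset : (Finset.univ.filter fun y : F => y ^ 4 = y) = {0, 1, w, w + 1} := by
    ext y
    simp only [Finset.mem_filter, Finset.mem_univ, true_and, Finset.mem_insert,
        Finset.mem_singleton]
    have : y ^ 4 = y ↔ y * ((y - 1) * ((y - w) * (y - (w + 1)))) = 0 := by
      have key : y * ((y - 1) * ((y - w) * (y - (w + 1)))) = y ^ 4 - y := by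
        linear_combination (y ^ 2 - y) * hw + (y - y ^ 3 - w * y ^ 3 + w * y ^ 2) * h2
      rw [key, sub_eq_zero]
    rw [this, mul_eq_zero, mul_eq_zero, mul_eq_zero, sub_eq_zero, sub_eq_zero, sub_eq_zero]
  have hcard : (Finset.univ.filter fun y : F => y ^ 4 = y).card = 4 := by
    rw [hset]
    have h4 : w + 1 ≠ 0 := fun h => hw1 (by linear_combination h - h2)
    rw [Finset.card_insert_of_notMem, Finset.card_insert_of_notMem, Finset.card_pair]
    · simp
    · simp [hw1.symm, hw0]
    · simp [hw0.symm, h4.symm]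
  calc (∑ x, chi h2 (x ^ 3)) ^ 2 = ∑ x, ∑ z, chi h2 (x ^ 3 + z ^ 3) := by
        rw [sq, Finset.sum_mul_sum]; simp_rw [chi_add]
    _ = ∑ x, ∑ y, chi h2 (y ^ 3) * chi h2 (x ^ 2 * y + x * y ^ 2) := by
        refine Finset.sum_congr rfl fun x _ => ?_
        refine (Fintype.sum_equiv (Equiv.addLeft x) _ _ (fun y => ?_)).symm
        rw [← chi_add]
        congr 1
        simp only [Equiv.coe_addLeft]
        linear_combination (-x^3 - x^2*y - x *y^2) * h2
    _ = ∑ y, chi h2 (y ^ 3) * ∑ x, chi h2 (x ^ 2 * y + x * y ^ 2) := by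
        rw [Finset.sum_comm]; simp_rw [Finset.mul_sum]
    _ = ∑ y, if y ^ 4 = y then (Fintype.card F : ℤ) else 0 := by
        refine Finset.sum_congr rfl fun y _ => ?_
        rw [inner_sum]
        split_ifs with h
        · have : chi h2 (y ^ 3) = 1 := by
            by_cases h0 : y = 0
            · simp [h0, hchi0]
            · rw [show y ^ 3 = 1 from mul_left_cancel₀ h0 (by linear_combination h), hchi1]
          rw [this, one_mul]
        · simp
    _ = _ := by
        rw [← Finset.sum_filter, Finset.sum_const, hcard]; simp

theorem exists_curve (s : ℕ) (hs : 0 < s) (hF : Fintype.card F = 2 ^ (2 * s)) :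
    (2 : F) = 0 ∧ ∃ c : F, Nat.card (EC c).Point = 2 ^ (2 * s) + 2 ^ (s + 1) + 1 := by
  have h2 : (2 : F) = 0 := by
    have h1 : ((Fintype.card F : ℕ) : F) = 0 := FiniteField.cast_card_eq_zero F
    rw [hF] at h1
    push_cast at h1
    exact pow_eq_zero_iff (by omega) |>.1 h1
  refine ⟨h2, ?_⟩
  have h3 : 3 ∣ Fintype.card F - 1 := by
    rw [hF, pow_mul]
    simpa using Nat.sub_dvd_pow_sub_pow 4 1 s
  have hS := sq_sum h2 h3
  have hS' : (∑ x, chi h2 (x ^ 3)) ^ 2 = (2 ^ (s + 1)) ^ 2 := by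
    rw [hS, hF]; push_cast; ring
  obtain ⟨c, hc⟩ : ∃ c, chi h2 c * ∑ x, chi h2 (x ^ 3) = 2 ^ (s + 1) := by
    rcases sq_eq_sq_iff_eq_or_eq_neg.1 hS' with h | h
    · exact ⟨0, by rw [h, show chi h2 0 = 1 by simpa using chi_wp h2 0, one_mul]⟩
    · obtain ⟨c, hc⟩ := exists_chi h2
      exact ⟨c, by rw [h, hc]; ring⟩
  refine ⟨c, ?_⟩
  rw [Nat.card_congr (nonsingularPointEquiv (EC c))]
  change Nat.card (Option _) = _
  rw [Finite.card_option]
  congr 1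
  simp_rw [EC_ns h2]
  rw [Nat.card_eq_fintype_card, Fintype.card_subtype]
  zify
  rw [← Finset.univ_product_univ, Finset.card_filter, Finset.sum_product]
  push_cast
  have : ∀ x : F, ∑ y : F, (if y ^ 2 + y = x ^ 3 + c then (1 : ℤ) else 0) =
      1 + chi h2 c * chi h2 (x ^ 3) := by
    intro x
    rw [mul_comm, ← chi_add, ← card_fib, Finset.card_filter]
    push_cast; rfl
  simp_rw [this]
  rw [Finset.sum_add_distrib, ← Finset.mul_sum, hc]
  simp [hF]
end Count
end LRCEll

namespace LRCEll
open WeierstrassCurve WeierstrassCurve.Affine Polynomial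

lemma exists_addSubgroup_card (n : ℕ) (hn : n ≠ 0) : ∀ (G : Type*) [AddCommGroup G] [Finite G],
    n ∣ Nat.card G → ∃ H : AddSubgroup G, Nat.card H = n := by
  induction n using induction_on_primes with
  | zero => exact absurd rfl hn
  | one => intro G _ _ _; exact ⟨⊥, by simp⟩
  | prime_mul p a hp ih =>
    intro G _ _ hd
    have ha : a ≠ 0 := by rintro rfl; simp at hn
    have := Fact.mk hp
    obtain ⟨g, hg⟩ := exists_prime_addOrderOf_dvd_card' (G := G) p ((dvd_mul_right p a).trans hd)
    set Z := AddSubgroup.zmultiples g with hZ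
    have hZc : Nat.card Z = p := by rw [hZ, Nat.card_zmultiples, hg]
    have h1 : Nat.card (G ⧸ Z) * p = Nat.card G := by
      rw [← hZc, mul_comm]
      exact AddSubgroup.card_mul_index Z
    obtain ⟨K, hK⟩ := ih ha (G ⧸ Z) (by
      rw [← h1, mul_comm] at hd
      exact Nat.dvd_of_mul_dvd_mul_right hp.pos hd)
    refine ⟨K.comap (QuotientAddGroup.mk' Z), ?_⟩
    have h2 := AddSubgroup.card_mul_index (K.comap (QuotientAddGroup.mk' Z))
    have h3 := AddSubgroup.card_mul_index K
    rw [AddSubgroup.index_comap_of_surjective _ (QuotientAddGroup.mk'_surjective Z), ← h1, ← h3,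
      hK] at h2
    have h4 : K.index ≠ 0 := AddSubgroup.index_ne_zero_of_finite
    apply Nat.eq_of_mul_eq_mul_right (Nat.pos_of_ne_zero h4)
    rw [h2]; ring

section Velu
universe u
variable {F : Type u} [Field F] {c : F}

lemma EC_yc_neg (h2 : (2 : F) = 0) {P : (EC c).Point} (hP : P ≠ 0) : yc (-P) = yc P + 1 := by
  have := Aff.eq_some ⟨P, hP⟩
  simp only at this
  conv_lhs => rw [this, Point.neg_some]
  change -yc P - 0 * xc P - 1 = yc P + 1
  linear_combination (-yc P - 1) * h2

lemma EC_xc_neg {P : (EC c).Point} : xc (-P) = xc P := by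
  cases P <;> rfl

lemma EC_neg_ne (h2 : (2 : F) = 0) {P : (EC c).Point} (hP : P ≠ 0) : -P ≠ P := by
  intro h
  have := EC_yc_neg h2 hP
  rw [h] at this
  simp at this

lemma EC_eqn' {P : (EC c).Point} (hP : P ≠ 0) : yc P ^ 2 + yc P = xc P ^ 3 + c :=
  EC_eqn.1 (Aff.eqn ⟨P, hP⟩).1

lemma xc_eq {P Q : (EC c).Point} (hP : P ≠ 0) (hQ : Q ≠ 0) (h : xc P = xc Q) : P = Q ∨ P = -Q := by
  have h1 := Aff.eq_some ⟨P, hP⟩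
  have h2 := Aff.eq_some ⟨Q, hQ⟩
  simp only at h1 h2
  rw [h1, h2]
  exact Point.X_eq_iff.1 h

variable [DecidableEq F]

lemma xc_add (h2 : (2 : F) = 0) {P Q : (EC c).Point} (hP : P ≠ 0) (hQ : Q ≠ 0) (h : xc P ≠ xc Q) :
    xc (P + Q) = (yc P ^ 2 + yc Q ^ 2) / (xc P + xc Q) ^ 2 + (xc P + xc Q) := by
  have h1 := Aff.eq_some ⟨P, hP⟩
  have h3 := Aff.eq_some ⟨Q, hQ⟩
  simp only at h1 h3
  conv_lhs => rw [h1, h3, Point.add_of_X_ne h]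
  change (EC c).addX (xc P) (xc Q) ((EC c).slope (xc P) (xc Q) (yc P) (yc Q)) = _
  rw [slope_of_X_ne h]
  change ((yc P - yc Q) / (xc P - xc Q)) ^ 2 + 0 * ((yc P - yc Q) / (xc P - xc Q)) - 0 - xc P - xc Q = _
  have e1 : xc P - xc Q = xc P + xc Q := by linear_combination - xc Q * h2
  have e2 : yc P - yc Q = yc P + yc Q := by linear_combination - yc Q * h2
  have e3 : yc P ^ 2 + yc Q ^ 2 = (yc P + yc Q) ^ 2 := by linear_combination - yc P * yc Q * h2
  rw [e1, e2, e3, div_pow]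
  linear_combination (-xc P - xc Q) * h2

variable [Fintype (EC c).Point] (H : AddSubgroup (EC c).Point)

open Classical in
/-- nonzero elements of `H` -/
noncomputable def Hs : Finset (EC c).Point := Finset.univ.filter fun a => a ∈ H ∧ a ≠ 0

lemma mem_Hs {a : (EC c).Point} : a ∈ Hs H ↔ a ∈ H ∧ a ≠ 0 := by simp [Hs]

lemma sum_even (h2 : (2 : F) = 0) (f : (EC c).Point → F) (hf : ∀ a, f (-a) = f a) :
    ∑ a ∈ Hs H, f a = 0 := by
  refine Finset.sum_involution (fun a _ => -a) ?_ ?_ ?_ ?_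
  · intro a _; rw [hf]; linear_combination f a * h2
  · intro a ha _; exact EC_neg_ne h2 ((mem_Hs H).1 ha).2
  · intro a ha
    rw [mem_Hs] at ha ⊢
    exact ⟨H.neg_mem ha.1, neg_ne_zero.2 ha.2⟩
  · intro a _; exact neg_neg a

open Classical in
/-- The invariant function. -/
noncomputable def Xf (P : (EC c).Point) : F := ∑ a ∈ Finset.univ.filter (· ∈ H), xc (P + a)

lemma filter_H : (open Classical in Finset.univ.filter (· ∈ H)) = insert 0 (Hs H) := by
  ext a
  simp only [Finset.mem_filter, Finset.mem_univ, true_and, Finset.mem_insert, mem_Hs]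
  by_cases h : a = 0
  · simp [h, H.zero_mem]
  · simp [h]

lemma card_Hs : (Hs H).card + 1 = Nat.card H := by
  classical
  have h1 : (insert 0 (Hs H)).card = (Hs H).card + 1 :=
    Finset.card_insert_of_notMem (by simp [mem_Hs])
  rw [← h1, ← filter_H, Nat.card_eq_fintype_card, Fintype.card_subtype]

lemma Xf_add {P a : (EC c).Point} (ha : a ∈ H) : Xf H (P + a) = Xf H P := by
  classical
  refine Finset.sum_bij (fun b _ => a + b) ?_ ?_ ?_ ?_
  · intro b hb
    simp only [Finset.mem_filter, Finset.mem_univ, true_and] at hb ⊢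
    exact H.add_mem ha hb
  · intro b _ b' _ h; exact add_left_cancel h
  · intro b hb
    simp only [Finset.mem_filter, Finset.mem_univ, true_and] at hb
    refine ⟨-a + b, ?_, by abel_nf⟩
    simp only [Finset.mem_filter, Finset.mem_univ, true_and]
    exact H.add_mem (H.neg_mem ha) hb
  · intro b _; rw [add_assoc]

lemma Xf_neg {P : (EC c).Point} : Xf H (-P) = Xf H P := by
  classical
  refine Finset.sum_bij (fun b _ => -b) ?_ ?_ ?_ ?_
  · intro b hb
    simp only [Finset.mem_filter, Finset.mem_univ, true_and] at hb ⊢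
    exact H.neg_mem hb
  · intro b _ b' _ h; exact neg_injective h
  · intro b hb
    simp only [Finset.mem_filter, Finset.mem_univ, true_and] at hb
    refine ⟨-b, ?_, neg_neg b⟩
    simp only [Finset.mem_filter, Finset.mem_univ, true_and]
    exact H.neg_mem hb
  · intro b _
    rw [← EC_xc_neg (P := P + -b)]
    congr 1
    abel_nf

lemma xc_ne {P a : (EC c).Point} (hP : P ∉ H) (ha : a ∈ Hs H) : xc P ≠ xc a := by
  rw [mem_Hs] at ha
  intro h
  have hP0 : P ≠ 0 := fun h0 => hP (h0 ▸ H.zero_mem)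
  rcases xc_eq hP0 ha.2 h with h | h
  · exact hP (h ▸ ha.1)
  · exact hP (h ▸ H.neg_mem ha.1)

lemma Xf_eq (h2 : (2 : F) = 0) {P : (EC c).Point} (hP : P ∉ H) :
    Xf H P = xc P + ∑ a ∈ Hs H, yc a ^ 2 / (xc P + xc a) ^ 2 := by
  have hP0 : P ≠ 0 := fun h0 => hP (h0 ▸ H.zero_mem)
  rw [Xf, filter_H, Finset.sum_insert (by simp [mem_Hs]), add_zero]
  congr 1
  have h1 : ∀ a ∈ Hs H, xc (P + a) = (yc P ^ 2 / (xc P + xc a) ^ 2 + (xc P + xc a)) +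
      yc a ^ 2 / (xc P + xc a) ^ 2 := by
    intro a ha
    rw [xc_add h2 hP0 ((mem_Hs H).1 ha).2 (xc_ne H hP ha)]
    ring
  rw [Finset.sum_congr rfl h1, Finset.sum_add_distrib,
    sum_even H h2 (fun a => yc P ^ 2 / (xc P + xc a) ^ 2 + (xc P + xc a)) (by
      intro a; simp only [EC_xc_neg]), zero_add]

/-- denominator -/
noncomputable def vp : F[X] := ∏ b ∈ Hs H, (X + C (xc b))

/-- partial denominator -/
noncomputable def va (a : (EC c).Point) : F[X] := ∏ b ∈ ((Hs H).erase a).erase (-a), (X + C (xc b))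

/-- numerator -/
noncomputable def np : F[X] := X * vp H + ∑ a ∈ Hs H, C (yc a ^ 2) * va H a

lemma neg_mem_erase (h2 : (2 : F) = 0) {a : (EC c).Point} (ha : a ∈ Hs H) : -a ∈ (Hs H).erase a := by
  rw [mem_Hs] at ha
  rw [Finset.mem_erase, mem_Hs]
  exact ⟨EC_neg_ne h2 ha.2, H.neg_mem ha.1, neg_ne_zero.2 ha.2⟩

lemma vp_eq (h2 : (2 : F) = 0) {a : (EC c).Point} (ha : a ∈ Hs H) :
    vp H = (X + C (xc a)) ^ 2 * va H a := by
  rw [vp, va, ← Finset.mul_prod_erase _ _ ha, ← Finset.mul_prod_erase _ _ (neg_mem_erase H h2 ha),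
    EC_xc_neg]
  ring

lemma vp_eval {P : (EC c).Point} (hP : P ∉ H) (h2 : (2 : F) = 0) : (vp H).eval (xc P) ≠ 0 := by
  rw [vp, eval_prod, Finset.prod_ne_zero_iff]
  intro b hb h
  simp only [eval_add, eval_X, eval_C] at h
  exact xc_ne H hP hb (by linear_combination h - xc b * h2)

lemma np_eval (h2 : (2 : F) = 0) {P : (EC c).Point} (hP : P ∉ H) :
    (np H).eval (xc P) = Xf H P * (vp H).eval (xc P) := by
  rw [Xf_eq H h2 hP, np, eval_add, eval_mul, eval_X, eval_finsetSum, add_mul, Finset.sum_mul]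
  congr 1
  refine Finset.sum_congr rfl fun a ha => ?_
  rw [vp_eq H h2 ha, eval_mul, eval_mul, eval_C]
  have : xc P + xc a ≠ 0 := fun h => xc_ne H hP ha (by linear_combination h - xc a * h2)
  simp only [eval_pow, eval_add, eval_X, eval_C]
  field_simp

lemma vp_monic : (vp H).Monic := monic_prod_of_monic _ _ fun b _ => monic_X_add_C _

lemma vp_deg : (vp H).natDegree + 1 = Nat.card H := by
  rw [← card_Hs, vp, natDegree_prod_of_monic _ _ fun b _ => monic_X_add_C _]
  simp

lemma va_deg (h2 : (2 : F) = 0) {a : (EC c).Point} (ha : a ∈ Hs H) :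
    (va H a).natDegree < (vp H).natDegree := by
  have h1 : (va H a).Monic := monic_prod_of_monic _ _ fun b _ => monic_X_add_C _
  rw [vp_eq H h2 ha, ((monic_X_add_C _).pow 2).natDegree_mul h1, (monic_X_add_C _).natDegree_pow]
  simp

/-- The polynomial cutting out a fibre. -/
noncomputable def wp' (ξ : F) : F[X] := np H - C ξ * vp H

lemma wp'_eval (h2 : (2 : F) = 0) {P : (EC c).Point} (hP : P ∉ H) (ξ : F) :
    (wp' H ξ).eval (xc P) = (Xf H P - ξ) * (vp H).eval (xc P) := by
  rw [wp', eval_sub, eval_mul, eval_C, np_eval H h2 hP]; ring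

lemma wp'_deg (h2 : (2 : F) = 0) (ξ : F) :
    (wp' H ξ).natDegree = Nat.card H ∧ wp' H ξ ≠ 0 := by
  have h1 : (X * vp H).natDegree = Nat.card H := by
    rw [natDegree_X_mul (vp_monic H).ne_zero, vp_deg]
  have h3 : (X * vp H).Monic := monic_X.mul (vp_monic H)
  have hle : (∑ a ∈ Hs H, C (yc a ^ 2) * va H a).natDegree ≤ (vp H).natDegree :=
    natDegree_sum_le_of_forall_le _ _ fun a ha =>
      (natDegree_C_mul_le _ _).trans (va_deg H h2 ha).le
  have hle2 : (∑ a ∈ Hs H, C (yc a ^ 2) * va H a - C ξ * vp H).natDegree ≤ (vp H).natDegree :=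
    (natDegree_sub_le _ _).trans (max_le hle (natDegree_C_mul_le _ _))
  have he : wp' H ξ = X * vp H + (∑ a ∈ Hs H, C (yc a ^ 2) * va H a - C ξ * vp H) := by
    rw [wp', np]; ring
  have hlt : (∑ a ∈ Hs H, C (yc a ^ 2) * va H a - C ξ * vp H).natDegree < (X * vp H).natDegree := by
    rw [h1, ← vp_deg H]; omega
  have hd : (wp' H ξ).natDegree = Nat.card H := by
    rw [he, natDegree_add_eq_left_of_natDegree_lt hlt, h1]
  refine ⟨hd, fun h0 => ?_⟩
  rw [h0, natDegree_zero, ← vp_deg H] at hd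
  omega

/-- oddness -/
lemma two_mem (hodd : Odd (Nat.card (EC c).Point)) {R : (EC c).Point} (h : R + R ∈ H) : R ∈ H := by
  obtain ⟨k, hk⟩ := hodd
  have h0 : Nat.card (EC c).Point • R = 0 := card_nsmul_eq_zero'
  rw [hk, add_smul, mul_comm, mul_smul, two_smul, one_smul] at h0
  rw [eq_neg_of_add_eq_zero_right h0]
  exact H.neg_mem (H.nsmul_mem h k)

lemma Xf_iff (h2 : (2 : F) = 0) (hodd : Odd (Nat.card (EC c).Point)) {P R : (EC c).Point} (hP : P ∉ H)
    (hR : R ∉ H) : Xf H R = Xf H P ↔ (R - P ∈ H ∨ R + P ∈ H) := by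
  classical
  constructor
  · intro h
    by_contra! hcon
    set T := insert (xc R) ((Finset.univ.filter (· ∈ H)).image fun a => xc (P + a)) with hT
    have hPa : ∀ a ∈ H, P + a ∉ H := fun a ha h => hP (by simpa using H.sub_mem h ha)
    have hne : ∀ {Q : (EC c).Point}, Q ∉ H → Q ≠ 0 := fun hQ h0 => hQ (h0 ▸ H.zero_mem)
    have hcard : T.card = Nat.card H + 1 := by
      rw [hT, Finset.card_insert_of_notMem, Finset.card_image_of_injOn]
      · rw [Nat.card_eq_fintype_card, Fintype.card_subtype]
      · intro a ha b hb hab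
        simp only [Finset.coe_filter, Finset.mem_univ, true_and, Set.mem_ofPred_eq] at ha hb hab
        rcases xc_eq (hne (hPa a ha)) (hne (hPa b hb)) hab with h | h
        · exact add_left_cancel h
        · exfalso
          apply hP
          apply two_mem H hodd
          have : P + P = -a - b := by
            rw [eq_neg_iff_add_eq_zero] at h
            rw [← sub_eq_zero, ← h]; abel_nf
          rw [this]
          exact H.sub_mem (H.neg_mem ha) hb
      · simp only [Finset.mem_image, Finset.mem_filter, Finset.mem_univ, true_and, not_exists, not_and]
        intro a ha hab
        rcases xc_eq (hne (hPa a ha)) (hne hR) hab with h | h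
        · apply hcon.1; rw [← h]; simpa using ha
        · apply hcon.2
          rw [eq_neg_iff_add_eq_zero] at h
          have : R + P = -a := by
            rw [eq_neg_iff_add_eq_zero, ← h]; abel_nf
          rw [this]; exact H.neg_mem ha
    have hroot : ∀ x ∈ T, (wp' H (Xf H P)).IsRoot x := by
      intro x hx
      rw [IsRoot]
      rw [hT, Finset.mem_insert, Finset.mem_image] at hx
      rcases hx with rfl | ⟨a, ha, rfl⟩
      · rw [wp'_eval H h2 hR, h]; ring
      · simp only [Finset.mem_filter, Finset.mem_univ, true_and] at ha
        rw [wp'_eval H h2 (hPa a ha), Xf_add H ha]; ring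
    have h5 := card_le_degree_of_subset_roots (p := wp' H (Xf H P)) (Z := T) (by
      intro x hx
      exact (mem_roots (wp'_deg H h2 _).2).2 (hroot x (by simpa using hx)))
    rw [(wp'_deg H h2 _).1, hcard] at h5
    omega
  · rintro (h | h)
    · have := Xf_add H (P := P) h
      rwa [add_sub_cancel] at this
    · have := Xf_add H (P := -P) h
      rw [Xf_neg] at this
      rw [← this]; congr 1; abel_nf

open Classical in
/-- orbits -/
noncomputable def orb (P : (EC c).Point) : Finset (EC c).Point :=
  Finset.univ.filter fun R => R - P ∈ H ∨ R + P ∈ H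

lemma mem_orb {P R : (EC c).Point} : R ∈ orb H P ↔ R - P ∈ H ∨ R + P ∈ H := by simp [orb]

lemma orb_notMem {P R : (EC c).Point} (hP : P ∉ H) (hR : R ∈ orb H P) : R ∉ H := by
  rw [mem_orb] at hR
  intro h
  rcases hR with h1 | h1
  · exact hP (by simpa using H.sub_mem h h1)
  · exact hP (by simpa using H.sub_mem h1 h)

lemma card_orb (hodd : Odd (Nat.card (EC c).Point)) {P : (EC c).Point} (hP : P ∉ H) :
    (orb H P).card = 2 * Nat.card H := by
  classical
  have h1 : orb H P = (Finset.univ.filter (· ∈ H)).map (addRightEmbedding P) ∪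
      (Finset.univ.filter (· ∈ H)).map (addRightEmbedding (-P)) := by
    ext R
    simp only [mem_orb, Finset.mem_union, Finset.mem_map, Finset.mem_filter, Finset.mem_univ,
      true_and, addRightEmbedding_apply]
    constructor
    · rintro (h | h)
      · exact Or.inl ⟨_, h, by simp⟩
      · exact Or.inr ⟨_, h, by simp⟩
    · rintro (⟨a, ha, rfl⟩ | ⟨a, ha, rfl⟩)
      · left; simpa using ha
      · right; simpa using ha
  rw [h1, Finset.card_union_of_disjoint, Finset.card_map, Finset.card_map,
    Nat.card_eq_fintype_card, Fintype.card_subtype]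
  · ring
  · rw [Finset.disjoint_left]
    simp only [Finset.mem_map, Finset.mem_filter, Finset.mem_univ,
      true_and, addRightEmbedding_apply]
    rintro _ ⟨a, ha, rfl⟩ ⟨b, hb, h⟩
    apply hP
    apply two_mem H hodd
    have : P + P = b - a := by
      rw [← sub_eq_zero] at h ⊢
      rw [← neg_eq_zero, ← h]; abel_nf
    rw [this]
    exact H.sub_mem hb ha

lemma sum_orb (h2 : (2 : F) = 0) (P : (EC c).Point) : ∑ R ∈ orb H P, R = 0 := by
  refine Finset.sum_involution (fun a _ => -a) ?_ ?_ ?_ ?_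
  · intro a _; simp
  · intro a _ ha; exact EC_neg_ne h2 ha
  · intro a ha
    rw [mem_orb] at ha ⊢
    rcases ha with ha | ha
    · right; have := H.neg_mem ha; rwa [neg_sub, sub_eq_neg_add] at this
    · left; have := H.neg_mem ha; rwa [neg_add] at this
  · intro a _; exact neg_neg a

open Classical in
/-- The set of values of the invariant. -/
noncomputable def vals : Finset F := (Finset.univ.filter (· ∉ H)).image (Xf H)

lemma mem_vals {ξ : F} : ξ ∈ vals H ↔ ∃ P, P ∉ H ∧ Xf H P = ξ := by simp [vals]

lemma card_vals (h2 : (2 : F) = 0) (hodd : Odd (Nat.card (EC c).Point)) :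
    (vals H).card * (2 * Nat.card H) + Nat.card H = Nat.card (EC c).Point := by
  classical
  have h1 := Finset.card_eq_sum_card_image (Xf H) (Finset.univ.filter (· ∉ H))
  have h3 : ∀ ξ ∈ (Finset.univ.filter (· ∉ H)).image (Xf H),
      ((Finset.univ.filter (· ∉ H)).filter fun P => Xf H P = ξ).card = 2 * Nat.card H := by
    intro ξ hξ
    obtain ⟨P, hP, rfl⟩ := (mem_vals H).1 hξ
    rw [← card_orb H hodd hP]
    congr 1
    ext R
    simp only [Finset.mem_filter, Finset.mem_univ, true_and]
    constructor
    · rintro ⟨hR, h⟩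
      exact (mem_orb H).2 ((Xf_iff H h2 hodd hP hR).1 h)
    · intro h
      have hR := orb_notMem H hP h
      exact ⟨hR, (Xf_iff H h2 hodd hP hR).2 ((mem_orb H).1 h)⟩
  rw [Finset.sum_congr rfl h3, Finset.sum_const, smul_eq_mul] at h1
  rw [vals, ← h1]
  have h4 := Finset.card_filter_add_card_filter_not (s := (Finset.univ : Finset (EC c).Point)) (· ∈ H)
  rw [Nat.card_eq_fintype_card, Fintype.card_subtype, Nat.card_eq_fintype_card,
    ← Finset.card_univ, ← h4, add_comm]
end Velu
end LRCEll

namespace LRCEll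
open WeierstrassCurve WeierstrassCurve.Affine Polynomial

section Assembly
universe u
variable {F : Type u} [Field F] {c : F}

lemma ev_smul {W : Affine F} (P : Aff W) (p : F[X]) (f : W.CoordinateRing) :
    ev P (p • f) = p.eval (xc P.1) * ev P f := evxy_smul _ _ _

lemma TT_LL {W : Affine F} {n t : ℕ} {Wd : Submodule F W.CoordinateRing} (hW : Wd ≤ LL W n)
    (p q : F[X]) (hp : p.natDegree ≤ n) (hq : q.natDegree ≤ n) (ht : 1 ≤ t)
    (x : (Fin t → Wd) × F) :
    TT Wd (p • 1) (q • 1) t x ∈ LL W (n * t) := by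
  simp only [TT, LinearMap.coe_mk, AddHom.coe_mk]
  refine Submodule.add_mem _ (Submodule.sum_mem _ fun i _ => ?_) (Submodule.smul_mem _ _ ?_)
  · have h1 : (p • (1 : W.CoordinateRing)) ^ (i : ℕ) * (q • 1) ^ (t - 1 - i) * (x.1 i : W.CoordinateRing)
        = (p ^ (i : ℕ) * q ^ (t - 1 - i)) • (x.1 i : W.CoordinateRing) := by
      rw [_root_.smul_pow, _root_.smul_pow, one_pow, one_pow, smul_mul_smul_comm, one_mul, smul_mul_assoc, one_mul]
    rw [h1]
    have h2 : (p ^ (i : ℕ) * q ^ (t - 1 - i)).natDegree ≤ n * (t - 1) := by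
      refine natDegree_mul_le.trans ?_
      have h3 : (p ^ (i : ℕ)).natDegree ≤ i * n := natDegree_pow_le.trans (Nat.mul_le_mul_left _ hp)
      have h4 : (q ^ (t - 1 - i)).natDegree ≤ (t - 1 - i) * n :=
        natDegree_pow_le.trans (Nat.mul_le_mul_left _ hq)
      refine (add_le_add h3 h4).trans ?_
      rw [← add_mul, mul_comm]
      exact Nat.mul_le_mul_left _ (by omega)
    have h5 := poly_smul_LL (hW (x.1 i).2) h2
    have h6 : n + n * (t - 1) = n * t := by
      obtain ⟨k, rfl⟩ := Nat.exists_eq_add_of_le' ht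
      simp; ring
    rwa [h6] at h5
  · rw [_root_.smul_pow, one_pow]
    apply poly_LL
    refine natDegree_pow_le.trans ?_
    rw [mul_comm]
    exact Nat.mul_le_mul_right _ hq

variable [DecidableEq F]

/-- Lift a set of points to affine points. -/
def lft {W : Affine F} (S : Finset W.Point) : Finset (Aff W) := S.subtype (· ≠ 0)

lemma mem_lft {W : Affine F} {S : Finset W.Point} {P : Aff W} : P ∈ lft S ↔ P.1 ∈ S :=
  Finset.mem_subtype

lemma card_lft {W : Affine F} {S : Finset W.Point} (hS : ∀ P ∈ S, P ≠ 0) : (lft S).card = S.card := by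
  rw [lft, Finset.card_subtype, Finset.filter_true_of_mem hS]

lemma sum_lft {W : Affine F} {S : Finset W.Point} (hS : ∀ P ∈ S, P ≠ 0) :
    ∑ P ∈ lft S, P.1 = ∑ P ∈ S, P := by
  rw [lft]
  exact Finset.sum_subtype_of_mem (fun P => P) hS

variable [Fintype (EC c).Point] (H : AddSubgroup (EC c).Point)

theorem assembly (h2 : (2 : F) = 0) (hodd : Odd (Nat.card (EC c).Point)) {Q : (EC c).Point} (hQ : Q ∉ H)
    {h r t m : ℕ} (hh : Nat.card H = h) (B : Finset (EC c).Point) (hB : B ⊆ orb H Q)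
    (hBr : B.card + r = 2 * h) (hr : 1 ≤ r) (ht : 1 ≤ t) (htm : t < m) (hm : m + 1 ≤ (vals H).card)
    (hkey : ∀ P, P ∉ H → P ∉ orb H Q → ∀ Z ⊆ orb H P, Z.card = r →
      ∑ R ∈ Z, R + ∑ R ∈ B, R ≠ 0) :
    ∃ C : Submodule F (Fin (2 * h * m) → F), Module.finrank F C = r * t + 1 ∧
      MinDistEq C (2 * h * (m - t)) ∧ IsLRC C r (2 * h - r + 1) := by
  have hne : ∀ {R : (EC c).Point}, R ∉ H → R ≠ 0 := fun hR h0 => hR (h0 ▸ H.zero_mem)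
  have hhpos : 1 ≤ h := hh ▸ Nat.card_pos
  have hB0 : ∀ R ∈ B, R ≠ 0 := fun R hR => hne (orb_notMem H hQ (hB hR))
  -- zeros of local functions
  have hloc : ∀ P, P ∉ H → P ∉ orb H Q → ∀ G ∈ LB (EC c) h (lft B), G ≠ 0 →
      ∀ Z ⊆ orb H P, (∀ R ∈ lft Z, ev R G = 0) → Z.card < r := by
    intro P hP hPQ G hG hG0 Z hZ hZ0
    by_contra! hcon
    obtain ⟨Z', hZ', hc⟩ := Finset.exists_subset_card_eq hcon
    have hd : Disjoint Z' B := by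
      rw [Finset.disjoint_left]
      intro R hR hRB
      have h1 := (mem_orb H).1 (hZ (hZ' hR))
      have h3 := (mem_orb H).1 (hB hRB)
      have hRn := orb_notMem H hP (hZ (hZ' hR))
      rw [← Xf_iff H h2 hodd hP hRn] at h1
      rw [← Xf_iff H h2 hodd hQ hRn] at h3
      exact hPQ ((mem_orb H).2 ((Xf_iff H h2 hodd hQ hP).1 (h1.symm.trans h3)))
    have hU0 : ∀ R ∈ Z' ∪ B, R ≠ 0 := by
      intro R hR
      rcases Finset.mem_union.1 hR with h | h
      · exact hne (orb_notMem H hP (hZ (hZ' h)))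
      · exact hB0 R h
    have := LL_abel (mem_LB.1 hG).1 hG0 (lft (Z' ∪ B)) (by
      intro R hR
      rw [mem_lft, Finset.mem_union] at hR
      rcases hR with h | h
      · exact hZ0 R (mem_lft.2 (hZ' h))
      · exact (mem_LB.1 hG).2 R (mem_lft.2 h)) (by
      rw [card_lft hU0, Finset.card_union_of_disjoint hd, hc]; omega)
    rw [sum_lft hU0, Finset.sum_union hd] at this
    exact hkey P hP hPQ Z' (hZ'.trans hZ) hc this
  have hQv : Xf H Q ∈ vals H := (mem_vals H).2 ⟨Q, hQ, rfl⟩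
  set V := (vals H).erase (Xf H Q) with hV
  have hVc : m ≤ V.card := by rw [hV, Finset.card_erase_of_mem hQv]; omega
  let ξ : Fin m → F := fun j => (V.equivFin.symm (Fin.castLE hVc j)).1
  have hξinj : Function.Injective ξ := by
    intro a b hab
    exact Fin.castLE_injective _ (V.equivFin.symm.injective (Subtype.ext hab))
  have hξV : ∀ j, ξ j ∈ V := fun j => (V.equivFin.symm (Fin.castLE hVc j)).2
  have hξ : ∀ j, ∃ P, P ∉ H ∧ Xf H P = ξ j := fun j =>
    (mem_vals H).1 (Finset.mem_of_mem_erase (hξV j))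
  choose P hPH hPξ using hξ
  have hPQ : ∀ j, P j ∉ orb H Q := by
    intro j hj
    rw [mem_orb, ← Xf_iff H h2 hodd hQ (hPH j), hPξ] at hj
    exact (Finset.mem_erase.1 (hξV j)).1 hj
  have hoc : ∀ j, (orb H (P j)).card = 2 * h := fun j => by rw [card_orb H hodd (hPH j), hh]
  let pt : Fin (2 * h) → Fin m → (EC c).Point := fun i j =>
    ((orb H (P j)).equivFinOfCardEq (hoc j)).symm i
  have hpt : ∀ i j, pt i j ∈ orb H (P j) := fun i j =>
    (((orb H (P j)).equivFinOfCardEq (hoc j)).symm i).2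
  have hptH : ∀ i j, pt i j ∉ H := fun i j => orb_notMem H (hPH j) (hpt i j)
  have hXpt : ∀ i j, Xf H (pt i j) = ξ j := by
    intro i j
    rw [← hPξ, Xf_iff H h2 hodd (hPH j) (hptH i j)]
    exact (mem_orb H).1 (hpt i j)
  have hptinj : ∀ j, Function.Injective fun i => pt i j := by
    intro j a b hab
    exact ((orb H (P j)).equivFinOfCardEq (hoc j)).symm.injective (Subtype.ext hab)
  let φ : Fin (2 * h) × Fin m → (EC c).CoordinateRing →ₐ[F] F := fun y =>
    ev ⟨pt y.1 y.2, hne (hptH _ _)⟩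
  have hdegw : (wp' H (Xf H Q)).natDegree ≤ h := hh ▸ (wp'_deg H h2 _).1.le
  have hdegv : (vp H).natDegree ≤ h := by rw [← hh, ← vp_deg H]; omega
  have hwmem : wp' H (Xf H Q) • (1 : (EC c).CoordinateRing) ∈ LB (EC c) h (lft B) := by
    refine mem_LB.2 ⟨poly_LL hdegw, fun R hR => ?_⟩
    have hR' := hB (mem_lft.1 hR)
    have hRn := orb_notMem H hQ hR'
    rw [ev_smul, wp'_eval H h2 hRn, (Xf_iff H h2 hodd hQ hRn).2 ((mem_orb H).1 hR')]
    ring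
  have hfr : Module.finrank F (LB (EC c) h (lft B)) = r := by
    have h1 := finrank_LB_ge (W := EC c) hhpos (lft B)
    rw [card_lft hB0] at h1
    refine le_antisymm ?_ (by omega)
    obtain ⟨Z, hZ, hc⟩ := Finset.exists_subset_card_eq (s := orb H (P ⟨0, by omega⟩)) (n := r)
      (by rw [hoc]; omega)
    have hZ0 : ∀ R ∈ Z, R ≠ 0 := fun R hR => hne (orb_notMem H (hPH _) (hZ hR))
    rw [← hc, ← card_lft hZ0]
    apply finrank_LB_le
    intro f hf hf0
    by_contra hne0
    have := hloc _ (hPH _) (hPQ _) f hf hne0 Z hZ hf0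
    omega
  refine code_layer φ (LB (EC c) h (lft B)) hfr (wp' H (Xf H Q) • 1) (vp H • 1) hwmem
    (fun j => ξ j - Xf H Q) ?_ ?_ ?_ ?_ hr (by omega) ht htm ?_ ?_
  · intro a b hab
    exact hξinj (sub_left_injective hab)
  · intro j
    exact sub_ne_zero.2 (Finset.mem_erase.1 (hξV j)).1
  · intro i j
    simp only [φ]
    rw [ev_smul, ev_smul, wp'_eval H h2 (hptH i j), hXpt, mul_assoc]
  · intro i j
    simp only [φ]
    rw [ev_smul, map_one, mul_one]
    exact vp_eval H (hptH i j) h2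
  · intro j G hG hG0
    have := hloc _ (hPH j) (hPQ j) G hG hG0
      ((Finset.univ.filter fun i => φ (i, j) G = 0).map ⟨_, hptinj j⟩) (by
        intro R hR
        obtain ⟨i, -, rfl⟩ := Finset.mem_map.1 hR
        exact hpt i j) (by
        intro R hR
        obtain ⟨i, hi, hR⟩ := Finset.mem_map.1 (mem_lft.1 hR)
        have hi := (Finset.mem_filter.1 hi).2
        have : R = ⟨pt i j, hne (hptH _ _)⟩ := Subtype.ext hR.symm
        rw [this]; exact hi)
    rwa [Finset.card_map] at this
  · intro x hx
    have hinj : Function.Injective fun y : Fin (2 * h) × Fin m =>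
        (⟨pt y.1 y.2, hne (hptH _ _)⟩ : Aff (EC c)) := by
      rintro ⟨i, j⟩ ⟨i', j'⟩ hy
      have h1 : pt i j = pt i' j' := congrArg Subtype.val hy
      have hj : j = j' := by
        apply hξinj
        rw [← hXpt i j, h1, hXpt]
      subst hj
      rw [hptinj j h1]
    have := LL_zeros (TT_LL (inf_le_left : LB (EC c) h (lft B) ≤ LL (EC c) h) _ _ hdegw hdegv ht x) hx
      ((Finset.univ.filter fun y => φ y (TT (LB (EC c) h (lft B)) (wp' H (Xf H Q) • 1) (vp H • 1) t x) = 0).map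
        ⟨_, hinj⟩) (by
        intro R hR
        obtain ⟨y, hy, rfl⟩ := Finset.mem_map.1 hR
        exact (Finset.mem_filter.1 hy).2)
    rw [Finset.card_map] at this
    rw [mul_assoc]
    exact this

lemma sum_ne (hodd : Odd (Nat.card (EC c).Point)) {Q P a A A' : (EC c).Point} (hQ : Q ∉ H)
    (ha : a ∈ H) (hPQ : P ∉ orb H Q) (hA : A ∈ orb H P) (hA' : A' ∈ orb H P) :
    A + A' ≠ Q + (Q + a) := by
  rw [mem_orb] at hA hA' hPQ
  push Not at hPQ
  intro he
  rcases hA with hA | hA <;> rcases hA' with hA' | hA'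
  · apply hPQ.1
    apply two_mem H hodd
    have := H.sub_mem ha (H.add_mem hA hA')
    convert this using 1
    rw [← sub_eq_zero] at he
    rw [← sub_eq_zero, ← he]
    abel
  · apply hQ
    apply two_mem H hodd
    have := H.sub_mem (H.add_mem hA hA') ha
    convert this using 1
    rw [← sub_eq_zero] at he
    rw [← sub_eq_zero, ← neg_eq_zero, ← he]
    abel
  · apply hQ
    apply two_mem H hodd
    have := H.sub_mem (H.add_mem hA hA') ha
    convert this using 1
    rw [← sub_eq_zero] at he
    rw [← sub_eq_zero, ← neg_eq_zero, ← he]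
    abel
  · apply hPQ.2
    apply two_mem H hodd
    have := H.sub_mem (H.add_mem hA hA') ha
    convert this using 1
    rw [← sub_eq_zero] at he
    rw [← sub_eq_zero, ← neg_eq_zero, ← he]
    abel

end Assembly
theorem main_thm (s : ℕ) (hs : 0 < s) (q : ℕ) (hq : q = 2 ^ (2 * s))
    (h : ℕ) (hh : 3 ≤ h) (hdvd : h ∣ q + 2 ^ (s + 1) + 1)
    (t m : ℕ) (ht : 1 ≤ t) (htm : t < m)
    (hm : (m : ℚ) ≤ ((q : ℚ) + 2 ^ (s + 1) + 1 - (h : ℚ)) / (2 * (h : ℚ)) - 1)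
    (F : Type*) [Field F] [Fintype F] [DecidableEq F] (hF : Fintype.card F = q) :
    ExistsOptimalLRC F (2 * h * m) ((2 * h - 2) * t + 1) (2 * h * (m - t)) (2 * h - 2) 3 ∧
    ExistsOptimalLRC F (2 * h * m) (2 * t + 1) (2 * h * (m - t)) 2 (2 * h - 1) := by
  subst hq
  obtain ⟨h2, c, hN⟩ := exists_curve s hs hF
  have hfin : Finite (EC c).Point := Nat.finite_of_card_ne_zero (by rw [hN]; exact Nat.succ_ne_zero _)
  have : Fintype (EC c).Point := Fintype.ofFinite _
  have hodd : Odd (Nat.card (EC c).Point) := by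
    rw [hN]
    refine Even.add_one (Even.add ?_ ?_)
    · exact (even_two.pow_of_ne_zero (by omega))
    · exact (even_two.pow_of_ne_zero (by omega))
  obtain ⟨H, hH⟩ := exists_addSubgroup_card h (by omega) (EC c).Point (by rw [hN]; exact hdvd)
  have hv := card_vals H h2 hodd
  have hm' : m + 1 ≤ (vals H).card := by
    rw [hH, hN] at hv
    have hv' : ((vals H).card : ℚ) * (2 * h) + h = 2 ^ (2 * s) + 2 ^ (s + 1) + 1 := by
      exact_mod_cast hv
    have hpos : (0 : ℚ) < 2 * h := by
      have : (0 : ℚ) < h := by exact_mod_cast (by omega : 0 < h)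
      linarith
    have h1 : (m : ℚ) + 1 ≤ ((vals H).card : ℚ) := by
      have : ((vals H).card : ℚ) = (((2 ^ (2 * s) : ℕ) : ℚ) + 2 ^ (s + 1) + 1 - (h : ℚ)) / (2 * (h : ℚ)) := by
        rw [eq_div_iff hpos.ne']
        push_cast
        linarith
      linarith
    exact_mod_cast h1
  obtain ⟨ξ, hξ⟩ := Finset.card_pos.1 (by omega : 0 < (vals H).card)
  obtain ⟨Q, hQ, -⟩ := (mem_vals H).1 hξ
  obtain ⟨a, ha⟩ := Finset.card_pos.1 (by have := card_Hs H; omega : 0 < (Hs H).card)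
  rw [mem_Hs] at ha
  have hQU : Q ≠ Q + a := fun h => ha.2 (by simpa using h)
  have hsub : {Q, Q + a} ⊆ orb H Q := by
    intro R hR
    rw [Finset.mem_insert, Finset.mem_singleton] at hR
    rw [mem_orb]
    left
    rcases hR with rfl | rfl
    · simp
    · simpa using ha.1
  have hcp : ({Q, Q + a} : Finset (EC c).Point).card = 2 := Finset.card_pair hQU
  have hsdiff : ∀ P, ∀ T ⊆ orb H P, ∑ R ∈ orb H P \ T, R = - ∑ R ∈ T, R := by
    intro P T hT
    have := Finset.sum_sdiff (f := fun R => R) hT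
    rw [sum_orb H h2] at this
    exact eq_neg_of_add_eq_zero_left this
  have hcard : ∀ P, P ∉ H → (orb H P).card = 2 * h := fun P hP => by rw [card_orb H hodd hP, hH]
  obtain ⟨t', rfl⟩ : ∃ t', m = t + t' := ⟨m - t, by omega⟩
  obtain ⟨h', rfl⟩ : ∃ h', h = h' + 3 := ⟨h - 3, by omega⟩
  constructor
  · obtain ⟨C, hC1, hC2, hC3⟩ := assembly H h2 hodd hQ hH {Q, Q + a} hsub
      (r := 2 * (h' + 3) - 2) (by rw [hcp]; omega) (by omega) ht htm hm' (by
      intro P hP hPQ Z hZ hZc h0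
      have hc2 : (orb H P \ Z).card = 2 := by
        rw [Finset.card_sdiff_of_subset hZ, hcard P hP, hZc]; omega
      obtain ⟨A, A', hAA, he⟩ := Finset.card_eq_two.1 hc2
      have hA : A ∈ orb H P \ Z := by rw [he]; simp
      have hA' : A' ∈ orb H P \ Z := by rw [he]; simp
      have h3 := hsdiff P Z hZ
      rw [he, Finset.sum_pair hAA] at h3
      rw [Finset.sum_pair hQU] at h0
      apply sum_ne H hodd hQ ha.1 hPQ (Finset.mem_sdiff.1 hA).1 (Finset.mem_sdiff.1 hA').1
      rw [h3]
      exact (eq_neg_of_add_eq_zero_right h0).symm)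
    refine ⟨C, hC1, hC2, ?_, ?_⟩
    · convert hC3 using 1; omega
    · unfold SingletonOptimal
      have e1 : 2 * (h' + 3) - 2 = 2 * h' + 4 := by omega
      have e2 : ((2 * h' + 4) * t + 1 + (2 * h' + 4) - 1) / (2 * h' + 4) = t + 1 := by
        rw [show (2 * h' + 4) * t + 1 + (2 * h' + 4) - 1 = (2 * h' + 4) * (t + 1) by
          rw [mul_add]; omega]
        exact Nat.mul_div_cancel_left _ (by omega)
      rw [e1, e2, Nat.add_sub_cancel_left]
      push_cast
      ring
  · obtain ⟨C, hC1, hC2, hC3⟩ := assembly H h2 hodd hQ hH (orb H Q \ {Q, Q + a})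
      Finset.sdiff_subset
      (r := 2) (by rw [Finset.card_sdiff_of_subset hsub, hcard Q hQ, hcp]; omega) (by omega) ht htm hm' (by
      intro P hP hPQ Z hZ hZc h0
      obtain ⟨A, A', hAA, rfl⟩ := Finset.card_eq_two.1 hZc
      rw [hsdiff Q _ hsub, Finset.sum_pair hAA, Finset.sum_pair hQU] at h0
      exact sum_ne H hodd hQ ha.1 hPQ (hZ (Finset.mem_insert_self _ _))
        (hZ (Finset.mem_insert_of_mem (Finset.mem_singleton_self _))) (eq_of_sub_eq_zero (by
        rw [sub_eq_add_neg]; exact h0)))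
    refine ⟨C, hC1, hC2, ?_, ?_⟩
    · convert hC3 using 1; omega
    · unfold SingletonOptimal
      have e2 : (2 * t + 1 + 2 - 1) / 2 = t + 1 := by omega
      have e1 : 2 * (h' + 3) - 1 = 2 * h' + 5 := by omega
      rw [e1, e2, Nat.add_sub_cancel_left]
      push_cast
      ring
end LRCEll

/-- For `q = 2^(2s)` and a divisor `h ≥ 3` of `q + 2^(s+1) + 1`,
for all `1 ≤ t < m ≤ (q + 2^(s+1) + 1 - h)/(2h) - 1`, there exist an optimal
`(2h-2, 3)`-LRC with parameters `[2hm, (2h-2)t + 1, 2h(m-t)]_q` and an optimal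
`(2, 2h-1)`-LRC with parameters `[2hm, 2t + 1, 2h(m-t)]_q`. -/
theorem stmt_1 (s : ℕ) (hs : 0 < s) (q : ℕ) (hq : q = 2 ^ (2 * s))
    (h : ℕ) (hh : 3 ≤ h) (hdvd : h ∣ q + 2 ^ (s + 1) + 1)
    (t m : ℕ) (ht : 1 ≤ t) (htm : t < m)
    (hm : (m : ℚ) ≤ ((q : ℚ) + 2 ^ (s + 1) + 1 - (h : ℚ)) / (2 * (h : ℚ)) - 1)
    (F : Type*) [Field F] [Fintype F] [DecidableEq F] (hF : Fintype.card F = q) :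
    ExistsOptimalLRC F (2 * h * m) ((2 * h - 2) * t + 1) (2 * h * (m - t)) (2 * h - 2) 3 ∧
    ExistsOptimalLRC F (2 * h * m) (2 * t + 1) (2 * h * (m - t)) 2 (2 * h - 1) := by
  exact LRCEll.main_thm s hs q hq h hh hdvd t m ht htm hm F hF
end

section
/- Let s be a positive integer, q = 2^{2s}, let h₀ be a positive divisor of 2^{s} + 1, and set h = h₀². Then for all integers t, m with 1 ≤ t < m ≤ ⌈(q + 2^{s+1} + 1 − 3h)/(3h)⌉, there exists an optimal (3h−2, 3)-LRC over F_q with parameters [3hm, (3h−2)t + 1, 3h(m−t)]_q, and there exists an optimal (2, 3h−1)-LRC over F_q with parameters [3hm, 2t + 1, 3h(m−t)]_q. -/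
universe u

section

theorem lrc_abstract {F : Type*} [Field F] [DecidableEq F] {X : Type*} [DecidableEq X]
    (z : X → F) (W : Submodule F (X → F)) [FiniteDimensional F W] (N0 r δ t m : ℕ)
    (hr : Module.finrank F W = r) (hN : N0 + 1 = r + δ) (hr1 : 1 ≤ r) (hδ : 1 ≤ δ)
    (htm : t < m) (h1 : (fun _ => 1 : X → F) ∈ W) (T : Finset F) (hT : T.card = m)
    (Xf : F → Finset X) (hXc : ∀ ζ ∈ T, (Xf ζ).card = N0)
    (hXz : ∀ ζ ∈ T, ∀ P ∈ Xf ζ, z P = ζ)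
    (hW : ∀ w ∈ W, w ≠ 0 → ∀ ζ ∈ T, ((Xf ζ).filter (fun P => w P = 0)).card < r)
    (hV : ∀ (w : Fin t → X → F) (c : F), (∀ j, w j ∈ W) →
      (∃ P ∈ T.biUnion Xf, ∑ j : Fin t, z P ^ (j : ℕ) * w j P + c * z P ^ t ≠ 0) →
      ((T.biUnion Xf).filter (fun P => ∑ j : Fin t, z P ^ (j : ℕ) * w j P + c * z P ^ t = 0)).card
        ≤ N0 * t) :
    ExistsOptimalLRC F (N0 * m) (r * t + 1) (N0 * (m - t)) r δ := by
  classical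
  have hdisj : ∀ S ⊆ T, (S.biUnion Xf).card = N0 * S.card := by
    intro S hS
    rw [Finset.card_biUnion, Finset.sum_congr rfl (fun ζ h => hXc ζ (hS h))]
    · simp [mul_comm]
    · intro a ha b hb hab
      change Disjoint (Xf a) (Xf b)
      rw [Finset.disjoint_left]
      intro P hP hP'
      exact hab ((hXz a (hS ha) P hP).symm.trans (hXz b (hS hb) P hP'))
  set Ω := T.biUnion Xf with hΩ
  have hΩc : Ω.card = N0 * m := by rw [hΩ, hdisj T subset_rfl, hT]
  let e : Fin (N0 * m) ≃ Ω := (Ω.equivFin.trans (finCongr hΩc)).symm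
  have hcount : ∀ p : X → Prop, ∀ [DecidablePred p], ∀ [DecidablePred fun i => p (e i)],
      (Finset.univ.filter (fun i => p (e i))).card = (Ω.filter p).card := by
    intro p _ _
    refine Finset.card_bij (fun i _ => (e i : X)) ?_ ?_ ?_
    · intro i hi; simp at hi ⊢; exact hi
    · intro i _ j _ hij; exact e.injective (Subtype.ext hij)
    · intro P hP
      simp only [Finset.mem_filter] at hP
      exact ⟨e.symm ⟨P, hP.1⟩, by simp [hP.2], by simp⟩
  let ev : ((Fin t → W) × F) → X → F := fun a P =>
    ∑ j : Fin t, z P ^ (j : ℕ) * (a.1 j : X → F) P + a.2 * z P ^ t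
  let Φ : ((Fin t → W) × F) →ₗ[F] (Fin (N0 * m) → F) :=
    { toFun := fun a i => ev a (e i)
      map_add' := by
        intro a b; ext i
        simp only [ev, Prod.fst_add, Prod.snd_add, Pi.add_apply, Submodule.coe_add, mul_add,
          Finset.sum_add_distrib]; ring
      map_smul' := by
        intro k a; ext i
        simp only [ev, Prod.smul_fst, Prod.smul_snd, Pi.smul_apply, Submodule.coe_smul, smul_eq_mul,
          RingHom.id_apply, mul_add, Finset.mul_sum]
        congr 1
        · exact Finset.sum_congr rfl (fun _ _ => by ring)
        · ring }
  have hΦ : ∀ a i, Φ a i = ev a (e i) := fun _ _ => rfl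
  -- restriction to a fibre
  let g : ((Fin t → W) × F) → F → X → F := fun a ζ =>
    ∑ j : Fin t, ζ ^ (j : ℕ) • (a.1 j : X → F) + (a.2 * ζ ^ t) • (fun _ => 1 : X → F)
  have hgW : ∀ a ζ, g a ζ ∈ W := by
    intro a ζ
    exact W.add_mem (W.sum_mem fun j _ => W.smul_mem _ (a.1 j).2) (W.smul_mem _ h1)
  have hg : ∀ a P, ev a P = g a (z P) P := by
    intro a P; simp [ev, g]
  have hmemΩ : ∀ P ∈ Ω, z P ∈ T ∧ P ∈ Xf (z P) := by
    intro P hP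
    simp only [hΩ, Finset.mem_biUnion] at hP
    obtain ⟨ζ, hζ, hP⟩ := hP
    rw [hXz ζ hζ P hP]; exact ⟨hζ, hP⟩
  have hinΩ : ∀ ζ ∈ T, ∀ P ∈ Xf ζ, P ∈ Ω := fun ζ hζ P hP =>
    Finset.mem_biUnion.2 ⟨ζ, hζ, hP⟩
  have hN0 : r ≤ N0 := by omega
  have hX : Nonempty X := by
    have hpos : 0 < Ω.card := by rw [hΩc]; exact Nat.mul_pos (by omega) (by omega)
    obtain ⟨P, _⟩ := Finset.card_pos.1 hpos
    exact ⟨P⟩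
  have hinj : Function.Injective Φ := by
    rw [injective_iff_map_eq_zero]
    intro a ha
    have hev : ∀ P ∈ Ω, ev a P = 0 := by
      intro P hP
      have := congrFun ha (e.symm ⟨P, hP⟩)
      simpa [hΦ] using this
    have hg0 : ∀ ζ ∈ T, g a ζ = 0 := by
      intro ζ hζ
      by_contra hne
      have := hW _ (hgW a ζ) hne ζ hζ
      rw [Finset.filter_true_of_mem, hXc ζ hζ] at this
      · omega
      · intro P hP
        have h2 := hev P (hinΩ ζ hζ P hP)
        rwa [hg, hXz ζ hζ P hP] at h2
    have key : ∀ P, (∀ j, (a.1 j : X → F) P = 0) ∧ a.2 = 0 := by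
      intro P
      let p : Polynomial F := ∑ j : Fin t, Polynomial.C ((a.1 j : X → F) P) * Polynomial.X ^ (j : ℕ)
        + Polynomial.C a.2 * Polynomial.X ^ t
      have hp : p = 0 := by
        refine Polynomial.eq_zero_of_natDegree_lt_card_of_eval_eq_zero' p T ?_ ?_
        · intro ζ hζ
          have := congrFun (hg0 ζ hζ) P
          simp only [g, Pi.add_apply, Finset.sum_apply, Pi.smul_apply, smul_eq_mul, Pi.zero_apply] at this
          simp only [p, Polynomial.eval_add, Polynomial.eval_finset_sum, Polynomial.eval_mul,
            Polynomial.eval_C, Polynomial.eval_pow, Polynomial.eval_X]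
          rw [← this]
          simp [mul_comm]
        · rw [hT]
          refine lt_of_le_of_lt ?_ htm
          refine Polynomial.natDegree_add_le_of_degree_le ?_ (Polynomial.natDegree_C_mul_X_pow_le _ _)
          refine Polynomial.natDegree_sum_le_of_forall_le _ _ (fun j _ => ?_)
          exact (Polynomial.natDegree_C_mul_X_pow_le _ _).trans j.2.le
      constructor
      · intro j
        have := congrArg (fun p => Polynomial.coeff p (j : ℕ)) hp
        simp only [p, Polynomial.coeff_add, Polynomial.finset_sum_coeff, Polynomial.coeff_C_mul_X_pow,
          Polynomial.coeff_zero] at this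
        rw [if_neg j.2.ne, Finset.sum_eq_single j] at this
        · simpa using this
        · intro b _ hb
          rw [if_neg]; intro h; exact hb (Fin.ext h.symm)
        · simp
      · have := congrArg (fun p => Polynomial.coeff p t) hp
        simp only [p, Polynomial.coeff_add, Polynomial.finset_sum_coeff, Polynomial.coeff_C_mul_X_pow,
          Polynomial.coeff_zero] at this
        rw [Finset.sum_eq_zero] at this
        · simpa using this
        · intro b _
          rw [if_neg]; exact b.2.ne'
    refine Prod.ext ?_ (key hX.some).2
    funext j
    refine Subtype.ext ?_
    funext P
    exact (key P).1 j
  refine ⟨LinearMap.range Φ, ?_, ⟨?_, ?_⟩, ?_, ?_⟩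
  · rw [LinearMap.finrank_range_of_inj hinj, Module.finrank_prod, Module.finrank_pi_fintype]
    simp [hr, mul_comm]
  · rintro _ ⟨a, rfl⟩ hne
    have h2 := hV (fun j => a.1 j) a.2 (fun j => (a.1 j).2) (by
      by_contra hcon
      push Not at hcon
      apply hne
      ext i
      exact hcon _ (e i).2)
    have h3 : hammingWt (Φ a) = (Ω.filter (fun P => ev a P ≠ 0)).card :=
      hcount (fun P => ev a P ≠ 0)
    have h4 := Finset.card_filter_add_card_filter_not (s := Ω) (fun P => ev a P = 0)
    have h5 : (Ω.filter (fun P => ev a P = 0)).card ≤ N0 * t := h2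
    rw [h3, Nat.mul_sub]
    rw [hΩc] at h4
    simp only [ne_eq]
    omega
  · obtain ⟨T', hT', hT'c⟩ := Finset.exists_subset_card_eq (show t ≤ T.card by omega)
    let p : Polynomial F := ∏ ζ ∈ T', (Polynomial.X - Polynomial.C ζ)
    have hpm : p.Monic := Polynomial.monic_prod_of_monic _ _ (fun ζ _ => Polynomial.monic_X_sub_C ζ)
    have hpd : p.natDegree = t := by
      rw [Polynomial.natDegree_prod_of_monic _ _ (fun ζ _ => Polynomial.monic_X_sub_C ζ)]
      simp [hT'c]
    let a : (Fin t → W) × F := (fun j => p.coeff j • ⟨_, h1⟩, 1)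
    have hev : ∀ P, ev a P = ∏ ζ ∈ T', (z P - ζ) := by
      intro P
      have : p.eval (z P) = ∏ ζ ∈ T', (z P - ζ) := by simp [p, Polynomial.eval_prod]
      rw [← this, Polynomial.eval_eq_sum_range, hpd, Finset.sum_range_succ]
      have hc : p.coeff t = 1 := by rw [← hpd]; exact hpm
      rw [hc, Finset.sum_range]
      simp [ev, a, mul_comm]
    have hwt : hammingWt (Φ a) = N0 * (m - t) := by
      have h3 : hammingWt (Φ a) = (Ω.filter (fun P => ev a P ≠ 0)).card :=
        hcount (fun P => ev a P ≠ 0)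
      rw [h3]
      have : Ω.filter (fun P => ev a P ≠ 0) = (T \ T').biUnion Xf := by
        ext P
        simp only [Finset.mem_filter, hev, Finset.prod_ne_zero_iff, Finset.mem_biUnion,
          Finset.mem_sdiff, sub_ne_zero]
        constructor
        · rintro ⟨hP, h⟩
          obtain ⟨h5, h6⟩ := hmemΩ P hP
          exact ⟨z P, ⟨h5, fun h7 => h _ h7 rfl⟩, h6⟩
        · rintro ⟨ζ, ⟨h5, h6⟩, h7⟩
          refine ⟨hinΩ ζ h5 P h7, fun a ha hza => h6 ?_⟩
          rw [hXz ζ h5 P h7] at hza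
          rwa [hza]
      rw [this, hdisj _ Finset.sdiff_subset, Finset.card_sdiff_of_subset hT', hT, hT'c]
    refine ⟨Φ a, ⟨a, rfl⟩, ?_, hwt⟩
    intro h0
    rw [h0] at hwt
    have : 0 < N0 * (m - t) := Nat.mul_pos (by omega) (by omega)
    simp [hammingWt] at hwt
    omega
  · intro i
    let ζ := z (e i)
    obtain ⟨hζ, hiX⟩ := hmemΩ _ (e i).2
    refine ⟨Finset.univ.filter (fun j => (e j : X) ∈ Xf ζ), by simpa using hiX, ?_, ?_⟩
    · rw [hcount (fun P => P ∈ Xf ζ)]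
      have : Ω.filter (fun P => P ∈ Xf ζ) = Xf ζ := by
        ext P; simp only [Finset.mem_filter]
        exact ⟨fun h => h.2, fun h => ⟨hinΩ _ hζ _ h, h⟩⟩
      rw [this, hXc _ hζ]; omega
    · rintro _ ⟨a, rfl⟩ ⟨j, hj, hne⟩
      simp only [Finset.mem_filter, Finset.mem_univ, true_and] at hj
      have hgne : g a ζ ≠ 0 := by
        intro h0
        apply hne
        rw [hΦ, hg, hXz _ hζ _ hj]
        exact congrFun h0 _
      have h2 := hW _ (hgW a ζ) hgne ζ hζ
      have h4 := Finset.card_filter_add_card_filter_not (s := Xf ζ) (fun P => g a ζ P = 0)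
      rw [hXc _ hζ] at h4
      have h5 : (Finset.univ.filter (fun j => (e j : X) ∈ Xf ζ) |>.filter (fun j => Φ a j ≠ 0)).card
          = ((Xf ζ).filter (fun P => ¬ g a ζ P = 0)).card := by
        rw [Finset.filter_filter]
        have h6 := hcount (fun P => P ∈ Xf ζ ∧ ev a P ≠ 0)
        have h7 : Ω.filter (fun P => P ∈ Xf ζ ∧ ev a P ≠ 0) = (Xf ζ).filter (fun P => ¬ g a ζ P = 0) := by
          ext P; simp only [Finset.mem_filter]
          constructor
          · rintro ⟨_, h8, h9⟩
            rw [hg, hXz _ hζ _ h8] at h9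
            exact ⟨h8, h9⟩
          · rintro ⟨h8, h9⟩
            refine ⟨hinΩ _ hζ _ h8, h8, ?_⟩
            rw [hg, hXz _ hζ _ h8]; exact h9
        rw [← h7, ← h6]
        simp only [hΦ]
      rw [h5]
      omega
  · unfold SingletonOptimal
    have : (r * t + 1 + r - 1) / r = t + 1 := by
      rw [show r * t + 1 + r - 1 = r * (t + 1) by rw [mul_add]; omega]
      exact Nat.mul_div_cancel_left _ (by omega)
    rw [this]
    push_cast [Nat.cast_sub htm.le]
    have : (N0 : ℤ) + 1 = r + δ := by exact_mod_cast hN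
    linear_combination (-(t:ℤ)) * this

end

section

theorem ext_subgroup {A : Type*} [AddCommGroup A] [Finite A] (B : AddSubgroup A) (K : AddSubgroup (A ⧸ B)) :
    Nat.card (K.comap (QuotientAddGroup.mk' B)) = Nat.card B * Nat.card K := by
  rw [← Nat.card_prod]
  exact Nat.card_congr (QuotientAddGroup.preimageMkEquivAddSubgroupProdSet B (K : Set (A ⧸ B)))

theorem ext_p {A : Type*} [AddCommGroup A] [Finite A] (B : AddSubgroup A) (p : ℕ) (hp : p.Prime)
    (hB : Nat.card B = p) (c : A) (hcB : c ∉ B) (hpc : (p : ℤ) • c ∈ B) :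
    ∃ H : AddSubgroup A, (∀ x, x ∈ H ↔ ∃ k : ℤ, x - k • c ∈ B) ∧ Nat.card H = p ^ 2 := by
  have := Fact.mk hp
  have hcord : addOrderOf (c : A ⧸ B) = p := by
    refine addOrderOf_eq_prime ?_ ?_
    · have := (QuotientAddGroup.eq_zero_iff _).2 hpc
      rw [natCast_zsmul] at this; exact this
    · intro h; exact hcB ((QuotientAddGroup.eq_zero_iff c).1 h)
  refine ⟨(AddSubgroup.zmultiples (c : A ⧸ B)).comap (QuotientAddGroup.mk' B), ?_, ?_⟩
  · intro x
    rw [AddSubgroup.mem_comap, AddSubgroup.mem_zmultiples_iff]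
    refine exists_congr fun k => ?_
    rw [← QuotientAddGroup.eq_zero_iff, QuotientAddGroup.mk_sub, QuotientAddGroup.mk_zsmul, sub_eq_zero]
    exact eq_comm
  · rw [ext_subgroup, hB, Nat.card_zmultiples, hcord, pow_two]

/-- stable subgroup of order p -/
theorem stable_p2 {A : Type*} [AddCommGroup A] [Finite A] (ω : A →+ A)
    (hω : ∀ a, a + ω a + ω (ω a) = 0) (p : ℕ) (hp : p.Prime) (hd : p ^ 2 ∣ Nat.card A) :
    ∃ H : AddSubgroup A, (∀ a ∈ H, ω a ∈ H) ∧ Nat.card H = p ^ 2 := by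
  classical
  have := Fact.mk hp
  have hωω : ∀ a, ω (ω a) = - a - ω a := by
    intro a; have := hω a; rw [← sub_eq_zero, ← this]; abel
  obtain ⟨a, ha⟩ := exists_prime_addOrderOf_dvd_card' (G := A) p ((dvd_pow_self p two_ne_zero).trans hd)
  have hpa : (p : ℤ) • a = 0 := by
    rw [natCast_zsmul, ← ha]; exact addOrderOf_nsmul_eq_zero a
  have hcard : Nat.card (AddSubgroup.zmultiples a) = p := by rw [Nat.card_zmultiples, ha]
  by_cases hst : ω a ∈ AddSubgroup.zmultiples a
  · obtain ⟨l, hl⟩ := AddSubgroup.mem_zmultiples_iff.1 hst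
    -- B = <a>
    set B := AddSubgroup.zmultiples a with hB
    have hBst : ∀ b ∈ B, ω b ∈ B := by
      intro b hb
      obtain ⟨k, rfl⟩ := AddSubgroup.mem_zmultiples_iff.1 hb
      rw [map_zsmul]; exact B.zsmul_mem hst k
    have hpol : (p : ℤ) ∣ 1 + l + l ^ 2 := by
      have h1 : (1 + l + l ^ 2) • a = 0 := by
        have := hω a
        rw [← hl, map_zsmul, ← hl, smul_smul] at this
        rw [← this, add_smul, add_smul, one_smul, pow_two]
      rw [← ha]
      exact addOrderOf_dvd_iff_zsmul_eq_zero.2 h1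
    have hpB : ∀ b ∈ B, (p : ℤ) • b = 0 := by
      intro b hb
      obtain ⟨k, rfl⟩ := AddSubgroup.mem_zmultiples_iff.1 hb
      rw [smul_comm, hpa, smul_zero]
    have hidx : p ∣ Nat.card (A ⧸ B) := by
      have h1 := AddSubgroup.card_eq_card_quotient_mul_card_addSubgroup B
      rw [h1, hcard, pow_two] at hd
      exact Nat.dvd_of_mul_dvd_mul_right hp.pos hd
    obtain ⟨b', hb'⟩ := exists_prime_addOrderOf_dvd_card' (G := A ⧸ B) p hidx
    obtain ⟨b, rfl⟩ := QuotientAddGroup.mk_surjective b'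
    have hbB : b ∉ B := by
      intro h
      rw [(QuotientAddGroup.eq_zero_iff b).2 h, addOrderOf_zero] at hb'
      exact hp.one_lt.ne hb'
    have hpb : (p : ℤ) • b ∈ B := by
      rw [← QuotientAddGroup.eq_zero_iff]
      have := addOrderOf_nsmul_eq_zero (b : A ⧸ B)
      rw [hb'] at this
      rw [natCast_zsmul]; exact this
    -- find c ∉ B, p c ∈ B, ω c - μ c ∈ B
    obtain ⟨c, μ, hcB, hpc, hcμ⟩ : ∃ (c : A) (μ : ℤ), c ∉ B ∧ (p : ℤ) • c ∈ B ∧ ω c - μ • c ∈ B := by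
      by_cases h : ω b - l • b ∈ B
      · exact ⟨b, l, hbB, hpb, h⟩
      · refine ⟨ω b - l • b, -1 - l, h, ?_, ?_⟩
        · rw [smul_sub, ← map_zsmul, smul_comm]
          exact B.sub_mem (hBst _ hpb) (B.zsmul_mem hpb _)
        · obtain ⟨k, hk⟩ := hpol
          have : ω (ω b - l • b) - (-1 - l) • (ω b - l • b) = -(k • ((p : ℤ) • b)) := by
            rw [smul_smul, mul_comm, ← hk, map_sub, map_zsmul, hωω]
            module
          rw [this]
          exact B.neg_mem (B.zsmul_mem hpb _)
    obtain ⟨H, hH, hHc⟩ := ext_p B p hp hcard c hcB hpc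
    refine ⟨H, ?_, hHc⟩
    intro x hx
    obtain ⟨k, h1⟩ := (hH x).1 hx
    refine (hH _).2 ⟨k * μ, ?_⟩
    have : ω x - (k * μ) • c = ω (x - k • c) + k • (ω c - μ • c) := by
      rw [map_sub, map_zsmul]; module
    rw [this]
    exact B.add_mem (hBst _ h1) (B.zsmul_mem hcμ _)
  · obtain ⟨H, hH, hHc⟩ := ext_p (AddSubgroup.zmultiples a) p hp hcard (ω a) hst
      (by rw [← map_zsmul, hpa, map_zero]; exact zero_mem _)
    refine ⟨H, ?_, hHc⟩
    intro x hx
    obtain ⟨k, h1⟩ := (hH x).1 hx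
    obtain ⟨j, h2⟩ := AddSubgroup.mem_zmultiples_iff.1 h1
    refine (hH _).2 ⟨j - k, AddSubgroup.mem_zmultiples_iff.2 ⟨-k, ?_⟩⟩
    have : x = j • a + k • ω a := by rw [h2]; abel
    rw [this, map_add, map_zsmul, map_zsmul, hωω]
    module

theorem stable_sq (n : ℕ) : ∀ {A : Type u} [AddCommGroup A] [Finite A] (ω : A →+ A)
    (_ : ∀ a, a + ω a + ω (ω a) = 0) (_ : n ^ 2 ∣ Nat.card A),
    ∃ H : AddSubgroup A, (∀ a ∈ H, ω a ∈ H) ∧ Nat.card H = n ^ 2 := by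
  induction n using Nat.recOnMul with
  | zero =>
    intro A _ _ ω hω hd
    have := Nat.card_pos (α := A)
    simp at hd
    omega
  | one =>
    intro A _ _ ω hω hd
    exact ⟨⊥, by simp, by simp⟩
  | prime p hp =>
    intro A _ _ ω hω hd
    exact stable_p2 ω hω p hp hd
  | mul a b iha ihb =>
    intro A _ _ ω hω hd
    obtain ⟨B, hB, hBc⟩ := iha ω hω ((pow_dvd_pow_of_dvd (Dvd.intro _ rfl) 2).trans hd)
    let ω' : A ⧸ B →+ A ⧸ B := QuotientAddGroup.map B B ω hB
    have hω' : ∀ x : A, ω' (x : A ⧸ B) = (ω x : A) := fun x => rfl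
    obtain ⟨K, hK, hKc⟩ := ihb ω' (by
      intro x
      obtain ⟨x, rfl⟩ := QuotientAddGroup.mk_surjective x
      rw [hω', hω', ← QuotientAddGroup.mk_add, ← QuotientAddGroup.mk_add, hω]; rfl) (by
      have h1 := AddSubgroup.card_eq_card_quotient_mul_card_addSubgroup B
      have hpos := Nat.card_pos (α := B)
      rw [h1, hBc, mul_pow, mul_comm] at hd
      rw [hBc] at hpos
      exact Nat.dvd_of_mul_dvd_mul_right hpos hd)
    refine ⟨K.comap (QuotientAddGroup.mk' B), ?_, ?_⟩
    · intro x hx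
      exact hK _ hx
    · rw [ext_subgroup, hBc, hKc, mul_pow]

end

section

theorem exists_zeta {F : Type*} [Field F] [Fintype F] (s : ℕ)
    (hF : Fintype.card F = 2 ^ (2 * s)) : ∃ ζ : F, ζ ^ 2 + ζ + 1 = 0 := by
  classical
  have h3 : 3 ∣ Fintype.card Fˣ := by
    rw [Fintype.card_units, hF, pow_mul]
    have := Nat.sub_dvd_pow_sub_pow (2 ^ 2) 1 s
    simpa using this
  obtain ⟨g, hg⟩ := exists_prime_orderOf_dvd_card (p := 3) (G := Fˣ) h3
  refine ⟨(g : F), ?_⟩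
  have h1 : (g : F) ^ 3 = 1 := by
    rw [← Units.val_pow_eq_pow_val, ← hg, pow_orderOf_eq_one]; rfl
  have h2 : (g : F) ≠ 1 := by
    intro h
    have : g = 1 := Units.ext h
    rw [this, orderOf_one] at hg
    omega
  have : ((g : F) - 1) * ((g : F) ^ 2 + g + 1) = 0 := by linear_combination h1
  exact (mul_eq_zero.1 this).resolve_left (sub_ne_zero.2 h2)

theorem point_count {F : Type*} [Field F] [Fintype F] [DecidableEq F] [CharP F 2] (s : ℕ)
    (hF : Fintype.card F = 2 ^ (2 * s)) :
    ∃ c : F, (Finset.univ.filter (fun xy : F × F => xy.2 ^ 2 + xy.2 = xy.1 ^ 3 + c)).card + 1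
      = (2 ^ s + 1) ^ 2 := by
  classical
  obtain ⟨ζ, hζ⟩ := exists_zeta s hF
  have h2 : (2 : F) = 0 := CharP.cast_eq_zero F 2
  let p : F →+ F :=
    { toFun := fun y => y ^ 2 + y
      map_zero' := by simp
      map_add' := by intro a b; linear_combination (a * b) * h2 }
  have hp : ∀ y, p y = y ^ 2 + y := fun _ => rfl
  let H := p.range
  have hker : ∀ y, p y = 0 ↔ y = 0 ∨ y = 1 := by
    intro y
    rw [hp, show y ^ 2 + y = y * (y - 1) by linear_combination y * h2, mul_eq_zero, sub_eq_zero]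
  have hkc : Nat.card p.ker = 2 := by
    have : (p.ker : Set F) = {0, 1} := by
      ext y; simp [AddMonoidHom.mem_ker, hker]
    have h3 : Nat.card p.ker = Set.ncard (p.ker : Set F) := rfl
    rw [h3, this, Set.ncard_pair zero_ne_one]
  have hidx : H.index = 2 := by
    have h3 : Nat.card H * H.index = Nat.card F := AddSubgroup.card_mul_index H
    have h4 : Nat.card p.ker * Nat.card H = Nat.card F := by
      rw [← AddSubgroup.card_mul_index p.ker, AddSubgroup.index_ker]
    have hpos : 0 < Nat.card H := Nat.card_pos
    rw [hkc, mul_comm, ← h3] at h4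
    exact (Nat.eq_of_mul_eq_mul_left hpos h4).symm
  let ψ : F → ℤ := fun a => if a ∈ H then 1 else -1
  have hψadd : ∀ a b, ψ (a + b) = ψ a * ψ b := by
    intro a b
    have := AddSubgroup.add_mem_iff_of_index_two hidx (a := a) (b := b)
    simp only [ψ, this]
    by_cases ha : a ∈ H <;> by_cases hb : b ∈ H <;> simp [ha, hb]
  have hψp : ∀ y, ψ (y ^ 2 + y) = 1 := fun y => if_pos ⟨y, rfl⟩
  have hψsq : ∀ y, ψ y * ψ y = 1 := by
    intro y; simp only [ψ]; split_ifs <;> simp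
  have hψfrob : ∀ y, ψ (y ^ 2) = ψ y := by
    intro y
    have h3 := hψp y
    rw [hψadd] at h3
    calc ψ (y ^ 2) = ψ (y ^ 2) * (ψ y * ψ y) := by rw [hψsq, mul_one]
      _ = ψ y := by rw [← mul_assoc, h3, one_mul]
  have hψ0 : ψ 0 = 1 := if_pos H.zero_mem
  have hψ1 : ψ 1 = 1 := if_pos ⟨ζ, by rw [hp]; linear_combination hζ - h2⟩
  obtain ⟨c0, hc0⟩ : ∃ c0, c0 ∉ H := by
    by_contra hcon
    push Not at hcon
    have : H = ⊤ := (AddSubgroup.eq_top_iff' H).2 hcon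
    rw [this, AddSubgroup.index_top] at hidx
    omega
  have hcnt : ∀ a, ((Finset.univ.filter (fun y : F => y ^ 2 + y = a)).card : ℤ) = 1 + ψ a := by
    intro a
    by_cases ha : a ∈ H
    · obtain ⟨y, hy⟩ := ha
      have : Finset.univ.filter (fun y : F => y ^ 2 + y = a) = {y, y + 1} := by
        ext x
        simp only [Finset.mem_filter, Finset.mem_univ, true_and, Finset.mem_insert,
          Finset.mem_singleton]
        rw [hp] at hy
        rw [← hy, ← sub_eq_zero, show x ^ 2 + x - (y ^ 2 + y) = (x - y) * (x - (y + 1)) by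
          linear_combination (x + x * y - y - y ^ 2) * h2, mul_eq_zero, sub_eq_zero, sub_eq_zero]
      rw [this, Finset.card_pair (by simp)]
      have : ψ a = 1 := if_pos ⟨y, hy⟩
      rw [this]; norm_num
    · have : Finset.univ.filter (fun y : F => y ^ 2 + y = a) = ∅ := by
        ext x
        simp only [Finset.mem_filter, Finset.mem_univ, true_and, Finset.notMem_empty, iff_false]
        intro h; exact ha ⟨x, h⟩
      rw [this]
      have : ψ a = -1 := if_neg ha
      rw [this]; simp
  have hsumlin : ∀ v : F, ∑ x, ψ (x ^ 2 * v) = if v = 0 then (Fintype.card F : ℤ) else 0 := by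
    intro v
    split_ifs with hv
    · simp [hv, hψ0]
    · obtain ⟨x0, hx0⟩ : ∃ x0 : F, x0 ^ 2 = c0 / v := by
        have := (FiniteField.isSquare_of_char_two (CharP.ringChar_of_prime_eq_zero Nat.prime_two h2) (c0 / v))
        obtain ⟨r, hr⟩ := this
        exact ⟨r, by rw [hr, pow_two]⟩
      have h3 : ψ (x0 ^ 2 * v) = -1 := by
        rw [hx0, div_mul_cancel₀ _ hv]; exact if_neg hc0
      have h4 : ∑ x, ψ (x ^ 2 * v) = ∑ x, ψ ((x + x0) ^ 2 * v) :=
        (Equiv.sum_comp (Equiv.addRight x0) (fun x => ψ (x ^ 2 * v))).symm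
      have h5 : ∀ x, ψ ((x + x0) ^ 2 * v) = - ψ (x ^ 2 * v) := by
        intro x
        rw [show (x + x0) ^ 2 * v = x ^ 2 * v + x0 ^ 2 * v by linear_combination (x * x0 * v) * h2,
          hψadd, h3]; ring
      simp only [h5, Finset.sum_neg_distrib] at h4
      linarith
  let S : ℤ := ∑ x : F, ψ (x ^ 3)
  have hS2 : S ^ 2 = 4 * (Fintype.card F : ℤ) := by
    have e1 : S ^ 2 = ∑ u : F, ∑ x : F, ψ (x ^ 3) * ψ ((x + u) ^ 3) := by
      rw [Finset.sum_comm, pow_two, Finset.sum_mul]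
      refine Finset.sum_congr rfl fun x _ => ?_
      rw [← Finset.mul_sum]
      congr 1
      exact (Equiv.sum_comp (Equiv.addLeft x) (fun u => ψ (u ^ 3))).symm
    have e2 : ∀ u x : F, ψ (x ^ 3) * ψ ((x + u) ^ 3) = ψ (u ^ 3) * ψ (x ^ 2 * (u + u ^ 4)) := by
      intro u x
      rw [← hψadd, show x ^ 3 + (x + u) ^ 3 = u ^ 3 + (x ^ 2 * u + x * u ^ 2) by
        linear_combination (x ^ 3 + x ^ 2 * u + x * u ^ 2) * h2, hψadd, hψadd, ← hψfrob (x * u ^ 2),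
        ← hψadd]
      congr 2; ring
    have e3 : S ^ 2 = ∑ u : F, ψ (u ^ 3) * (if u + u ^ 4 = 0 then (Fintype.card F : ℤ) else 0) := by
      rw [e1]
      refine Finset.sum_congr rfl fun u _ => ?_
      simp only [e2]
      rw [← Finset.mul_sum, hsumlin]
    have e4 : ∀ u : F, u + u ^ 4 = 0 ↔ u ∈ ({0, 1, ζ, ζ + 1} : Finset F) := by
      intro u
      simp only [Finset.mem_insert, Finset.mem_singleton]
      rw [show u + u ^ 4 = u * ((u - 1) * ((u - ζ) * (u - (ζ + 1)))) by
        linear_combination (-u * (u - 1) ) * hζ + (u * (u^2*(ζ+1) -u*ζ + 1 - u ) - u + u ^ 2) * h2]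
      simp only [mul_eq_zero, sub_eq_zero]
    have e5 : ∀ u : F, u + u ^ 4 = 0 → ψ (u ^ 3) = 1 := by
      intro u hu
      have : u * (u ^ 3 - 1) = 0 := by linear_combination hu - u * h2
      rcases mul_eq_zero.1 this with h | h
      · rw [h]; simpa using hψ0
      · rw [sub_eq_zero.1 h]; exact hψ1
    have e6 : S ^ 2 = ∑ u : F, (if u ∈ ({0, 1, ζ, ζ + 1} : Finset F) then (Fintype.card F : ℤ) else 0) := by
      rw [e3]
      refine Finset.sum_congr rfl fun u _ => ?_
      simp only [← e4]
      split_ifs with h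
      · rw [e5 u h, one_mul]
      · simp
    have z0 : ζ ≠ 0 := by rintro rfl; simp at hζ
    have z1 : ζ ≠ 1 := by
      rintro rfl
      exact one_ne_zero (α := F) (by linear_combination hζ - h2)
    have z2 : ζ + 1 ≠ 0 := by
      intro h; exact z1 (by linear_combination h - h2)
    have hc4 : ({0, 1, ζ, ζ + 1} : Finset F).card = 4 := by
      rw [Finset.card_insert_of_notMem, Finset.card_insert_of_notMem, Finset.card_pair]
      · simp
      · simp [z1.symm, z0]
      · simp [z0.symm, z2.symm]
    rw [e6, Finset.sum_ite_mem, Finset.univ_inter, Finset.sum_const, hc4]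
    simp
  have hS : S = 2 ^ (s + 1) ∨ S = - 2 ^ (s + 1) := by
    apply sq_eq_sq_iff_eq_or_eq_neg.1
    rw [hS2, hF]; push_cast; ring
  have hN : ∀ c, ((Finset.univ.filter (fun xy : F × F => xy.2 ^ 2 + xy.2 = xy.1 ^ 3 + c)).card : ℤ)
      = Fintype.card F + ψ c * S := by
    intro c
    have : ((Finset.univ.filter (fun xy : F × F => xy.2 ^ 2 + xy.2 = xy.1 ^ 3 + c)).card : ℤ)
      = ∑ x : F, ((Finset.univ.filter (fun y : F => y ^ 2 + y = x ^ 3 + c)).card : ℤ) := by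
      simp only [Finset.card_filter, Nat.cast_sum]
      rw [← Finset.univ_product_univ, Finset.sum_product]
    rw [this]
    simp only [hcnt, hψadd, Finset.sum_add_distrib]
    rw [← Finset.sum_mul]
    simp [S, mul_comm]
  have fin : ∀ c, ψ c * S = 2 ^ (s + 1) → (Finset.univ.filter (fun xy : F × F => xy.2 ^ 2 + xy.2 = xy.1 ^ 3 + c)).card + 1
      = (2 ^ s + 1) ^ 2 := by
    intro c hc
    have h3 := hN c
    rw [hc, hF] at h3
    zify
    rw [h3]; push_cast; ring
  rcases hS with h | h
  · exact ⟨0, fin 0 (by rw [hψ0, h, one_mul])⟩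
  · exact ⟨c0, fin c0 (by rw [show ψ c0 = -1 from if_neg hc0, h]; ring)⟩

end

section

open Polynomial WeierstrassCurve WeierstrassCurve.Affine

open scoped Polynomial.Bivariate

noncomputable section

variable {F : Type u} [Field F] {W : WeierstrassCurve.Affine F}

def evA {x y : F} (h : W.Equation x y) : W.CoordinateRing →ₐ[F] F :=
  { AdjoinRoot.evalEval (p := W.polynomial) h with
    commutes' := by
      intro r
      change AdjoinRoot.evalEval (p := W.polynomial) h (AdjoinRoot.mk _ (C (C r))) = r
      exact (AdjoinRoot.evalEval_mk h _).trans (by rw [evalEval_C, eval_C]) }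

theorem evA_mk {x y : F} (h : W.Equation x y) (p : F[X][Y]) :
    evA h (CoordinateRing.mk W p) = p.evalEval x y := by
  exact AdjoinRoot.evalEval_mk h p

theorem evA_smul {x y : F} (h : W.Equation x y) (p : F[X]) (f : W.CoordinateRing) :
    evA h (p • f) = p.eval x * evA h f := by
  rw [CoordinateRing.smul, map_mul, evA_mk, evalEval_C]

/-- Evaluation of a function at a point, with junk value zero at infinity. -/
def evP : W.Point → W.CoordinateRing → F
  | .zero, _ => 0
  | .some _ _ h, f => evA h.1 f

def xv : W.Point → F
  | .zero => 0
  | .some x _ _ => x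

def yv : W.Point → F
  | .zero => 0
  | .some _ y _ => y

theorem evP_add (P : W.Point) (f g : W.CoordinateRing) : evP P (f + g) = evP P f + evP P g := by
  rcases P with _ | ⟨x, y, h⟩ <;> simp [evP]

theorem evP_mul (P : W.Point) (f g : W.CoordinateRing) : evP P (f * g) = evP P f * evP P g := by
  rcases P with _ | ⟨x, y, h⟩ <;> simp [evP]

theorem evP_smul (P : W.Point) (p : F[X]) (f : W.CoordinateRing) :
    evP P (p • f) = p.eval (xv P) * evP P f := by
  rcases P with _ | ⟨x, y, h⟩
  · simp [evP]
  · simp [evP, xv, evA_smul]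

theorem evP_smul' (P : W.Point) (p : F) (f : W.CoordinateRing) :
    evP P (p • f) = p * evP P f := by
  rcases P with _ | ⟨x, y, h⟩
  · simp [evP]
  · simp [evP]

theorem evP_Y (P : W.Point) : evP P (CoordinateRing.mk W Y) = yv P := by
  rcases P with _ | ⟨x, y, h⟩
  · simp [evP, yv]
  · change evA h.1 (CoordinateRing.mk W Y) = y
    rw [evA_mk, evalEval_X]

theorem evP_one (P : W.Point) (hP : P ≠ 0) : evP P (1 : W.CoordinateRing) = 1 := by
  rcases P with _ | ⟨x, y, h⟩
  · exact absurd rfl hP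
  · simp [evP]

theorem evP_zero (P : W.Point) : evP P (0 : W.CoordinateRing) = 0 := by
  rcases P with _ | ⟨x, y, h⟩ <;> simp [evP]

def evL (P : W.Point) : W.CoordinateRing →ₗ[F] F where
  toFun := evP P
  map_add' := evP_add P
  map_smul' := evP_smul' P

theorem evP_sum {ι : Type*} (P : W.Point) (s : Finset ι) (f : ι → W.CoordinateRing) :
    evP P (∑ i ∈ s, f i) = ∑ i ∈ s, evP P (f i) := map_sum (evL P) f s

theorem evP_pow (P : W.Point) (hP : P ≠ 0) (f : W.CoordinateRing) (n : ℕ) :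
    evP P (f ^ n) = evP P f ^ n := by
  induction n with
  | zero => simp [evP_one P hP]
  | succ n ih => rw [pow_succ, evP_mul, ih, pow_succ]

theorem findim_quot {f : W.CoordinateRing} (hf : f ≠ 0) :
    FiniteDimensional F (W.CoordinateRing ⧸ Ideal.span ({f} : Set W.CoordinateRing)) := by
  have h := Ideal.span_singleton_eq_bot.not.2 hf
  exact Module.Finite.equiv
    (Ideal.quotientEquivDirectSum F (CoordinateRing.basis W) h).symm

/-- the functional on the quotient -/
def qf {f : W.CoordinateRing} (P : W.Point) (hP : evP P f = 0) :
    (W.CoordinateRing ⧸ Ideal.span ({f} : Set W.CoordinateRing)) →ₗ[F] F :=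
  ((Ideal.span ({f} : Set W.CoordinateRing)).restrictScalars F).liftQ (evL P) (by
    intro g hg
    rw [Submodule.restrictScalars_mem, Ideal.mem_span_singleton'] at hg
    obtain ⟨a, rfl⟩ := hg
    change evP P (a * f) = 0
    rw [evP_mul, hP, mul_zero])

theorem qf_mk {f : W.CoordinateRing} (P : W.Point) (hP : evP P f = 0) (g : W.CoordinateRing) :
    qf P hP (Ideal.Quotient.mk _ g) = evP P g := rfl

def evA' (P : W.Point) (hP : P ≠ 0) : W.CoordinateRing →ₐ[F] F :=
  match P, hP with
  | .zero, h => absurd rfl h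
  | .some _ _ h, _ => evA h.1

theorem evA'_apply (P : W.Point) (hP : P ≠ 0) (f : W.CoordinateRing) : evA' P hP f = evP P f := by
  rcases P with _ | ⟨x, y, h⟩
  · exact absurd rfl hP
  · rfl

theorem ext_xy {P Q : W.Point} (hP : P ≠ 0) (hQ : Q ≠ 0) (hx : xv P = xv Q) (hy : yv P = yv Q) :
    P = Q := by
  rcases P with _ | ⟨x, y, h⟩
  · exact absurd rfl hP
  rcases Q with _ | ⟨x', y', h'⟩
  · exact absurd rfl hQ
  simp only [xv, yv] at hx hy
  subst hx hy
  rfl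

theorem evP_X (P : W.Point) (hP : P ≠ 0) : evP P ((X : F[X]) • (1 : W.CoordinateRing)) = xv P := by
  rw [evP_smul, evP_one P hP]; simp

theorem evA'_inj {P Q : W.Point} (hP : P ≠ 0) (hQ : Q ≠ 0) (h : evA' P hP = evA' Q hQ) : P = Q := by
  have h1 : ∀ f, evP P f = evP Q f := by
    intro f; rw [← evA'_apply P hP, h, evA'_apply]
  refine ext_xy hP hQ ?_ ?_
  · have := h1 ((X : F[X]) • (1 : W.CoordinateRing))
    rwa [evP_X P hP, evP_X Q hQ] at this
  · have := h1 (CoordinateRing.mk W Y)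
    rwa [evP_Y, evP_Y] at this

theorem qf_indep {f : W.CoordinateRing} (s : Finset W.Point) (hs0 : ∀ P ∈ s, P ≠ 0)
    (hs : ∀ P ∈ s, evP P f = 0) :
    LinearIndependent F (fun P : s => qf (P : W.Point) (hs P P.2)) := by
  have h1 : LinearIndependent F (fun P : s => (evA' (P : W.Point) (hs0 P P.2)).toLinearMap) :=
    (linearIndependent_algHom_toLinearMap F W.CoordinateRing F).comp
      (fun P : s => evA' (P : W.Point) (hs0 P P.2))
      (fun P Q h => Subtype.ext (evA'_inj _ _ h))
  refine LinearIndependent.of_comp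
    (LinearMap.lcomp F F ((Ideal.Quotient.mkₐ F (Ideal.span ({f} : Set W.CoordinateRing))).toLinearMap)) ?_
  convert h1 using 1
  funext P
  ext g
  change qf (P : W.Point) (hs P P.2) (Ideal.Quotient.mk _ g) = evA' _ _ g
  rw [qf_mk, evA'_apply]

theorem zeros_le {f : W.CoordinateRing} (hf : f ≠ 0) (s : Finset W.Point) (hs0 : ∀ P ∈ s, P ≠ 0)
    (hs : ∀ P ∈ s, evP P f = 0) : s.card ≤ (Algebra.norm F[X] f).natDegree := by
  have := findim_quot hf
  have h1 := (qf_indep s hs0 hs).fintype_card_le_finrank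
  rw [← finrank_quotient_span_eq_natDegree_norm (CoordinateRing.basis W) hf]
  rw [Fintype.card_coe] at h1
  exact h1.trans (Subspace.dual_finrank_eq).le

theorem mem_span_of_zeros {f : W.CoordinateRing} (hf : f ≠ 0) (s : Finset W.Point) (hs0 : ∀ P ∈ s, P ≠ 0)
    (hs : ∀ P ∈ s, evP P f = 0) (hc : (Algebra.norm F[X] f).natDegree ≤ s.card)
    (g : W.CoordinateRing) (hg : ∀ P ∈ s, evP P g = 0) : g ∈ Ideal.span ({f} : Set W.CoordinateRing) := by
  have := findim_quot hf
  have h0 := zeros_le hf s hs0 hs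
  have hli := qf_indep s hs0 hs
  have hcard : Fintype.card s = Module.finrank F
      (Module.Dual F (W.CoordinateRing ⧸ Ideal.span ({f} : Set W.CoordinateRing))) := by
    rw [Subspace.dual_finrank_eq, finrank_quotient_span_eq_natDegree_norm (CoordinateRing.basis W) hf,
      Fintype.card_coe]
    omega
  rw [← Ideal.Quotient.eq_zero_iff_mem, ← Module.forall_dual_apply_eq_zero_iff F]
  intro φ
  have hspan := hli.span_eq_top_of_card_eq_finrank' hcard
  have hφ : φ ∈ Submodule.span F (Set.range fun P : s => qf (P : W.Point) (hs P P.2)) := by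
    rw [hspan]; trivial
  refine Submodule.span_induction (p := fun φ _ => φ (Ideal.Quotient.mk _ g) = 0) ?_ ?_ ?_ ?_ hφ
  · rintro _ ⟨P, rfl⟩
    exact hg P P.2
  · rfl
  · intro a b _ _ ha hb
    rw [LinearMap.add_apply, ha, hb, add_zero]
  · intro k a _ ha
    rw [LinearMap.smul_apply, ha, smul_zero]

/-- the ideal of a point -/
def idP : W.Point → Ideal W.CoordinateRing
  | .zero => ⊤
  | .some x y _ => CoordinateRing.XYIdeal W x (C y)

theorem idP_eq_ker {P : W.Point} (hP : P ≠ 0) : idP P = RingHom.ker (evA' P hP) := by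
  rcases P with _ | ⟨x, y, h⟩
  · exact absurd rfl hP
  have hmax : (CoordinateRing.XYIdeal W x (C y)).IsMaximal := by
    apply Ideal.Quotient.maximal_of_isField
    exact MulEquiv.isField (Field.toIsField F) (CoordinateRing.quotientXYIdealEquiv h.1).toMulEquiv
  refine hmax.eq_of_le (RingHom.ker_ne_top _) ?_
  rw [CoordinateRing.XYIdeal, Ideal.span_le]
  rintro g (rfl | rfl)
  · change evA h.1 _ = 0
    rw [CoordinateRing.XClass, evA_mk]; simp [evalEval_C]
  · change evA h.1 _ = 0
    rw [CoordinateRing.YClass, evA_mk]; simp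

theorem mem_idP {P : W.Point} (hP : P ≠ 0) (f : W.CoordinateRing) : f ∈ idP P ↔ evP P f = 0 := by
  rw [idP_eq_ker hP, RingHom.mem_ker, evA'_apply]

theorem idP_coprime {P Q : W.Point} (hP : P ≠ 0) (hQ : Q ≠ 0) (hPQ : P ≠ Q) :
    IsCoprime (idP P) (idP Q) := by
  have hm : ∀ P : W.Point, P ≠ 0 → (idP P).IsMaximal := by
    intro P hP
    rw [idP_eq_ker hP]
    refine RingHom.ker_isMaximal_of_surjective (evA' P hP).toRingHom ?_
    intro r
    exact ⟨algebraMap _ _ r, (evA' P hP).commutes r⟩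
  rw [Ideal.isCoprime_iff_sup_eq]
  refine (hm P hP).coprime_of_ne (hm Q hQ) ?_
  intro h
  apply hPQ
  have h1 : ∀ f, evP P f = 0 → evP Q f = 0 := by
    intro f hf
    rwa [← mem_idP hQ, ← h, mem_idP hP]
  have h2 : ∀ f, evP Q f = evP P f := by
    intro f
    have := h1 (f + (- evP P f) • 1) (by rw [evP_add, evP_smul', evP_one P hP]; ring)
    rw [evP_add, evP_smul', evP_one Q hQ] at this
    linear_combination this
  refine ext_xy hP hQ ?_ ?_
  · rw [← evP_X P hP, ← evP_X Q hQ, h2]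
  · rw [← evP_Y, ← evP_Y, h2]

theorem mem_prod_idP (s : Finset W.Point) (hs0 : ∀ P ∈ s, P ≠ 0) (g : W.CoordinateRing) :
    g ∈ ∏ P ∈ s, idP P ↔ ∀ P ∈ s, evP P g = 0 := by
  classical
  induction s using Finset.induction_on with
  | empty => simp
  | insert P s hPs ih =>
    rw [Finset.prod_insert hPs, Ideal.mul_eq_inf_of_isCoprime, Submodule.mem_inf,
      ih (fun Q hQ => hs0 Q (Finset.mem_insert_of_mem hQ)), mem_idP (hs0 P (Finset.mem_insert_self _ _))]
    · simp
    · refine IsCoprime.prod_right fun Q hQ => idP_coprime (hs0 P (Finset.mem_insert_self _ _))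
        (hs0 Q (Finset.mem_insert_of_mem hQ)) ?_
      rintro rfl; exact hPs hQ

open scoped nonZeroDivisors

def unP : W.Point → (FractionalIdeal W.CoordinateRing⁰ W.FunctionField)ˣ
  | .zero => 1
  | .some _ _ h => CoordinateRing.XYIdeal' (W := W) h

theorem unP_coe (P : W.Point) : (unP P : FractionalIdeal W.CoordinateRing⁰ W.FunctionField) = idP P := by
  rcases P with _ | ⟨x, y, h⟩
  · simp [unP, idP]
  · rfl

theorem toClass_unP [DecidableEq F] (P : W.Point) :
    Point.toClass P = Additive.ofMul (ClassGroup.mk W.FunctionField (unP P)) := by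
  rcases P with _ | ⟨x, y, h⟩
  · simp only [unP, map_one]; rfl
  · rfl

theorem sum_zeros [DecidableEq F] {f : W.CoordinateRing} (hf : f ≠ 0) (s : Finset W.Point) (hs0 : ∀ P ∈ s, P ≠ 0)
    (hs : ∀ P ∈ s, evP P f = 0) (hc : (Algebra.norm F[X] f).natDegree ≤ s.card) :
    ∑ P ∈ s, P = 0 := by
  rw [← Point.toClass_eq_zero, map_sum]
  simp only [toClass_unP]
  rw [← ofMul_prod, ← map_prod]
  change ClassGroup.mk W.FunctionField (∏ P ∈ s, unP P) = 1
  refine (ClassGroup.mk_eq_one_of_coe_ideal (I' := ∏ P ∈ s, idP P) ?_).2 ⟨f, hf, ?_⟩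
  · rw [Units.coe_prod]
    simp only [unP_coe]
    exact (map_prod (FractionalIdeal.coeIdealHom W.CoordinateRing⁰ W.FunctionField) _ s).symm
  · refine le_antisymm ?_ ?_
    · intro g hg
      exact mem_span_of_zeros hf s hs0 hs hc g ((mem_prod_idP s hs0 g).1 hg)
    · rw [Ideal.span_singleton_le_iff_mem, mem_prod_idP s hs0]
      exact hs

end

end

section

open Polynomial WeierstrassCurve WeierstrassCurve.Affine

open scoped Polynomial.Bivariate

noncomputable section

variable {F : Type u} [Field F] {W : WeierstrassCurve.Affine F}

def dg (f : W.CoordinateRing) : WithBot ℕ := (Algebra.norm F[X] f).degree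

theorem dg_basis (p q : F[X]) : dg (p • (1 : W.CoordinateRing) + q • CoordinateRing.mk W Y) =
    max (2 • p.degree) (2 • q.degree + 3) := CoordinateRing.degree_norm_smul_basis p q

theorem two_mono {a b : WithBot ℕ} (h : a ≤ b) : 2 • a ≤ 2 • b := by
  rw [two_nsmul, two_nsmul]; exact add_le_add h h

theorem dg_add_le (f g : W.CoordinateRing) : dg (f + g) ≤ max (dg f) (dg g) := by
  obtain ⟨p, q, rfl⟩ := CoordinateRing.exists_smul_basis_eq f
  obtain ⟨p', q', rfl⟩ := CoordinateRing.exists_smul_basis_eq g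
  have : p • (1 : W.CoordinateRing) + q • CoordinateRing.mk W Y + (p' • 1 + q' • CoordinateRing.mk W Y)
    = (p + p') • 1 + (q + q') • CoordinateRing.mk W Y := by rw [add_smul, add_smul]; abel
  rw [this, dg_basis, dg_basis, dg_basis]
  have h1 := degree_add_le p p'
  have h2 := degree_add_le q q'
  refine max_le ?_ ?_
  · rcases le_max_iff.1 h1 with h | h
    · exact ((two_mono h).trans (le_max_left _ _)).trans (le_max_left _ _)
    · exact ((two_mono h).trans (le_max_left _ _)).trans (le_max_right _ _)
  · rcases le_max_iff.1 h2 with h | h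
    · exact ((add_le_add_left (two_mono h) 3).trans (le_max_right _ _)).trans (le_max_left _ _)
    · exact ((add_le_add_left (two_mono h) 3).trans (le_max_right _ _)).trans (le_max_right _ _)

theorem dg_mul (f g : W.CoordinateRing) : dg (f * g) = dg f + dg g := by
  rw [dg, map_mul, degree_mul]; rfl

theorem dg_smul_one (p : F[X]) : dg (p • (1 : W.CoordinateRing)) = 2 • p.degree := by
  have := dg_basis (W := W) p 0
  simpa [two_nsmul] using this

theorem dg_Y : dg (CoordinateRing.mk W Y) = 3 := by
  have := dg_basis (W := W) 0 1
  simp only [zero_smul, zero_add, one_smul, degree_zero, degree_one] at this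
  rw [this]; rfl

theorem dg_zero : dg (0 : W.CoordinateRing) = ⊥ := by
  rw [← zero_smul F[X] (1 : W.CoordinateRing), dg_smul_one, degree_zero]; rfl

theorem dg_one : dg (1 : W.CoordinateRing) = 0 := by
  rw [← one_smul F[X] (1 : W.CoordinateRing), dg_smul_one, degree_one]; rfl

theorem dg_psmul (p : F[X]) (f : W.CoordinateRing) : dg (p • f) = 2 • p.degree + dg f := by
  rw [← smul_one_mul p f, dg_mul, dg_smul_one]

theorem dg_smul_le (c : F) (f : W.CoordinateRing) : dg (c • f) ≤ dg f := by
  have : c • f = (C c : F[X]) • f := by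
    rw [← algebraMap_smul F[X] c f]; rfl
  rw [this, dg_psmul]
  calc 2 • (C c).degree + dg f ≤ 2 • (0 : WithBot ℕ) + dg f :=
        add_le_add_left (two_mono degree_C_le) _
    _ = dg f := by simp

theorem dg_neg (f : W.CoordinateRing) : dg (-f) = dg f := by
  refine le_antisymm ?_ ?_
  · simpa using dg_smul_le (-1) f
  · simpa using dg_smul_le (-1) (-f)

theorem dg_add_eq {f g : W.CoordinateRing} (h : dg g < dg f) : dg (f + g) = dg f := by
  refine le_antisymm ((dg_add_le f g).trans (max_le le_rfl h.le)) ?_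
  have := dg_add_le (f + g) (-g)
  rw [add_neg_cancel_right, dg_neg] at this
  rcases le_max_iff.1 this with h' | h'
  · exact h'
  · exact absurd h (not_lt.2 h')

theorem dg_sum_le {ι : Type*} (s : Finset ι) (f : ι → W.CoordinateRing) (n : WithBot ℕ)
    (h : ∀ i ∈ s, dg (f i) ≤ n) : dg (∑ i ∈ s, f i) ≤ n := by
  classical
  induction s using Finset.induction_on with
  | empty => simp [dg_zero]
  | insert a s ha ih =>
    rw [Finset.sum_insert ha]
    exact (dg_add_le _ _).trans (max_le (h a (by simp)) (ih fun i hi => h i (by simp [hi])))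

theorem dg_pow (f : W.CoordinateRing) (n : ℕ) : dg (f ^ n) = n • dg f := by
  induction n with
  | zero => simp [dg_one]
  | succ n ih => rw [pow_succ, dg_mul, ih, succ_nsmul]

def Ldeg (W : WeierstrassCurve.Affine F) (n : ℕ) : Submodule F W.CoordinateRing where
  carrier := {f | dg f ≤ n}
  add_mem' := fun {a b} ha hb => (dg_add_le a b).trans (max_le ha hb)
  zero_mem' := by simp [dg_zero]
  smul_mem' := fun c f hf => (dg_smul_le c f).trans hf

theorem mem_Ldeg {n : ℕ} {f : W.CoordinateRing} : f ∈ Ldeg W n ↔ dg f ≤ n := Iff.rfl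

theorem zeros_le' {f : W.CoordinateRing} {n : ℕ} (hf : f ≠ 0) (hn : dg f ≤ n) (s : Finset W.Point) (hs0 : ∀ P ∈ s, P ≠ 0)
    (hs : ∀ P ∈ s, evP P f = 0) : s.card ≤ n :=
  (zeros_le hf s hs0 hs).trans (natDegree_le_of_degree_le hn)

theorem sum_zeros' [DecidableEq F] {f : W.CoordinateRing} {n : ℕ} (hf : f ≠ 0) (hn : dg f ≤ n) (s : Finset W.Point) (hs0 : ∀ P ∈ s, P ≠ 0)
    (hs : ∀ P ∈ s, evP P f = 0) (hc : n ≤ s.card) :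
    ∑ P ∈ s, P = 0 :=
  sum_zeros hf s hs0 hs ((natDegree_le_of_degree_le hn).trans hc)

def LdegMap (W : WeierstrassCurve.Affine F) (k : ℕ) :
    (degreeLT F (k + 1) × degreeLT F k) →ₗ[F] W.CoordinateRing where
  toFun x := (x.1 : F[X]) • 1 + (x.2 : F[X]) • CoordinateRing.mk W Y
  map_add' x y := by
    simp only [Prod.fst_add, Prod.snd_add, Submodule.coe_add, add_smul]; abel
  map_smul' c x := by
    simp only [Prod.smul_fst, Prod.smul_snd, Submodule.coe_smul, smul_add, RingHom.id_apply, smul_assoc]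

theorem finrank_Ldeg (k : ℕ) : Module.finrank F (Ldeg W (2 * k + 1)) = 2 * k + 1 := by
  have hinj : Function.Injective (LdegMap W k) := by
    rw [injective_iff_map_eq_zero]
    rintro ⟨⟨p, hp⟩, ⟨q, hq⟩⟩ h
    change p • (1 : W.CoordinateRing) + q • CoordinateRing.mk W Y = 0 at h
    obtain ⟨rfl, rfl⟩ := CoordinateRing.smul_basis_eq_zero h
    rfl
  have hr : LinearMap.range (LdegMap W k) = Ldeg W (2 * k + 1) := by
    ext f
    rw [mem_Ldeg]
    obtain ⟨p, q, rfl⟩ := CoordinateRing.exists_smul_basis_eq f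
    have key : dg (p • (1 : W.CoordinateRing) + q • CoordinateRing.mk W Y) ≤ ((2 * k + 1 : ℕ) : WithBot ℕ) ↔
        p.degree < ((k + 1 : ℕ) : WithBot ℕ) ∧ q.degree < (k : WithBot ℕ) := by
      rw [dg_basis, max_le_iff, two_nsmul, two_nsmul]
      refine and_congr ?_ ?_
      · rcases h : p.degree with _ | a
        · exact iff_of_true bot_le (WithBot.bot_lt_coe _)
        · change (((a + a : ℕ) : WithBot ℕ) ≤ _) ↔ ((a : WithBot ℕ) < _)
          rw [Nat.cast_le, Nat.cast_lt]; omega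
      · rcases h : q.degree with _ | a
        · exact iff_of_true bot_le (WithBot.bot_lt_coe _)
        · change (((a + a + 3 : ℕ) : WithBot ℕ) ≤ _) ↔ ((a : WithBot ℕ) < _)
          rw [Nat.cast_le, Nat.cast_lt]; omega
    rw [key]
    constructor
    · rintro ⟨⟨⟨p', hp⟩, ⟨q', hq⟩⟩, h⟩
      change p' • (1 : W.CoordinateRing) + q' • CoordinateRing.mk W Y = _ at h
      have h' : (p' - p) • (1 : W.CoordinateRing) + (q' - q) • CoordinateRing.mk W Y = 0 := by
        rw [sub_smul, sub_smul, ← sub_eq_zero.2 h]; abel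
      obtain ⟨h1, h2⟩ := CoordinateRing.smul_basis_eq_zero h'
      rw [sub_eq_zero] at h1 h2
      subst h1 h2
      exact ⟨mem_degreeLT.1 hp, mem_degreeLT.1 hq⟩
    · rintro ⟨hp, hq⟩
      exact ⟨⟨⟨p, mem_degreeLT.2 hp⟩, ⟨q, mem_degreeLT.2 hq⟩⟩, rfl⟩
  rw [← hr, LinearMap.finrank_range_of_inj hinj, Module.finrank_prod,
    (degreeLTEquiv F (k+1)).finrank_eq, (degreeLTEquiv F k).finrank_eq]
  simp; omega

end

end

section

open Polynomial WeierstrassCurve WeierstrassCurve.Affine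

noncomputable section

variable {F : Type u} [Field F] [DecidableEq F] {W : WeierstrassCurve.Affine F}

def evW (S : Set W.Point) (U : W.CoordinateRing) : W.CoordinateRing →ₗ[F] (S → F) where
  toFun w := fun P => evP P.1 w / evP P.1 U
  map_add' a b := by funext P; simp [evP_add, add_div]
  map_smul' c a := by funext P; simp [evP_smul', mul_div_assoc]

open Classical in
theorem code_gen (S : Set W.Point) (hS0 : ∀ P ∈ S, P ≠ 0) (U Z : W.CoordinateRing)
    (hU : ∀ P ∈ S, evP P U ≠ 0) (z : W.Point → F) (hz : ∀ P ∈ S, evP P Z = evP P U * z P)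
    (N : ℕ) (hUd : dg U ≤ N) (hZd : dg Z ≤ N) (r δ t m : ℕ) (T : Finset F) (hT : T.card = m)
    (Fib : F → Finset W.Point) (hFS : ∀ ζ ∈ T, ∀ P ∈ Fib ζ, P ∈ S)
    (hFc : ∀ ζ ∈ T, (Fib ζ).card = N) (hFz : ∀ ζ ∈ T, ∀ P ∈ Fib ζ, z P = ζ)
    (W' : Submodule F W.CoordinateRing) (hW'd : W' ≤ Ldeg W N) (hUW : U ∈ W')
    (hr : Module.finrank F W' = r) (hN : N + 1 = r + δ) (hr1 : 1 ≤ r) (hδ : 1 ≤ δ) (htm : t < m)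
    (hw : ∀ w ∈ W', w ≠ 0 → ∀ ζ ∈ T, ((Fib ζ).filter (fun P => evP P w = 0)).card < r) :
    ExistsOptimalLRC F (N * m) (r * t + 1) (N * (m - t)) r δ := by
  have hfd : FiniteDimensional F W' := Module.finite_of_finrank_pos (by omega)
  have hTne : T.Nonempty := by rw [← Finset.card_pos]; omega
  have hinj : Function.Injective ((evW S U).comp W'.subtype) := by
    rw [injective_iff_map_eq_zero]
    rintro ⟨w, hw'⟩ h
    by_contra hne
    obtain ⟨ζ, hζ⟩ := hTne
    have h1 := hw w hw' (fun h => hne (Subtype.ext h)) ζ hζ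
    rw [Finset.filter_true_of_mem, hFc ζ hζ] at h1
    · omega
    · intro P hP
      have h2 := congrFun h ⟨P, hFS ζ hζ P hP⟩
      change evP P w / evP P U = 0 at h2
      rcases div_eq_zero_iff.1 h2 with h3 | h3
      · exact h3
      · exact absurd h3 (hU P (hFS ζ hζ P hP))
  have hfin : Module.finrank F (W'.map (evW S U)) = r := by
    rw [← hr]
    have : W'.map (evW S U) = LinearMap.range ((evW S U).comp W'.subtype) := by
      rw [LinearMap.range_comp, Submodule.range_subtype]
    rw [this, LinearMap.finrank_range_of_inj hinj]
  have hUne : ∀ P : S, evP P.1 U ≠ 0 := fun P => hU _ P.2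
  refine lrc_abstract (X := S) (fun P => z P.1) (W'.map (evW S U)) N r δ t m hfin hN hr1 hδ htm
    ⟨U, hUW, ?_⟩ T hT (fun ζ => (Fib ζ).subtype (· ∈ S)) ?_ ?_ ?_ ?_
  · funext P
    exact div_self (hUne P)
  · intro ζ hζ
    rw [Finset.card_subtype, Finset.filter_true_of_mem (hFS ζ hζ), hFc ζ hζ]
  · intro ζ hζ P hP
    exact hFz ζ hζ P (Finset.mem_subtype.1 hP)
  · rintro _ ⟨w, hw', rfl⟩ hne ζ hζ
    have hw0 : w ≠ 0 := by rintro rfl; exact hne (map_zero _)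
    refine lt_of_le_of_lt ?_ (hw w hw' hw0 ζ hζ)
    refine Finset.card_le_card_of_injOn Subtype.val ?_ Subtype.val_injective.injOn
    intro P hP
    have hP' := Finset.mem_filter.1 (Finset.mem_coe.1 hP)
    refine Finset.mem_coe.2 (Finset.mem_filter.2 ⟨Finset.mem_subtype.1 hP'.1, ?_⟩)
    rcases div_eq_zero_iff.1 hP'.2 with h3 | h3
    · exact h3
    · exact absurd h3 (hUne P)
  · intro w c hwW hex
    choose w' hw' hww using hwW
    set f : W.CoordinateRing := ∑ j : Fin t, Z ^ (j : ℕ) * U ^ (t - 1 - j) * w' j + c • Z ^ t with hf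
    have hev : ∀ P : S, evP P.1 f = evP P.1 U ^ t *
        (∑ j : Fin t, z P.1 ^ (j : ℕ) * w j P + c * z P.1 ^ t) := by
      intro P
      have hP0 := hS0 _ P.2
      rw [hf, evP_add, evP_sum, evP_smul', evP_pow _ hP0, hz _ P.2, mul_add, Finset.mul_sum]
      congr 1
      · refine Finset.sum_congr rfl fun j _ => ?_
        rw [evP_mul, evP_mul, evP_pow _ hP0, evP_pow _ hP0, hz _ P.2, ← hww j]
        change _ = evP P.1 U ^ t * (z P.1 ^ (j : ℕ) * (evP P.1 (w' j) / evP P.1 U))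
        have ht : t = j + (t - 1 - j) + 1 := by have := j.2; omega
        have : evP P.1 U ^ t = evP P.1 U ^ (j : ℕ) * evP P.1 U ^ (t - 1 - j) * evP P.1 U := by
          conv_lhs => rw [ht]
          rw [pow_succ, pow_add]
        rw [this]
        have := hUne P
        field_simp
        ring
      · ring
    have hfd : dg f ≤ ((N * t : ℕ) : WithBot ℕ) := by
      have hpow : ∀ (g : W.CoordinateRing) (n k : ℕ), dg g ≤ n → dg (g ^ k) ≤ ((n * k : ℕ) : WithBot ℕ) := by
        intro g n k h
        rw [dg_pow]
        refine (nsmul_le_nsmul_right h k).trans ?_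
        rw [nsmul_eq_mul, mul_comm]; norm_cast
      refine (dg_add_le _ _).trans (max_le (dg_sum_le _ _ _ ?_) ?_)
      · intro j _
        rw [dg_mul, dg_mul]
        refine (add_le_add (add_le_add (hpow _ _ _ hZd) (hpow _ _ _ hUd)) (hW'd (hw' j))).trans ?_
        have ht : t = j + (t - 1 - j) + 1 := by have := j.2; omega
        have : N * t = N * j + N * (t - 1 - j) + N := by
          conv_lhs => rw [ht]
          ring
        rw [this]; push_cast; exact le_rfl
      · exact (dg_smul_le _ _).trans (hpow _ _ _ hZd)
    have hf0 : f ≠ 0 := by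
      obtain ⟨P, hP, hne⟩ := hex
      intro h0
      have := hev P
      rw [h0, evP_zero] at this
      exact mul_ne_zero (pow_ne_zero _ (hUne P)) hne this.symm
    rw [← Finset.card_image_of_injective _ Subtype.val_injective]
    refine zeros_le' hf0 hfd _ ?_ ?_
    · intro P hP
      obtain ⟨P, hP, rfl⟩ := Finset.mem_image.1 hP
      exact hS0 _ P.2
    · intro P hP
      obtain ⟨P, hP', rfl⟩ := Finset.mem_image.1 hP
      have h3 := (Finset.mem_filter.1 hP').2
      rw [hev P, h3, mul_zero]

end

end

section

open Polynomial WeierstrassCurve WeierstrassCurve.Affine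

open scoped Polynomial.Bivariate

noncomputable section

/-- the curve -/
def Ec {F : Type u} [Field F] (c : F) : WeierstrassCurve.Affine F := ⟨0, 0, 1, 0, c⟩

section
variable {F : Type u} [Field F] [CharP F 2] {c : F}

theorem two0 : (2 : F) = 0 := CharTwo.two_eq_zero

theorem Ec_eq {x y : F} : (Ec c).Equation x y ↔ y ^ 2 + y = x ^ 3 + c := by
  rw [equation_iff]; simp [Ec]

theorem Ec_negY (x y : F) : (Ec c).negY x y = y + 1 := by
  simp only [negY, Ec]; linear_combination (- y - 1) * two0 (F := F)

theorem Ec_a1 : (Ec c).a₁ = 0 := rfl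

theorem Ec_a2 : (Ec c).a₂ = 0 := rfl

theorem Ec_ns {x y : F} : (Ec c).Nonsingular x y ↔ y ^ 2 + y = x ^ 3 + c := by
  rw [nonsingular_iff', Ec_eq]
  refine and_iff_left (Or.inr ?_)
  simp [Ec, two0 (F := F)]

theorem Ec_card [Fintype F] [DecidableEq F] :
    Finite (Ec c).Point ∧ Nat.card (Ec c).Point =
      (Finset.univ.filter (fun xy : F × F => xy.2 ^ 2 + xy.2 = xy.1 ^ 3 + c)).card + 1 := by
  have e := nonsingularPointEquiv (Ec c)
  have e2 : WithZero {xy : F × F // (Ec c).Nonsingular xy.fst xy.snd} ≃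
      Option {xy : F × F // xy.2 ^ 2 + xy.2 = xy.1 ^ 3 + c} :=
    Equiv.optionCongr (Equiv.subtypeEquivRight fun xy => Ec_ns)
  refine ⟨Finite.of_equiv _ (e.trans e2).symm, ?_⟩
  rw [Nat.card_congr (e.trans e2), Nat.card_eq_fintype_card, Fintype.card_option, Fintype.card_subtype]

theorem eqn (P : (Ec c).Point) (hP : P ≠ 0) : yv P ^ 2 + yv P = xv P ^ 3 + c := by
  rcases P with _ | ⟨x, y, h⟩
  · exact absurd rfl hP
  · exact Ec_ns.1 h

theorem xv_neg (P : (Ec c).Point) : xv (-P) = xv P := by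
  rcases P with _ | ⟨x, y, h⟩
  · rfl
  · rfl

theorem eq_or_neg {P Q : (Ec c).Point} (hP : P ≠ 0) (hQ : Q ≠ 0) (h : xv P = xv Q) :
    P = Q ∨ P = -Q := by
  rcases P with _ | ⟨x, y, h1⟩
  · exact absurd rfl hP
  rcases Q with _ | ⟨x', y', h2⟩
  · exact absurd rfl hQ
  exact Point.X_eq_iff.1 h

variable [DecidableEq F]

theorem neg_ne {P : (Ec c).Point} (hP : P ≠ 0) : -P ≠ P := by
  rcases P with _ | ⟨x, y, h⟩
  · exact absurd rfl hP
  · rw [Point.neg_some]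
    intro h'
    have := congrArg yv h'
    change (Ec c).negY x y = y at this
    rw [Ec_negY] at this
    simp at this

theorem add_self_ne {P : (Ec c).Point} (hP : P ≠ 0) : P + P ≠ 0 := by
  intro h
  exact neg_ne hP (neg_eq_of_add_eq_zero_left h)

theorem yv_add {P Q : (Ec c).Point} (hP : P ≠ 0) (hQ : Q ≠ 0) (hx : xv P ≠ xv Q) :
    yv (P + Q) * (xv P - xv Q) ^ 3 =
      (yv P + yv Q) * (yv P + yv Q + xv Q ^ 2 * (xv P + xv Q)) + (yv Q + 1) * (xv P + xv Q) ^ 3 := by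
  have e1 := eqn P hP
  have e2 := eqn Q hQ
  rcases P with _ | ⟨x, y, h1⟩
  · exact absurd rfl hP
  rcases Q with _ | ⟨a, b, h2⟩
  · exact absurd rfl hQ
  change x ≠ a at hx
  rw [Point.add_of_X_ne hx]
  simp only [yv, xv] at *
  rw [addY, slope_of_X_ne hx, Ec_negY, negAddY, addX]
  have hd : x - a ≠ 0 := sub_ne_zero.2 hx
  rw [Ec_a1, Ec_a2]
  have hL : (y - b) / (x - a) * (x - a) = y - b := div_mul_cancel₀ _ hd
  set L := (y - b) / (x - a)
  have hL3 : L ^ 3 * (x - a) ^ 3 = (y - b) ^ 3 := by rw [← hL]; ring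
  have h1 : (L * (L ^ 2 + 0 * L - 0 - x - a - x) + y + 1) * (x - a) ^ 3 =
    (y - b) ^ 3 - (2 * x + a) * (y - b) * (x - a) ^ 2 + (y + 1) * (x - a) ^ 3 := by
    linear_combination hL3 - (2 * x + a) * (x - a) ^ 2 * hL
  rw [h1]
  linear_combination (y + b) * (e1 + e2) + ((-2) * y ^ 2 * b ^ 1 + (1) * y ^ 1 * b ^ 2 + (-1) * b ^ 3 + (1) * x ^ 3 * b ^ 1 + (-3) * x ^ 2 * a ^ 1 * b ^ 1 + (-1) * y ^ 1 * a ^ 3 + (1) * x ^ 1 * y ^ 1 * a ^ 2 + (-3) * x ^ 2 * a ^ 1 + (-1) * a ^ 3 + (-1) * y ^ 2 + (-2) * y ^ 1 * b ^ 1 + (-1) * b ^ 2 + (-2) * x ^ 1 * a ^ 2 * b ^ 1 + (1) * y ^ 1 * c ^ 1 + (1) * b ^ 1 * c ^ 1) * two0 (F := F)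

theorem slope_ω {ζ : F} (hζ : ζ ^ 2 + ζ + 1 = 0) (x₁ x₂ y₁ y₂ : F) :
    (Ec c).slope (ζ * x₁) (ζ * x₂) y₁ y₂ = ζ ^ 2 * (Ec c).slope x₁ x₂ y₁ y₂ := by
  have h0 : ζ ≠ 0 := by rintro rfl; simp at hζ
  have h3 : ζ ^ 3 = 1 := by linear_combination (ζ - 1) * hζ
  by_cases hx : x₁ = x₂
  · subst hx
    by_cases hy : y₁ = (Ec c).negY x₁ y₂
    · rw [slope_of_Y_eq rfl hy, slope_of_Y_eq rfl (by rw [hy, Ec_negY, Ec_negY]), mul_zero]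
    · rw [slope_of_Y_ne rfl hy, slope_of_Y_ne rfl (by rw [Ec_negY] at hy ⊢; exact hy), Ec_negY, Ec_negY]
      simp only [Ec]
      ring
  · rw [slope_of_X_ne hx, slope_of_X_ne (fun h => hx (mul_left_cancel₀ h0 h))]
    have : x₁ - x₂ ≠ 0 := sub_ne_zero.2 hx
    rw [← mul_sub]
    field_simp
    linear_combination (y₁ - y₂) * h3.symm

theorem some_congr {x x' y y' : F} {h : (Ec c).Nonsingular x y} {h' : (Ec c).Nonsingular x' y'}
    (hx : x = x') (hy : y = y') : Point.some x y h = Point.some x' y' h' := by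
  subst hx hy; rfl

def ωf {ζ : F} (hζ : ζ ^ 2 + ζ + 1 = 0) : (Ec c).Point → (Ec c).Point
  | .zero => .zero
  | .some x y h => .some (ζ * x) y (by
      rw [Ec_ns] at h ⊢
      have h3 : ζ ^ 3 = 1 := by linear_combination (ζ - 1) * hζ
      rw [h, mul_pow, h3, one_mul])

theorem ωf_add {ζ : F} (hζ : ζ ^ 2 + ζ + 1 = 0) (P Q : (Ec c).Point) :
    ωf hζ (P + Q) = ωf hζ P + ωf hζ Q := by
  have h3 : ζ ^ 3 = 1 := by linear_combination (ζ - 1) * hζ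
  have h0 : ζ ≠ 0 := by rintro rfl; simp at hζ
  rcases P with _ | ⟨x, y, h1⟩
  · change ωf hζ (0 + Q) = 0 + _
    rw [zero_add, zero_add]
  rcases Q with _ | ⟨a, b, h2⟩
  · change ωf hζ (_ + 0) = _ + 0
    rw [add_zero, add_zero]
  by_cases hxy : x = a ∧ y = (Ec c).negY a b
  · rw [Point.add_of_Y_eq hxy.1 hxy.2]
    simp only [ωf]
    rw [Point.add_of_Y_eq (by rw [hxy.1]) (by rw [hxy.2, Ec_negY, Ec_negY])]
    rfl
  · rw [Point.add_some hxy]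
    simp only [ωf]
    rw [Point.add_some (by
      rintro ⟨h4, h5⟩
      refine hxy ⟨mul_left_cancel₀ h0 h4, ?_⟩
      rw [h5, Ec_negY, Ec_negY])]
    have hs := slope_ω (c := c) hζ x a y b
    refine some_congr ?_ ?_
    · rw [addX, addX, hs]
      rw [Ec_a1, Ec_a2]
      linear_combination (-ζ * ((Ec c).slope x a y b) ^ 2) * h3
    · rw [addY, addY, Ec_negY, Ec_negY, negAddY, negAddY, addX, addX, hs]
      rw [Ec_a1, Ec_a2]
      linear_combination ((-((Ec c).slope x a y b) ^ 3) * (ζ ^ 3 + 1) + ((Ec c).slope x a y b) * (2 * x + a)) * h3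

def ωh {ζ : F} (hζ : ζ ^ 2 + ζ + 1 = 0) : (Ec c).Point →+ (Ec c).Point where
  toFun := ωf hζ
  map_zero' := rfl
  map_add' := ωf_add hζ

theorem yv_ω {ζ : F} (hζ : ζ ^ 2 + ζ + 1 = 0) (P : (Ec c).Point) : yv (ωh hζ P) = yv P := by
  rcases P with _ | ⟨x, y, h⟩ <;> rfl

theorem xv_ω {ζ : F} (hζ : ζ ^ 2 + ζ + 1 = 0) (P : (Ec c).Point) : xv (ωh hζ P) = ζ * xv P := by
  rcases P with _ | ⟨x, y, h⟩
  · exact (mul_zero _).symm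
  · rfl

theorem ω_sum {ζ : F} (hζ : ζ ^ 2 + ζ + 1 = 0) (P : (Ec c).Point) :
    P + ωh hζ P + ωh hζ (ωh hζ P) = 0 := by
  rcases P with _ | ⟨x, y, h⟩
  · change (0 : (Ec c).Point) + 0 + 0 = 0
    simp
  · have h0 : ζ ≠ 1 := by
      rintro rfl
      have : (1 : F) = 0 := by linear_combination hζ - two0 (F := F)
      exact one_ne_zero this
    have hs : (Ec c).slope x (ζ * x) y y = 0 := by
      by_cases hx : x = 0
      · subst hx
        rw [slope_of_Y_ne (by simp) (by rw [Ec_negY]; simp)]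
        simp [Ec]
      · rw [slope_of_X_ne, sub_self, zero_div]
        intro h
        apply h0
        exact mul_right_cancel₀ hx (by rw [← h, one_mul])
    rw [add_eq_zero_iff_eq_neg]
    change Point.some x y h + Point.some (ζ * x) y _ = - Point.some (ζ * (ζ * x)) y _
    rw [Point.add_some (by rw [Ec_negY]; simp), Point.neg_some]
    refine some_congr ?_ ?_
    · rw [addX, hs]
      simp only [Ec]
      linear_combination (-x) * hζ
    · rw [addY, negAddY, hs, Ec_negY, Ec_negY, zero_mul, zero_add]

end

end

end

section

open Polynomial WeierstrassCurve WeierstrassCurve.Affine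

open scoped Polynomial.Bivariate

noncomputable section

section
variable {F : Type u} [Field F] [CharP F 2] [DecidableEq F] {c : F}

def XH (Hs : Finset (Ec c).Point) [DecidableEq (Ec c).Point] : Finset F := (Hs.erase 0).image xv

def uH (X1 : Finset F) : F[X] := ∏ ξ ∈ X1, (X - C ξ)

theorem uH_deg (X1 : Finset F) : (uH X1).degree = X1.card := by
  rw [uH, degree_prod]; simp

def UH (c : F) (X1 : Finset F) : (Ec c).CoordinateRing := (uH X1 ^ 3) • 1

def Za (a : (Ec c).Point) : (Ec c).CoordinateRing :=
  (CoordinateRing.mk (Ec c) Y + yv a • 1) *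
    (CoordinateRing.mk (Ec c) Y + yv a • 1 + (xv a ^ 2) • ((X + C (xv a) : F[X]) • 1)) +
    (yv a + 1) • (((X + C (xv a)) ^ 3 : F[X]) • 1)

def Zr (Hs : Finset (Ec c).Point) [DecidableEq (Ec c).Point] : (Ec c).CoordinateRing :=
  ∑ a ∈ Hs.erase 0, (uH ((XH Hs).erase (xv a)) ^ 3) • Za a

def ZH (Hs : Finset (Ec c).Point) [DecidableEq (Ec c).Point] : (Ec c).CoordinateRing :=
  (uH (XH Hs) ^ 3) • CoordinateRing.mk (Ec c) Y + Zr Hs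

theorem dg_u3 (X1 : Finset F) (f : (Ec c).CoordinateRing) (n : ℕ) (h : dg f = n) :
    dg ((uH X1 ^ 3) • f) = ((6 * X1.card + n : ℕ) : WithBot ℕ) := by
  rw [dg_psmul, degree_pow, uH_deg, h, nsmul_eq_mul, nsmul_eq_mul]
  push_cast
  rw [← mul_assoc]
  norm_num

theorem dg_u3_le (X1 : Finset F) (f : (Ec c).CoordinateRing) (n : ℕ) (h : dg f ≤ n) :
    dg ((uH X1 ^ 3) • f) ≤ ((6 * X1.card + n : ℕ) : WithBot ℕ) := by
  rw [dg_psmul, degree_pow, uH_deg, nsmul_eq_mul, nsmul_eq_mul]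
  push_cast
  rw [← mul_assoc]
  refine add_le_add (by norm_num) h

theorem dg_Za (a : (Ec c).Point) : dg (Za a) ≤ (6 : ℕ) := by
  have hc : ∀ r : F, dg (r • (1 : (Ec c).CoordinateRing)) ≤ 0 := fun r =>
    (dg_smul_le r _).trans dg_one.le
  have hY : dg (CoordinateRing.mk (Ec c) Y + yv a • 1) ≤ 3 :=
    (dg_add_le _ _).trans (max_le dg_Y.le ((hc _).trans (by norm_num)))
  have hx : ∀ k : ℕ, dg (((X + C (xv a)) ^ k : F[X]) • (1 : (Ec c).CoordinateRing)) = ((2 * k : ℕ) : WithBot ℕ) := by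
    intro k
    rw [dg_smul_one, degree_pow, degree_X_add_C, nsmul_eq_mul, nsmul_eq_mul]
    push_cast; rw [mul_one]
  refine (dg_add_le _ _).trans (max_le ?_ ?_)
  · rw [dg_mul]
    have h2 : dg (CoordinateRing.mk (Ec c) Y + yv a • 1 + (xv a ^ 2) • ((X + C (xv a) : F[X]) • (1 : (Ec c).CoordinateRing))) ≤ 3 := by
      refine (dg_add_le _ _).trans (max_le hY ((dg_smul_le _ _).trans ?_))
      have := hx 1
      rw [pow_one] at this
      rw [this]
      norm_num
    exact (add_le_add hY h2).trans (by norm_num)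
  · exact (dg_smul_le _ _).trans ((hx 3).le.trans (by norm_num))

variable [DecidableEq (Ec c).Point]

theorem dg_Zr (Hs : Finset (Ec c).Point) : dg (Zr Hs) ≤ ((6 * (XH Hs).card : ℕ) : WithBot ℕ) := by
  refine dg_sum_le _ _ _ fun a ha => ?_
  have hm : xv a ∈ XH Hs := Finset.mem_image_of_mem _ ha
  refine (dg_u3_le _ _ _ (dg_Za a)).trans ?_
  rw [Finset.card_erase_of_mem hm]
  have : 0 < (XH Hs).card := Finset.card_pos.2 ⟨_, hm⟩
  rw [Nat.cast_le]; omega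

theorem dg_UH (X1 : Finset F) : dg (UH c X1) = ((6 * X1.card : ℕ) : WithBot ℕ) :=
  dg_u3 X1 1 0 dg_one

theorem dg_ZU (Hs : Finset (Ec c).Point) (r : F) :
    dg (ZH Hs + r • UH c (XH Hs)) = ((6 * (XH Hs).card + 3 : ℕ) : WithBot ℕ) := by
  have h1 := dg_u3 (c := c) (XH Hs) (CoordinateRing.mk (Ec c) Y) 3 dg_Y
  rw [ZH, add_assoc, dg_add_eq, h1]
  rw [h1]
  refine ((dg_add_le _ _).trans (max_le (dg_Zr Hs) ((dg_smul_le _ _).trans (dg_UH _).le))).trans_lt ?_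
  rw [Nat.cast_lt]; omega

/-- the trace function -/
def zH (Hs : Finset (Ec c).Point) (P : (Ec c).Point) : F := ∑ a ∈ Hs, yv (P + a)

theorem evP_Za {P a : (Ec c).Point} (hP : P ≠ 0) (ha : a ≠ 0) (hx : xv P ≠ xv a) :
    evP P (Za a) = yv (P + a) * (xv P - xv a) ^ 3 := by
  rw [yv_add hP ha hx, Za]
  simp only [evP_add, evP_mul, evP_smul', evP_smul, evP_one P hP, evP_Y]
  simp only [eval_add, eval_pow, eval_X, eval_C]
  ring

variable (H : AddSubgroup (Ec c).Point) {Hs : Finset (Ec c).Point} (hHs : ∀ a, a ∈ Hs ↔ a ∈ H)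
include hHs

theorem xv_ne {P a : (Ec c).Point} (hP : P ∉ H) (ha : a ∈ Hs.erase 0) : xv P ≠ xv a := by
  intro h
  rw [Finset.mem_erase, hHs] at ha
  have hP0 : P ≠ 0 := by rintro rfl; exact hP H.zero_mem
  rcases eq_or_neg hP0 ha.1 h with rfl | rfl
  · exact hP ha.2
  · exact hP (H.neg_mem ha.2)

theorem u_ne {P : (Ec c).Point} (hP : P ∉ H) : (uH (XH Hs)).eval (xv P) ≠ 0 := by
  rw [uH, eval_prod, Finset.prod_ne_zero_iff]
  intro ξ hξ
  obtain ⟨a, ha, rfl⟩ := Finset.mem_image.1 hξ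
  simp only [eval_sub, eval_X, eval_C]
  exact sub_ne_zero.2 (xv_ne H hHs hP ha)

theorem evP_UH {P : (Ec c).Point} (hP : P ∉ H) : evP P (UH c (XH Hs)) ≠ 0 := by
  have hP0 : P ≠ 0 := by rintro rfl; exact hP H.zero_mem
  rw [UH, evP_smul, evP_one P hP0, mul_one, eval_pow]
  exact pow_ne_zero _ (u_ne H hHs hP)

theorem evP_ZH {P : (Ec c).Point} (hP : P ∉ H) :
    evP P (ZH Hs) = evP P (UH c (XH Hs)) * zH Hs P := by
  have hP0 : P ≠ 0 := by rintro rfl; exact hP H.zero_mem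
  have h0 : (0 : (Ec c).Point) ∈ Hs := (hHs 0).2 H.zero_mem
  rw [UH, evP_smul, evP_one P hP0, mul_one, zH, ← Finset.add_sum_erase _ _ h0, add_zero, mul_add,
    ZH, evP_add, evP_smul, evP_Y, Zr, evP_sum, Finset.mul_sum]
  congr 1
  refine Finset.sum_congr rfl fun a ha => ?_
  have hm : xv a ∈ XH Hs := Finset.mem_image_of_mem _ ha
  rw [evP_smul, evP_Za hP0 (Finset.mem_erase.1 ha).1 (xv_ne H hHs hP ha)]
  have : uH (XH Hs) = (X - C (xv a)) * uH ((XH Hs).erase (xv a)) := by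
    rw [uH, uH, Finset.mul_prod_erase _ (fun ξ => X - C ξ) hm]
  rw [this]
  simp only [eval_pow, eval_mul, eval_sub, eval_X, eval_C]
  ring

theorem card_XH : 2 * (XH Hs).card + 1 ≤ Hs.card := by
  have h0 : (0 : (Ec c).Point) ∈ Hs := (hHs 0).2 H.zero_mem
  have : 2 * (XH Hs).card ≤ (Hs.erase 0).card := by
    refine Finset.mul_card_image_le_card _ _ ?_
    intro ξ hξ
    obtain ⟨a, ha, rfl⟩ := Finset.mem_image.1 hξ
    have ha' := Finset.mem_erase.1 ha
    rw [← Finset.card_pair (neg_ne ha'.1)]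
    refine Finset.card_le_card ?_
    intro b hb
    rw [Finset.mem_insert, Finset.mem_singleton] at hb
    rw [Finset.mem_filter]
    rcases hb with rfl | rfl
    · refine ⟨Finset.mem_erase.2 ⟨neg_ne_zero.2 ha'.1, (hHs _).2 (H.neg_mem ((hHs _).1 ha'.2))⟩, xv_neg a⟩
    · exact ⟨ha, rfl⟩
  rw [Finset.card_erase_of_mem h0] at this
  have := Finset.card_pos.2 ⟨_, h0⟩
  omega

theorem zH_add (P b : (Ec c).Point) (hb : b ∈ H) : zH Hs (P + b) = zH Hs P := by
  refine Finset.sum_bij (fun a _ => b + a) ?_ ?_ ?_ ?_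
  · intro a ha
    exact (hHs _).2 (H.add_mem hb ((hHs _).1 ha))
  · intro a _ a' _ h
    exact add_left_cancel h
  · intro a ha
    exact ⟨-b + a, (hHs _).2 (H.add_mem (H.neg_mem hb) ((hHs _).1 ha)), by simp⟩
  · intro a _
    rw [add_assoc]

theorem zH_ω {ζ : F} (hζ : ζ ^ 2 + ζ + 1 = 0) (hω : ∀ a ∈ H, ωh hζ a ∈ H) (P : (Ec c).Point) :
    zH Hs (ωh hζ P) = zH Hs P := by
  symm
  have hω3 : ∀ a : (Ec c).Point, ωh hζ (ωh hζ (ωh hζ a)) = a := by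
    intro a
    have h1 := ω_sum hζ a
    have h2 := ω_sum hζ (ωh hζ a)
    rw [add_assoc] at h1
    exact (add_right_cancel ((add_comm _ _).trans (h2.trans h1.symm) |>.trans rfl))
  refine Finset.sum_bij (fun a _ => ωh hζ a) ?_ ?_ ?_ ?_
  · intro a ha
    exact (hHs _).2 (hω _ ((hHs _).1 ha))
  · intro a _ a' _ h
    rw [← hω3 a, ← hω3 a', h]
  · intro a ha
    exact ⟨ωh hζ (ωh hζ a), (hHs _).2 (hω _ (hω _ ((hHs _).1 ha))), hω3 a⟩
  · intro a _
    rw [← map_add, yv_ω]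

end

end

end

section

open Polynomial WeierstrassCurve WeierstrassCurve.Affine

open scoped Polynomial.Bivariate

noncomputable section

section grp
variable {A : Type*} [AddCommGroup A] [DecidableEq A] (ω : A →+ A)
  (hsum : ∀ a, a + ω a + ω (ω a) = 0) (H : AddSubgroup A) (hω : ∀ a ∈ H, ω a ∈ H)
  {Hs : Finset A} (hHs : ∀ a, a ∈ Hs ↔ a ∈ H)

def orb (ω : A →+ A) (Hs : Finset A) (P : A) : Finset A :=
  ((Finset.univ : Finset (Fin 3)) ×ˢ Hs).image (fun x => (![P, ω P, ω (ω P)] x.1) + x.2)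

include hsum in
theorem om3 (a : A) : ω (ω (ω a)) = a := by
  have h1 := hsum a
  have h2 := hsum (ω a)
  rw [add_assoc] at h1
  exact add_right_cancel ((add_comm _ _).trans (h2.trans h1.symm))

include hsum hω in
theorem om_mem {a : A} (h : ω a ∈ H) : a ∈ H := by
  rw [← om3 ω hsum a]
  exact hω _ (hω _ h)

include hsum hω hHs in
theorem orb_inj {P : A} (hP : P - ω P ∉ H) :
    Set.InjOn (fun x : Fin 3 × A => (![P, ω P, ω (ω P)] x.1) + x.2)
      ((Finset.univ : Finset (Fin 3)) ×ˢ Hs : Finset (Fin 3 × A)) := by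
  have h1 : ω P - ω (ω P) ∉ H := by
    rw [← map_sub]; exact fun h => hP (om_mem ω hsum H hω h)
  have h2 : ω (ω P) - P ∉ H := by
    intro h
    have := hω _ h
    rw [map_sub, om3 ω hsum P] at this
    exact hP this
  have h1' : ω (ω P) - ω P ∉ H := fun h => h1 (by rw [← neg_sub]; exact H.neg_mem h)
  have h2' : P - ω (ω P) ∉ H := fun h => h2 (by rw [← neg_sub]; exact H.neg_mem h)
  have hP' : ω P - P ∉ H := fun h => hP (by rw [← neg_sub]; exact H.neg_mem h)
  rintro ⟨i, a⟩ ha ⟨j, b⟩ hb h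
  simp only [Finset.coe_product, Finset.coe_univ, Set.mem_prod, Set.mem_univ, true_and,
    Finset.mem_coe, hHs] at ha hb
  simp only at h
  have key : ![P, ω P, ω (ω P)] i - ![P, ω P, ω (ω P)] j ∈ H := by
    have : ![P, ω P, ω (ω P)] i - ![P, ω P, ω (ω P)] j = b - a := by
      rw [sub_eq_sub_iff_add_eq_add, h]; abel
    rw [this]; exact H.sub_mem hb ha
  have hij : i = j := by
    fin_cases i <;> fin_cases j <;> simp_all
  subst hij
  rw [add_left_cancel h]

include hsum hω hHs in
theorem orb_card {P : A} (hP : P - ω P ∉ H) : (orb ω Hs P).card = 3 * Hs.card := by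
  rw [orb, Finset.card_image_of_injOn (orb_inj ω hsum H hω hHs hP), Finset.card_product]
  simp

include hsum hω hHs in
theorem orb_sum {P : A} (hP : P - ω P ∉ H) (h2 : ∀ a : A, a + a = 0 → a = 0) :
    ∑ Q ∈ orb ω Hs P, Q = 0 := by
  have h0 : ∑ a ∈ Hs, a = 0 := by
    apply h2
    have : ∑ a ∈ Hs, a = ∑ a ∈ Hs, -a := by
      refine Finset.sum_bij (fun a _ => -a) ?_ ?_ ?_ ?_
      · intro a ha; exact (hHs _).2 (H.neg_mem ((hHs _).1 ha))
      · intro a _ b _ h; exact neg_injective h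
      · intro a ha; exact ⟨-a, (hHs _).2 (H.neg_mem ((hHs _).1 ha)), neg_neg a⟩
      · intro a _; simp
    nth_rewrite 2 [this]
    rw [Finset.sum_neg_distrib, add_neg_cancel]
  rw [orb, Finset.sum_image (orb_inj ω hsum H hω hHs hP), Finset.sum_product, Finset.sum_comm]
  have : ∀ a ∈ Hs, ∑ i : Fin 3, (![P, ω P, ω (ω P)] i + a) = 3 • a := by
    intro a _
    rw [Fin.sum_univ_three]
    simp only [Matrix.cons_val_zero, Matrix.cons_val_one, Matrix.cons_val]
    have := hsum P
    calc P + a + (ω P + a) + (ω (ω P) + a) = (P + ω P + ω (ω P)) + 3 • a := by abel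
      _ = 3 • a := by rw [this, zero_add]
  rw [Finset.sum_congr rfl this, ← Finset.smul_sum, h0, smul_zero]

include hω hHs in
theorem orb_induct {p : A → Prop} {P : A} (hp : p P) (h1 : ∀ Q, p Q → p (ω Q))
    (h2 : ∀ Q, p Q → ∀ a ∈ H, p (Q + a)) : ∀ Q ∈ orb ω Hs P, p Q := by
  intro Q hQ
  rw [orb, Finset.mem_image] at hQ
  obtain ⟨⟨i, a⟩, hx, rfl⟩ := hQ
  simp only [Finset.mem_product, Finset.mem_univ, true_and, hHs] at hx
  refine h2 _ ?_ _ hx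
  fin_cases i
  · exact hp
  · exact h1 _ hp
  · exact h1 _ (h1 _ hp)

include hsum hω hHs in
theorem orb_neg [Finite A] {P Q : A} (hP : P - ω P ∉ H) (h2 : ∀ a : A, a + a = 0 → a = 0)
    (hQ : Q ∈ orb ω Hs P) : P + Q ≠ 0 := by
  intro h
  have hPH : P ∉ H := fun h => hP (H.sub_mem h (hω _ h))
  rw [orb, Finset.mem_image] at hQ
  obtain ⟨⟨i, a⟩, hx, rfl⟩ := hQ
  simp only [Finset.mem_product, Finset.mem_univ, true_and, hHs] at hx
  have hs := hsum P
  have key : P + ![P, ω P, ω (ω P)] i ∈ H := by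
    have : P + ![P, ω P, ω (ω P)] i = -a := by
      rw [← add_assoc] at h; exact eq_neg_of_add_eq_zero_left h
    rw [this]; exact H.neg_mem hx
  fin_cases i
  · change P + P ∈ H at key
    have hinj : Function.Injective (fun a : H => a + a) := by
      intro a b hab
      have h3 : (a - b : A) + (a - b) = 0 := by
        have := congrArg Subtype.val hab
        simp only [AddSubgroup.coe_add] at this
        rw [sub_add_sub_comm, this, sub_self]
      exact Subtype.ext (sub_eq_zero.1 (h2 _ h3))
    obtain ⟨b, hb⟩ := (Finite.injective_iff_surjective.1 hinj) ⟨_, key⟩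
    have hb' : (b : A) + b = P + P := congrArg Subtype.val hb
    have : P - b = 0 := h2 _ (by rw [sub_add_sub_comm, hb', sub_self])
    exact hPH (by rw [sub_eq_zero.1 this]; exact b.2)
  · change P + ω P ∈ H at key
    have : ω (ω P) ∈ H := by
      rw [eq_neg_of_add_eq_zero_right hs]; exact H.neg_mem key
    exact hPH (om_mem ω hsum H hω (om_mem ω hsum H hω this))
  · change P + ω (ω P) ∈ H at key
    have : ω P ∈ H := by
      have h4 : ω P = -(P + ω (ω P)) := by
        apply eq_neg_of_add_eq_zero_left; rw [← hs]; abel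
      rw [h4]; exact H.neg_mem key
    exact hPH (om_mem ω hsum H hω this)

end grp

section
variable {F : Type u} [Field F] [CharP F 2] [DecidableEq F] {c : F}
  [Fintype (Ec c).Point] [DecidableEq (Ec c).Point] {ζ : F} (hζ : ζ ^ 2 + ζ + 1 = 0)

theorem tors (a : (Ec c).Point) (h : a + a = 0) : a = 0 := by
  by_contra h'; exact add_self_ne h' h

theorem card_K : (Finset.univ.filter (fun P : (Ec c).Point => ωh hζ P = P)).card ≤ 3 := by
  have hζ1 : ζ ≠ 1 := by
    rintro rfl
    have : (1 : F) = 0 := by linear_combination hζ - two0 (F := F)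
    exact one_ne_zero this
  have hx : ∀ P : (Ec c).Point, ωh hζ P = P → xv P = 0 := by
    intro P h
    have := congrArg xv h
    rw [xv_ω] at this
    by_contra h0
    exact hζ1 (mul_right_cancel₀ h0 (by rw [this, one_mul]))
  by_cases hQ : ∃ Q : (Ec c).Point, ωh hζ Q = Q ∧ Q ≠ 0
  · obtain ⟨Q, hQ, hQ0⟩ := hQ
    refine (Finset.card_le_card (t := {0, Q, -Q}) ?_).trans Finset.card_le_three
    intro P hP
    rw [Finset.mem_filter] at hP
    by_cases hP0 : P = 0
    · simp [hP0]
    · have := eq_or_neg hP0 hQ0 ((hx P hP.2).trans (hx Q hQ).symm)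
      simp [this]
  · push Not at hQ
    refine (Finset.card_le_card (t := {0}) ?_).trans (by simp)
    intro P hP
    rw [Finset.mem_filter] at hP
    simp [hQ P hP.2]

variable (H : AddSubgroup (Ec c).Point) {Hs : Finset (Ec c).Point} (hHs : ∀ a, a ∈ Hs ↔ a ∈ H)

open Classical in
include hHs in
theorem card_R : (Finset.univ.filter (fun P : (Ec c).Point => P - ωh hζ P ∈ H)).card ≤ 3 * Hs.card := by
  refine Finset.card_le_mul_card_image_of_maps_to (f := fun P => P - ωh hζ P) ?_ _ ?_
  · intro P hP
    exact (hHs _).2 (Finset.mem_filter.1 hP).2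
  · intro b _
    rcases Finset.eq_empty_or_nonempty ((Finset.univ.filter (fun P : (Ec c).Point => P - ωh hζ P ∈ H)).filter
      (fun P => P - ωh hζ P = b)) with he | ⟨P0, hP0⟩
    · rw [he]; simp
    · refine le_trans ?_ (card_K (c := c) hζ)
      refine Finset.card_le_card_of_injOn (fun P => P - P0) ?_ ?_
      · intro P hP
        have h1 := (Finset.mem_filter.1 (Finset.mem_coe.1 hP)).2
        have h2 := (Finset.mem_filter.1 hP0).2
        refine Finset.mem_coe.2 (Finset.mem_filter.2 ⟨Finset.mem_univ _, ?_⟩)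
        rw [map_sub]
        have h3 := h1.trans h2.symm
        rw [sub_eq_sub_iff_add_eq_add] at h3 ⊢
        rw [add_comm, ← h3, add_comm]
      · intro P _ Q _ h
        exact sub_left_injective h

end
end

end

section

open Polynomial WeierstrassCurve WeierstrassCurve.Affine

open scoped Polynomial.Bivariate

noncomputable section

section
variable {F : Type u} [Field F] [CharP F 2] [DecidableEq F] {c : F}
  [Fintype (Ec c).Point] [DecidableEq (Ec c).Point] {ζ : F} (hζ : ζ ^ 2 + ζ + 1 = 0)
  (H : AddSubgroup (Ec c).Point) (hω : ∀ a ∈ H, ωh hζ a ∈ H)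
  {Hs : Finset (Ec c).Point} (hHs : ∀ a, a ∈ Hs ↔ a ∈ H)

open Classical in
def fib (Hs : Finset (Ec c).Point) (r : F) : Finset (Ec c).Point :=
  Finset.univ.filter (fun P => P - ωh hζ P ∉ H ∧ zH Hs P = r)

include hω in
theorem notH {P : (Ec c).Point} (hP : P - ωh hζ P ∉ H) : P ∉ H :=
  fun h => hP (H.sub_mem h (hω _ h))

theorem mem_fib {r : F} {P : (Ec c).Point} :
    P ∈ fib hζ H Hs r ↔ P - ωh hζ P ∉ H ∧ zH Hs P = r := by
  simp [fib]

include hω hHs in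
theorem fib_card_le (r : F) : (fib hζ H Hs r).card ≤ 3 * Hs.card := by
  have hd := dg_ZU Hs (-r)
  have hk := card_XH H hHs
  have hne : ZH Hs + (-r) • UH c (XH Hs) ≠ 0 := by
    intro h
    rw [h, dg_zero] at hd
    exact WithBot.bot_ne_coe hd
  refine zeros_le' hne (n := 3 * Hs.card) ?_ _ ?_ ?_
  · rw [hd, Nat.cast_le]; omega
  · rintro P hP rfl
    exact notH hζ H hω ((mem_fib hζ H).1 hP).1 H.zero_mem
  · intro P hP
    obtain ⟨h1, h2⟩ := (mem_fib hζ H).1 hP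
    rw [evP_add, evP_smul', evP_ZH H hHs (notH hζ H hω h1), h2]
    ring

include hω hHs in
theorem fib_eq {r : F} {P : (Ec c).Point} (hP : P ∈ fib hζ H Hs r) :
    fib hζ H Hs r = orb (ωh hζ) Hs P := by
  symm
  have hP' := (mem_fib hζ H).1 hP
  refine Finset.eq_of_subset_of_card_le ?_ ?_
  · intro Q hQ
    rw [mem_fib]
    refine orb_induct (ωh hζ) H hω hHs (p := fun P => P - ωh hζ P ∉ H ∧ zH Hs P = r) hP' ?_ ?_ Q hQ
    · rintro Q ⟨h1, h2⟩
      refine ⟨?_, by rw [zH_ω H hHs hζ hω, h2]⟩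
      rw [← map_sub]
      exact fun h => h1 (om_mem (ωh hζ) (ω_sum hζ) H hω h)
    · rintro Q ⟨h1, h2⟩ a ha
      refine ⟨?_, by rw [zH_add H hHs _ _ ha, h2]⟩
      rw [map_add, add_sub_add_comm]
      intro h
      have := H.sub_mem h (H.sub_mem ha (hω _ ha))
      rw [add_sub_cancel_right] at this
      exact h1 this
  · rw [orb_card (ωh hζ) (ω_sum hζ) H hω hHs hP'.1]
    exact fib_card_le hζ H hω hHs r

include hω hHs in
theorem fib_neg {r : F} {P Q : (Ec c).Point} (hP : P ∈ fib hζ H Hs r) (hQ : Q ∈ fib hζ H Hs r) :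
    P + Q ≠ 0 := by
  rw [fib_eq hζ H hω hHs hP] at hQ
  exact orb_neg (ωh hζ) (ω_sum hζ) H hω hHs ((mem_fib hζ H).1 hP).1 tors hQ

open Classical in
def T0 (Hs : Finset (Ec c).Point) : Finset F :=
  (Finset.univ.filter (fun P => P - ωh hζ P ∉ H)).image (zH Hs)

theorem T0_ne {r : F} (hr : r ∈ T0 hζ H Hs) : ∃ P, P ∈ fib hζ H Hs r := by
  classical
  obtain ⟨P, hP, h⟩ := Finset.mem_image.1 hr
  exact ⟨P, (mem_fib hζ H).2 ⟨(Finset.mem_filter.1 hP).2, h⟩⟩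

include hω hHs in
theorem T0_card : Fintype.card (Ec c).Point ≤ 3 * Hs.card + 3 * Hs.card * (T0 hζ H Hs).card := by
  classical
  rw [← Finset.card_univ, ← Finset.card_filter_add_card_filter_not (s := Finset.univ)
    (fun P : (Ec c).Point => P - ωh hζ P ∈ H)]
  refine add_le_add (card_R hζ H hHs) ?_
  rw [T0]
  convert Finset.card_le_mul_card_image (f := zH Hs) (Finset.univ.filter (fun P : (Ec c).Point => P - ωh hζ P ∉ H)) (3 * Hs.card) ?_ using 3
  intro r _
  refine le_trans (Finset.card_le_card ?_) (fib_card_le hζ H hω hHs r)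
  intro P hP
  rw [mem_fib]
  simpa using hP

variable {t m : ℕ} (htm : t < m) (hm : m ≤ (T0 hζ H Hs).card)

include hω hHs htm hm in
theorem code_common (r δ : ℕ) (W' : Submodule F (Ec c).CoordinateRing)
    (hW'd : W' ≤ Ldeg (Ec c) (3 * Hs.card)) (hUW : UH c (XH Hs) ∈ W')
    (hr : Module.finrank F W' = r) (hN : 3 * Hs.card + 1 = r + δ) (hr1 : 1 ≤ r) (hδ : 1 ≤ δ)
    (hw : ∀ w ∈ W', w ≠ 0 → ∀ ρ ∈ T0 hζ H Hs, ∀ s ⊆ fib hζ H Hs ρ, (∀ P ∈ s, evP P w = 0) → s.card < r) :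
    ExistsOptimalLRC F (3 * Hs.card * m) (r * t + 1) (3 * Hs.card * (m - t)) r δ := by
  obtain ⟨T, hTT, hT⟩ := Finset.exists_subset_card_eq hm
  have hk := card_XH H hHs
  have hZ : dg (ZH Hs) ≤ ((3 * Hs.card : ℕ) : WithBot ℕ) := by
    have := dg_ZU Hs (0 : F)
    rw [zero_smul, add_zero] at this
    rw [this, Nat.cast_le]; omega
  refine code_gen {P | P - ωh hζ P ∉ H} ?_ (UH c (XH Hs)) (ZH Hs) ?_ (zH Hs) ?_ (3 * Hs.card) ?_ hZ
    r δ t m T hT (fib hζ H Hs) ?_ ?_ ?_ W' hW'd hUW hr hN hr1 hδ htm ?_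
  · rintro P hP rfl
    exact notH hζ H hω hP H.zero_mem
  · intro P hP
    exact evP_UH H hHs (notH hζ H hω hP)
  · intro P hP
    exact evP_ZH H hHs (notH hζ H hω hP)
  · exact hW'd hUW
  · intro r _ P hP
    exact ((mem_fib hζ H).1 hP).1
  · intro r hr
    obtain ⟨P, hP⟩ := T0_ne hζ H (hTT hr)
    rw [fib_eq hζ H hω hHs hP]
    exact orb_card (ωh hζ) (ω_sum hζ) H hω hHs ((mem_fib hζ H).1 hP).1
  · intro r _ P hP
    exact ((mem_fib hζ H).1 hP).2
  · intro w hw' hw0 ρ hρ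
    exact hw w hw' hw0 ρ (hTT hρ) _ (Finset.filter_subset _ _) fun P hP => (Finset.mem_filter.1 hP).2

include hω hHs in
theorem fib_ne0 {r : F} {P : (Ec c).Point} (hP : P ∈ fib hζ H Hs r) : P ≠ 0 := by
  rintro rfl
  exact notH hζ H hω ((mem_fib hζ H).1 hP).1 H.zero_mem

include hω hHs htm hm in
theorem code1 (hodd : Odd Hs.card) :
    ExistsOptimalLRC F (3 * Hs.card * m) ((3 * Hs.card - 2) * t + 1) (3 * Hs.card * (m - t))
      (3 * Hs.card - 2) 3 := by
  have hk := card_XH H hHs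
  obtain ⟨j, hj⟩ := hodd
  refine code_common hζ H hω hHs htm hm (3 * Hs.card - 2) 3 (Ldeg (Ec c) (3 * Hs.card - 2)) ?_ ?_ ?_
    (by omega) (by omega) (by omega) ?_
  · intro f hf
    rw [mem_Ldeg] at hf ⊢
    exact hf.trans (by rw [Nat.cast_le]; omega)
  · rw [mem_Ldeg, dg_UH, Nat.cast_le]; omega
  · have : 3 * Hs.card - 2 = 2 * (3 * j) + 1 := by omega
    rw [this, finrank_Ldeg]
  · intro w hw hw0 ρ hρ s hs hz
    have h0 : ∀ P ∈ s, P ≠ 0 := fun P hP => fib_ne0 hζ H hω hHs (hs hP)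
    refine lt_of_le_of_ne (zeros_le' hw0 hw s h0 hz) ?_
    intro hc
    have hsum := sum_zeros' hw0 hw s h0 hz hc.ge
    obtain ⟨P, hP⟩ := T0_ne hζ H hρ
    have hP' := ((mem_fib hζ H).1 hP).1
    have hfs : ∑ Q ∈ fib hζ H Hs ρ, Q = 0 := by
      rw [fib_eq hζ H hω hHs hP]
      exact orb_sum (ωh hζ) (ω_sum hζ) H hω hHs hP' tors
    have hfc : (fib hζ H Hs ρ).card = 3 * Hs.card := by
      rw [fib_eq hζ H hω hHs hP]
      exact orb_card (ωh hζ) (ω_sum hζ) H hω hHs hP'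
    have hd : (fib hζ H Hs ρ \ s).card = 2 := by
      rw [Finset.card_sdiff_of_subset hs]; omega
    obtain ⟨A, B, hAB, he⟩ := Finset.card_eq_two.1 hd
    have hA : A ∈ fib hζ H Hs ρ \ s := by rw [he]; simp
    have hB : B ∈ fib hζ H Hs ρ \ s := by rw [he]; simp
    refine fib_neg hζ H hω hHs (Finset.mem_sdiff.1 hA).1 (Finset.mem_sdiff.1 hB).1 ?_
    rw [← Finset.sum_sdiff hs, hsum, add_zero, he, Finset.sum_pair hAB] at hfs
    exact hfs

def mulU (U : (Ec c).CoordinateRing) : F[X] →ₗ[F] (Ec c).CoordinateRing where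
  toFun p := p • U
  map_add' a b := add_smul a b U
  map_smul' r a := smul_assoc r a U

include hω hHs htm hm in
theorem code2 :
    ExistsOptimalLRC F (3 * Hs.card * m) (2 * t + 1) (3 * Hs.card * (m - t)) 2 (3 * Hs.card - 1) := by
  have hk := card_XH H hHs
  have hu0 : uH (XH Hs) ≠ 0 := by
    intro h
    have := uH_deg (XH Hs)
    rw [h, degree_zero] at this
    exact WithBot.bot_ne_coe this
  have hinj : Function.Injective (mulU (UH c (XH Hs))) := by
    rw [injective_iff_map_eq_zero]
    intro p hp
    change p • ((uH (XH Hs) ^ 3) • (1 : (Ec c).CoordinateRing)) = 0 at hp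
    rw [smul_smul] at hp
    have := (CoordinateRing.smul_basis_eq_zero (p := p * uH (XH Hs) ^ 3) (q := 0) (by rw [hp]; simp)).1
    rcases mul_eq_zero.1 this with h | h
    · exact h
    · exact absurd h (pow_ne_zero _ hu0)
  refine code_common hζ H hω hHs htm hm 2 (3 * Hs.card - 1) ((degreeLT F 2).map (mulU (UH c (XH Hs)))) ?_ ?_ ?_
    (by omega) (by omega) (by omega) ?_
  · rintro _ ⟨p, hp, rfl⟩
    have hp' := mem_degreeLT.1 hp
    rw [mem_Ldeg]
    change dg (p • UH c (XH Hs)) ≤ _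
    rw [dg_psmul, dg_UH]
    have h1 : p.degree ≤ 1 := Order.le_of_lt_succ (by exact hp')
    refine (add_le_add_left (two_mono h1) _).trans ?_
    have : (2 • (1 : WithBot ℕ)) = ((2 : ℕ) : WithBot ℕ) := by norm_num
    rw [this, ← Nat.cast_add, Nat.cast_le]
    omega
  · refine ⟨1, mem_degreeLT.2 ?_, one_smul _ _⟩
    rw [degree_one]; norm_num
  · rw [← (Submodule.equivMapOfInjective _ hinj (degreeLT F 2)).finrank_eq, (degreeLTEquiv F 2).finrank_eq]
    simp
  · rintro _ ⟨p, hp, rfl⟩ hw0 ρ hρ s hs hz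
    by_contra hcon
    push Not at hcon
    apply hw0
    have h0 : ∀ P ∈ s, P ≠ 0 := fun P hP => fib_ne0 hζ H hω hHs (hs hP)
    have hxinj : Set.InjOn (xv (W := Ec c)) s := by
      intro P hP Q hQ h
      rcases eq_or_neg (h0 P hP) (h0 Q hQ) h with h | h
      · exact h
      · exact absurd (by rw [h, neg_add_cancel]) (fib_neg hζ H hω hHs (hs hP) (hs hQ))
    have : p = 0 := by
      refine eq_zero_of_degree_lt_of_eval_finset_eq_zero (s.image xv) ?_ ?_
      · rw [Finset.card_image_of_injOn hxinj]
        exact (mem_degreeLT.1 hp).trans_le (Nat.cast_le.2 hcon)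
      · intro x hx
        obtain ⟨P, hP, rfl⟩ := Finset.mem_image.1 hx
        have h1 := hz P hP
        change evP P (p • UH c (XH Hs)) = 0 at h1
        rw [evP_smul] at h1
        rcases mul_eq_zero.1 h1 with h | h
        · exact h
        · exact absurd h (evP_UH H hHs (notH hζ H hω ((mem_fib hζ H).1 (hs hP)).1))
    rw [this, map_zero]

end
end

end

/-- For `q = 2^(2s)`, `h₀` a positive divisor of `2^s + 1`, and
`h = h₀²`, for all `1 ≤ t < m ≤ ⌈(q + 2^(s+1) + 1 - 3h)/(3h)⌉`, there exist an
optimal `(3h-2, 3)`-LRC with parameters `[3hm, (3h-2)t + 1, 3h(m-t)]_q` and an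
optimal `(2, 3h-1)`-LRC with parameters `[3hm, 2t + 1, 3h(m-t)]_q`. -/
theorem stmt_3 (s : ℕ) (hs : 0 < s) (q : ℕ) (hq : q = 2 ^ (2 * s))
    (h₀ : ℕ) (hh₀ : 0 < h₀) (hdvd : h₀ ∣ 2 ^ s + 1) (h : ℕ) (hh : h = h₀ ^ 2)
    (t m : ℕ) (ht : 1 ≤ t) (htm : t < m)
    (hm : (m : ℤ) ≤ ⌈((q : ℚ) + 2 ^ (s + 1) + 1 - 3 * (h : ℚ)) / (3 * (h : ℚ))⌉)
    (F : Type*) [Field F] [Fintype F] [DecidableEq F] (hF : Fintype.card F = q) :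
    ExistsOptimalLRC F (3 * h * m) ((3 * h - 2) * t + 1) (3 * h * (m - t)) (3 * h - 2) 3 ∧
    ExistsOptimalLRC F (3 * h * m) (2 * t + 1) (3 * h * (m - t)) 2 (3 * h - 1) := by
  have hF' : Fintype.card F = 2 ^ (2 * s) := hF.trans hq
  have hchar : CharP F 2 := by
    obtain ⟨p, hp⟩ := CharP.exists F
    obtain ⟨n, hpp, hn⟩ := FiniteField.card F p
    have h1 : p ∣ 2 ^ (2 * s) := by
      rw [← hF', hn]; exact dvd_pow_self _ n.ne_zero
    have h2 : p = 2 := (Nat.prime_dvd_prime_iff_eq hpp Nat.prime_two).1 (hpp.dvd_of_dvd_pow h1)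
    rwa [h2] at hp
  obtain ⟨ζ, hζ⟩ := exists_zeta s hF'
  obtain ⟨c, hc⟩ := point_count (F := F) s hF'
  obtain ⟨hfin, hcard⟩ := Ec_card (c := c)
  rw [hc] at hcard
  obtain ⟨H, hω, hH⟩ := stable_sq h₀ (ωh (c := c) hζ) (ω_sum hζ) (by
    rw [hcard]; exact pow_dvd_pow_of_dvd hdvd 2)
  classical
  have hft : Fintype (Ec c).Point := Fintype.ofFinite _
  obtain ⟨Hs, hHs⟩ : ∃ Hs : Finset (Ec c).Point, ∀ a, a ∈ Hs ↔ a ∈ H :=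
    ⟨Finset.univ.filter (· ∈ H), by simp⟩
  have hHc : Hs.card = h := by
    rw [hh, ← hH, Nat.card_eq_fintype_card, Fintype.card_of_subtype Hs hHs]
  have hodd : Odd Hs.card := by
    rw [hHc, hh]
    have h2 : Odd (2 ^ s + 1) := (Even.pow_of_ne_zero even_two hs.ne').add_one
    exact (Odd.of_dvd_nat h2 hdvd).pow
  have hT := T0_card hζ H hω hHs
  rw [← Nat.card_eq_fintype_card, hcard, hHc] at hT
  have hpos : 0 < h := by rw [hh]; positivity
  have hmT : m ≤ (T0 hζ H Hs).card := by
    have : ⌈((q : ℚ) + 2 ^ (s + 1) + 1 - 3 * (h : ℚ)) / (3 * (h : ℚ))⌉ ≤ ((T0 hζ H Hs).card : ℤ) := by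
      rw [Int.ceil_le]
      have hp : (0 : ℚ) < 3 * h := by positivity
      rw [div_le_iff₀ hp]
      have hT' : (((2 ^ s + 1) ^ 2 : ℕ) : ℚ) ≤ ((3 * h + 3 * h * (T0 hζ H Hs).card : ℕ) : ℚ) :=
        Nat.cast_le.2 hT
      push_cast at hT' ⊢
      have hq' : (q : ℚ) = (2 ^ s) ^ 2 := by rw [hq]; push_cast; ring
      have hp2 : (2 : ℚ) ^ (s + 1) = 2 ^ s * 2 := pow_succ 2 s
      rw [hq', hp2]
      nlinarith [hT']
    exact_mod_cast hm.trans this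
  rw [← hHc]
  exact ⟨code1 hζ H hω hHs htm hmT hodd, code2 hζ H hω hHs htm hmT⟩
end
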